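/- Assume f satisfies (f_reg), (f_eq), (f_0), and in the case R1 = 0 assume additionally either (f_subl) or (f_subc). Suppose the limit C₁ = lim_{s→1} f(s)/(|s-1|^{p-2}(s-1)) exists in [0,+∞], and suppose that for some integer k ≥ 1 there exist λ ∈ [0,∞) with C₁ > λ and a not-identically-zero C¹ function w : [R1,R2] → ℝ with w'(R1) = w'(R2) = 0, such that r ↦ r^{N-1} φ_p(w'(r)) is continuous on [R1,R2], differentiable on (R1,R2], with derivative -λ r^{N-1} φ_p(w(r)) there, and such that w has exactly k zeros in (R1,R2). Then there exist 2k pairwise distinct non-constant radial solutions u_1, …, u_{2k} of the Neumann problem on [R1,R2] such that: (i) u_j(R1) > 1 for j = 1,…,k; (ii) u_j(R1) < 1 for j = k+1,…,2k; (iii) for each j = 1,…,k, both sets {r ∈ (R1,R2) : u_j(r) = 1} and {r ∈ (R1,R2) : u_{j+k}(r) = 1} have exactly j elements. -/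

import Mathlib

open Real Set Filter Topology

noncomputable def phip (p s : ℝ) : ℝ := |s| ^ (p - 2) * s

def Freg (f : ℝ → ℝ) : Prop :=
  ContinuousOn f (Ici 0) ∧ ContDiffOn ℝ 1 f (Ioi 0)

def Feq (f : ℝ → ℝ) : Prop :=
  f 0 = 0 ∧ f 1 = 0 ∧ (∀ s : ℝ, 0 < s → s < 1 → f s < 0) ∧ (∀ s : ℝ, 1 < s → 0 < f s)

def Fzero (p : ℝ) (f : ℝ → ℝ) : Prop :=
  ∃ c : ℝ, ∀ᶠ s in 𝓝[>] (0:ℝ), c ≤ f s / s ^ (p - 1)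

noncomputable def pstar (p : ℝ) (N : ℕ) : EReal :=
  if p < (N:ℝ) then (((N:ℝ) * p / ((N:ℝ) - p) : ℝ) : EReal) else ⊤

noncomputable def fstar (f : ℝ → ℝ) (s : ℝ) : ℝ := sSup (f '' Icc 1 s)

noncomputable def Fint (f : ℝ → ℝ) (s : ℝ) : ℝ := ∫ σ in (1:ℝ)..s, f σ

def Fsubl (p : ℝ) (f : ℝ → ℝ) : Prop :=
  ∃ M : ℝ, 0 < M ∧ ∀ ε > 0, ∀ᶠ s in atTop, f s / s ^ (p - 1) ≤ M + ε

def FsubcWith (p : ℝ) (N : ℕ) (f : ℝ → ℝ) (η : ℝ) : Prop :=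
  (∀ c : ℝ, ∃ᶠ s in atTop, c < f s / s ^ (p - 1)) ∧
  0 < η ∧ η < 1 ∧
  ∃ L : ℝ, (L : EReal) < pstar p N ∧
    ∀ᶠ s in atTop, fstar f s * s / Fint f (η * s) ≤ L

def Fsubc (p : ℝ) (N : ℕ) (f : ℝ → ℝ) : Prop := ∃ η : ℝ, FsubcWith p N f η

/-- A radial solution of the Neumann problem on `[R1,R2]`. -/
def NeumannSol (p : ℝ) (N : ℕ) (R1 R2 : ℝ) (f u : ℝ → ℝ) : Prop :=
  (∀ x ∈ Icc R1 R2, DifferentiableAt ℝ u x) ∧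
  ContinuousOn (deriv u) (Icc R1 R2) ∧
  (∀ x ∈ Icc R1 R2, 0 < u x) ∧
  deriv u R1 = 0 ∧ deriv u R2 = 0 ∧
  ContinuousOn (fun x => x ^ (N - 1) * phip p (deriv u x)) (Icc R1 R2) ∧
  ∀ x ∈ Ioc R1 R2,
    HasDerivAt (fun t => t ^ (N - 1) * phip p (deriv u t)) (-(x ^ (N - 1)) * f (u x)) x

noncomputable def fhat (f : ℝ → ℝ) (s : ℝ) : ℝ := if 0 ≤ s then f s else 0

noncomputable def Fhat (f : ℝ → ℝ) (s : ℝ) : ℝ := ∫ σ in (1:ℝ)..s, fhat f σ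

/-- A solution of the Cauchy problem with datum `d`, for the nonlinearity `g`. -/
def CauchySol (p : ℝ) (N : ℕ) (R1 R2 : ℝ) (g u : ℝ → ℝ) (d : ℝ) : Prop :=
  (∀ x ∈ Icc R1 R2, DifferentiableAt ℝ u x) ∧
  ContinuousOn (deriv u) (Icc R1 R2) ∧
  u R1 = d ∧ deriv u R1 = 0 ∧
  ContinuousOn (fun x => x ^ (N - 1) * phip p (deriv u x)) (Icc R1 R2) ∧
  ∀ x ∈ Ioc R1 R2,
    HasDerivAt (fun t => t ^ (N - 1) * phip p (deriv u t)) (-(x ^ (N - 1)) * g (u x)) x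

noncomputable def rOne (R1 R2 : ℝ) (u : ℝ → ℝ) : ℝ :=
  sSup {x | x ∈ Icc R1 R2 ∧ ∀ s ∈ Ico R1 x, 0 < u s}

noncomputable def rZero (R2 η d : ℝ) (u : ℝ → ℝ) : ℝ :=
  sSup {x | x ∈ Icc 0 R2 ∧ ∀ s ∈ Ico 0 x, η * d < u s}

noncomputable def energy (p : ℝ) (f u : ℝ → ℝ) (x : ℝ) : ℝ :=
  |deriv u x| ^ p / (p / (p - 1)) + Fhat f (u x)

def NonConstOn (R1 R2 : ℝ) (u : ℝ → ℝ) : Prop :=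
  ∃ x ∈ Icc R1 R2, ∃ x' ∈ Icc R1 R2, u x ≠ u x'

def DistinctOn (R1 R2 : ℝ) (u v : ℝ → ℝ) : Prop :=
  ∃ x ∈ Icc R1 R2, u x ≠ v x

noncomputable def nOverPstar (p : ℝ) (N : ℕ) : ℝ :=
  if p < (N:ℝ) then ((N:ℝ) - p) / p else 0

theorem le_of_hasDerivAt_nonneg {f f' : ℝ → ℝ} {a b : ℝ} (hab : a ≤ b)
    (hc : ContinuousOn f (Icc a b)) (hd : ∀ x ∈ Ioo a b, HasDerivAt f (f' x) x)
    (h0 : ∀ x ∈ Ioo a b, 0 ≤ f' x) : f a ≤ f b := by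
  refine monotoneOn_of_deriv_nonneg (convex_Icc a b) hc ?_ ?_ (left_mem_Icc.2 hab)
    (right_mem_Icc.2 hab) hab
  · rw [interior_Icc]
    exact fun x hx => (hd x hx).differentiableAt.differentiableWithinAt
  · rw [interior_Icc]
    intro x hx
    rw [(hd x hx).deriv]
    exact h0 x hx

theorem ge_of_hasDerivAt_nonpos {f f' : ℝ → ℝ} {a b : ℝ} (hab : a ≤ b)
    (hc : ContinuousOn f (Icc a b)) (hd : ∀ x ∈ Ioo a b, HasDerivAt f (f' x) x)
    (h0 : ∀ x ∈ Ioo a b, f' x ≤ 0) : f b ≤ f a := by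
  have := le_of_hasDerivAt_nonneg (f := fun x => - f x) (f' := fun x => - f' x) hab hc.neg
    (fun x hx => (hd x hx).neg) (fun x hx => by linarith [h0 x hx])
  linarith

theorem lt_of_hasDerivAt_pos {f f' : ℝ → ℝ} {a b : ℝ} (hab : a < b)
    (hc : ContinuousOn f (Icc a b)) (hd : ∀ x ∈ Ioo a b, HasDerivAt f (f' x) x)
    (h0 : ∀ x ∈ Ioo a b, 0 < f' x) : f a < f b := by
  refine strictMonoOn_of_deriv_pos (convex_Icc a b) hc ?_ (left_mem_Icc.2 hab.le)
    (right_mem_Icc.2 hab.le) hab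
  rw [interior_Icc]
  intro x hx
  rw [(hd x hx).deriv]
  exact h0 x hx

theorem gt_of_hasDerivAt_neg {f f' : ℝ → ℝ} {a b : ℝ} (hab : a < b)
    (hc : ContinuousOn f (Icc a b)) (hd : ∀ x ∈ Ioo a b, HasDerivAt f (f' x) x)
    (h0 : ∀ x ∈ Ioo a b, f' x < 0) : f b < f a := by
  have := lt_of_hasDerivAt_pos (f := fun x => - f x) (f' := fun x => - f' x) hab hc.neg
    (fun x hx => (hd x hx).neg) (fun x hx => by linarith [h0 x hx])
  linarith

@[simp] theorem phip_zero (p : ℝ) : phip p 0 = 0 := by simp [phip]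

theorem phip_neg (p s : ℝ) : phip p (-s) = -phip p s := by simp [phip]

theorem phip_of_pos {p s : ℝ} (hs : 0 < s) : phip p s = s ^ (p - 1) := by
  rw [phip, abs_of_pos hs, ← rpow_add_one hs.ne']
  ring_nf

theorem phip_of_nonneg {p s : ℝ} (hp : 1 < p) (hs : 0 ≤ s) : phip p s = s ^ (p - 1) := by
  rcases hs.eq_or_lt with rfl | h
  · rw [phip_zero, zero_rpow (by linarith)]
  · exact phip_of_pos h

theorem phip_pos {p s : ℝ} (hs : 0 < s) : 0 < phip p s := by
  rw [phip_of_pos hs]; positivity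

theorem phip_neg_of_neg {p s : ℝ} (hs : s < 0) : phip p s < 0 := by
  have := phip_pos (p := p) (neg_pos.2 hs)
  rw [phip_neg] at this
  linarith

theorem abs_phip {p : ℝ} (hp : 1 < p) (s : ℝ) : |phip p s| = |s| ^ (p - 1) := by
  rcases lt_trichotomy s 0 with h | h | h
  · rw [abs_of_neg h, abs_of_neg (phip_neg_of_neg h), ← phip_neg, phip_of_pos (by linarith)]
  · subst h; simp [zero_rpow (show p - 1 ≠ 0 by linarith)]
  · rw [abs_of_pos h, abs_of_pos (phip_pos h), phip_of_pos h]

theorem phip_mul_self {p : ℝ} (hp : 1 < p) (s : ℝ) : phip p s * s = |s| ^ p := by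
  rcases lt_trichotomy s 0 with h | h | h
  · rw [← neg_neg s, phip_neg, phip_of_pos (by linarith : 0 < -s), abs_neg,
      abs_of_pos (by linarith : 0 < -s), neg_mul_neg, ← rpow_add_one (by linarith)]
    ring_nf
  · subst h; simp [zero_rpow (show p ≠ 0 by linarith)]
  · rw [phip_of_pos h, abs_of_pos h, ← rpow_add_one (by linarith)]
    ring_nf

theorem hasDerivAt_abs_rpow_div {p : ℝ} (hp : 1 < p) (x : ℝ) :
    HasDerivAt (fun x : ℝ => |x| ^ p / p) (phip p x) x := by
  have h := (hasDerivAt_abs_rpow x hp).div_const p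
  have h2 : p * |x| ^ (p - 2) * x / p = phip p x := by
    unfold phip
    field_simp
  rwa [h2] at h

theorem continuous_phip {p : ℝ} (hp : 1 < p) : Continuous (phip p) := by
  have h : phip p = deriv (fun x : ℝ => ‖x‖ ^ p / p) := by
    ext x
    simpa [Real.norm_eq_abs] using (hasDerivAt_abs_rpow_div hp x).deriv.symm
  rw [h]
  exact ((contDiff_norm_rpow (E := ℝ) hp).div_const p).continuous_deriv le_rfl

theorem phip_phip {p q : ℝ} (h : p.HolderConjugate q) (s : ℝ) : phip p (phip q s) = s := by
  have key : ∀ s : ℝ, 0 < s → phip p (phip q s) = s := by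
    intro s hs
    rw [phip_of_pos (phip_pos hs), phip_of_pos hs, ← rpow_mul hs.le]
    have : (q - 1) * (p - 1) = 1 := by
      have := h.mul_eq_add
      nlinarith
    rw [this, rpow_one]
  rcases lt_trichotomy s 0 with hs | hs | hs
  · have := key (-s) (by linarith)
    rw [phip_neg, phip_neg] at this
    linarith
  · simp [hs]
  · exact key s hs

theorem phip_mono {p : ℝ} (hp : 1 < p) : Monotone (phip p) := by
  have h0 : ∀ x y : ℝ, 0 ≤ x → x ≤ y → phip p x ≤ phip p y := by
    intro x y hx hxy
    rw [phip_of_nonneg hp hx, phip_of_nonneg hp (hx.trans hxy)]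
    exact rpow_le_rpow hx hxy (by linarith)
  intro x y hxy
  rcases le_total 0 x with hx | hx
  · exact h0 x y hx hxy
  · rcases le_total 0 y with hy | hy
    · have h1 := h0 0 y le_rfl hy
      have h2 := h0 0 (-x) le_rfl (by linarith)
      rw [phip_neg] at h2
      simp only [phip_zero] at h1 h2
      linarith
    · have h2 := h0 (-y) (-x) (by linarith) (by linarith)
      rw [phip_neg, phip_neg] at h2
      linarith

/-- `X` solves the equation with right-hand side `H` on `[a, T]` with initial value `x`. -/
def IsSol {E : Type*} [NormedAddCommGroup E] [NormedSpace ℝ E] (H : ℝ → E → E) (a T : ℝ)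
    (X : ℝ → E) (x : E) : Prop :=
  X a = x ∧ ∀ r ∈ Icc a T, HasDerivAt X (H r (X r)) r

section Delay

variable {E : Type*} [NormedAddCommGroup E] [NormedSpace ℝ E]

/-- Iterates of the integral equation with delayed argument. -/
noncomputable def delayIter (H : ℝ → E → E) (a h : ℝ) (x0 : ℝ → E) : ℕ → ℝ → ℝ → E
  | 0 => fun d _ => x0 d
  | m + 1 => fun d r => x0 d + ∫ s in a..max r a, H s (delayIter H a h x0 m d (s - h))

theorem continuous_delayIter {H : ℝ → E → E} (hH : Continuous (Function.uncurry H)) (a h : ℝ)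
    {x0 : ℝ → E} (hx0 : Continuous x0) (m : ℕ) :
    Continuous (Function.uncurry (delayIter H a h x0 m)) := by
  induction m with
  | zero =>
    exact hx0.comp continuous_fst
  | succ m ih =>
    have h1 : Continuous fun z : ℝ × ℝ =>
        ∫ s in a..max z.2 a, H s (delayIter H a h x0 m z.1 (s - h)) := by
      refine intervalIntegral.continuous_parametric_intervalIntegral_of_continuous
        (f := fun (z : ℝ × ℝ) s => H s (delayIter H a h x0 m z.1 (s - h))) ?_
        (continuous_snd.max continuous_const)
      have h2 : Continuous fun y : (ℝ × ℝ) × ℝ => delayIter H a h x0 m y.1.1 (y.2 - h) :=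
        ih.comp ((continuous_fst.comp continuous_fst).prodMk (continuous_snd.sub continuous_const))
      exact hH.comp (continuous_snd.prodMk h2)
    exact (hx0.comp continuous_fst).add h1

theorem delayIter_succ_eq (H : ℝ → E → E) (a : ℝ) {h : ℝ} (hh : 0 ≤ h) (x0 : ℝ → E) (d : ℝ)
    (m : ℕ) : ∀ r ≤ a + m * h, delayIter H a h x0 (m + 1) d r = delayIter H a h x0 m d r := by
  induction m with
  | zero =>
    intro r hr
    have : max r a = a := by simpa using hr
    simp [delayIter, this]
  | succ m ih =>
    intro r hr
    change x0 d + _ = x0 d + _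
    congr 1
    refine intervalIntegral.integral_congr fun s hs => ?_
    rw [uIcc_of_le (le_max_right _ _)] at hs
    have hs2 : s - h ≤ a + m * h := by
      have h1 := hs.2
      push_cast at hr
      rcases le_total r a with h2 | h2
      · rw [max_eq_right h2] at h1
        have : 0 ≤ (m : ℝ) * h := by positivity
        linarith
      · rw [max_eq_left h2] at h1
        linarith
    change H s (delayIter H a h x0 (m + 1) d (s - h)) = H s (delayIter H a h x0 m d (s - h))
    rw [ih _ hs2]

theorem delayIter_eq {H : ℝ → E → E} {a T : ℝ} {h : ℝ} (hh : 0 ≤ h) {x0 : ℝ → E} {d : ℝ}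
    {m : ℕ} (hm : T ≤ a + m * h) {r : ℝ} (hr : r ∈ Icc a T) :
    delayIter H a h x0 (m + 1) d r =
      x0 d + ∫ s in a..r, H s (delayIter H a h x0 (m + 1) d (s - h)) := by
  have : max r a = r := max_eq_left hr.1
  conv_lhs => rw [delayIter]
  change x0 d + ∫ s in a..max r a, H s (delayIter H a h x0 m d (s - h)) = _
  rw [this]
  congr 1
  refine intervalIntegral.integral_congr fun s hs => ?_
  rw [uIcc_of_le hr.1] at hs
  rw [delayIter_succ_eq H a hh]
  linarith [hs.2, hr.2]

theorem norm_delayIter_sub_le {H : ℝ → E → E} (hH : Continuous (Function.uncurry H)) {K : ℝ}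
    (hK : ∀ r x, ‖H r x‖ ≤ K) (a h : ℝ) {x0 : ℝ → E} (hx0 : Continuous x0) (m : ℕ) (d r r' : ℝ) :
    ‖delayIter H a h x0 m d r - delayIter H a h x0 m d r'‖ ≤ K * |r - r'| := by
  have hK0 : 0 ≤ K := (norm_nonneg _).trans (hK 0 0)
  cases m with
  | zero => simpa [delayIter] using mul_nonneg hK0 (abs_nonneg _)
  | succ m =>
    have hc : Continuous fun s => H s (delayIter H a h x0 m d (s - h)) := by
      have := (continuous_delayIter hH a h hx0 m).comp
        ((continuous_const (y := d)).prodMk (continuous_id.sub (continuous_const (y := h))))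
      exact hH.comp (continuous_id.prodMk this)
    rw [delayIter, add_sub_add_left_eq_sub,
      intervalIntegral.integral_interval_sub_left (hc.intervalIntegrable _ _)
        (hc.intervalIntegrable _ _)]
    refine (intervalIntegral.norm_integral_le_of_norm_le_const (C := K)
      (fun s _ => hK _ _)).trans ?_
    refine mul_le_mul_of_nonneg_left ?_ hK0
    exact abs_max_sub_max_le_abs r r' a

variable [ProperSpace E]

/-- Compactness of bounded families of approximate solutions. -/
theorem exists_isSol_limit {H : ℝ → E → E} (hH : Continuous (Function.uncurry H)) {K : ℝ}
    (hK : ∀ r x, ‖H r x‖ ≤ K) {a T : ℝ} (haT : a ≤ T) {x0 : ℝ → E} (hx0 : Continuous x0)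
    {α β : ℝ} (d : ℕ → ℝ) (hd : ∀ n, d n ∈ Icc α β) (h : ℕ → ℝ) (hh0 : Tendsto h atTop (𝓝 0))
    (X : ℕ → ℝ → E) (hXL : ∀ n r r', ‖X n r - X n r'‖ ≤ K * |r - r'|)
    (hX : ∀ n, ∀ r ∈ Icc a T, X n r = x0 (d n) + ∫ s in a..r, H s (X n (s - h n))) :
    ∃ d0 ∈ Icc α β, ∃ Y, IsSol H a T Y (x0 d0) ∧ ∃ σ : ℕ → ℕ, StrictMono σ ∧
      Tendsto (d ∘ σ) atTop (𝓝 d0) ∧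
      ∀ r ∈ Icc a T, Tendsto (fun n => X (σ n) r) atTop (𝓝 (Y r)) := by
  have hK0 : 0 ≤ K := (norm_nonneg _).trans (hK 0 0)
  have hXc : ∀ n, Continuous (X n) := fun n => by
    have : LipschitzWith K.toNNReal (X n) := LipschitzWith.of_dist_le_mul fun r r' => by
      rw [dist_eq_norm, Real.dist_eq, Real.coe_toNNReal _ hK0]; exact hXL n r r'
    exact this.continuous
  have haa : a ∈ Icc a T := left_mem_Icc.2 haT
  have hXa : ∀ n, X n a = x0 (d n) := fun n => by rw [hX n a haa]; simp
  obtain ⟨B, hB⟩ := (isCompact_Icc (a := α) (b := β)).exists_bound_of_continuousOn hx0.continuousOn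
  set R := B + K * (T - a) with hR
  have hXb : ∀ n, ∀ r ∈ Icc a T, ‖X n r‖ ≤ R := by
    intro n r hr
    have h1 := hXL n r a
    rw [hXa, abs_of_nonneg (by linarith [hr.1])] at h1
    have h2 := hB _ (hd n)
    have h3 : ‖X n r‖ ≤ ‖X n r - x0 (d n)‖ + ‖x0 (d n)‖ := by
      simpa using norm_add_le (X n r - x0 (d n)) (x0 (d n))
    have h4 : K * (r - a) ≤ K * (T - a) := mul_le_mul_of_nonneg_left (by linarith [hr.2]) hK0
    linarith
  let A : Set (BoundedContinuousFunction (Icc a T) E) :=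
    {g | (∀ x, g x ∈ Metric.closedBall (0 : E) R) ∧ ∀ x y, dist (g x) (g y) ≤ K * dist x y}
  have hAcl : IsClosed A := by
    have hev : ∀ x : Icc a T, Continuous fun g : BoundedContinuousFunction (Icc a T) E => g x :=
      fun x => BoundedContinuousFunction.lipschitz_eval_const x |>.continuous
    have h1 : A = (⋂ x, {g | g x ∈ Metric.closedBall (0 : E) R}) ∩
        ⋂ x, ⋂ y, {g | dist (g x) (g y) ≤ K * dist x y} := by
      ext g
      simp only [A, mem_inter_iff, mem_iInter]
      exact Iff.rfl
    rw [h1]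
    exact (isClosed_iInter fun x => Metric.isClosed_closedBall.preimage (hev x)).inter
      (isClosed_iInter fun x => isClosed_iInter fun y =>
        isClosed_le ((hev x).dist (hev y)) continuous_const)
  have hAc : IsCompact A := by
    refine BoundedContinuousFunction.arzela_ascoli₂ (Metric.closedBall (0 : E) R)
      (isCompact_closedBall _ _) A hAcl (fun g x hg => hg.1 x) ?_
    have : UniformEquicontinuous fun x : A => ((x : BoundedContinuousFunction (Icc a T) E) :
        Icc a T → E) := by
      refine LipschitzWith.uniformEquicontinuous _ K.toNNReal fun g =>
        LipschitzWith.of_dist_le_mul fun x y => ?_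
      rw [Real.coe_toNNReal _ hK0]
      exact g.2.2 x y
    exact this.equicontinuous
  let G : ℕ → BoundedContinuousFunction (Icc a T) E := fun n =>
    BoundedContinuousFunction.mkOfCompact ⟨fun x => X n x, (hXc n).comp continuous_subtype_val⟩
  have hG : ∀ n, G n ∈ A := fun n => ⟨fun x => by
      simpa [G] using hXb n x x.2, fun x y => by
      simpa [G, dist_eq_norm, Subtype.dist_eq, Real.dist_eq] using hXL n x y⟩
  obtain ⟨z, hz, σ, hσ, hlim⟩ := ((isCompact_Icc (a := α) (b := β)).prod hAc).isSeqCompact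
    (x := fun n => (d n, G n)) (fun n => ⟨hd n, hG n⟩)
  have hlim1 : Tendsto (d ∘ σ) atTop (𝓝 z.1) := (continuous_fst.tendsto z).comp hlim
  have hlim2 : Tendsto (G ∘ σ) atTop (𝓝 z.2) := (continuous_snd.tendsto z).comp hlim
  let Z : ℝ → E := fun r => z.2 (projIcc a T haT r)
  have hZc : Continuous Z := z.2.continuous.comp continuous_projIcc
  have hZ : ∀ r ∈ Icc a T, Tendsto (fun n => X (σ n) r) atTop (𝓝 (Z r)) := by
    intro r hr
    have h1 := ((BoundedContinuousFunction.lipschitz_eval_const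
      (⟨r, hr⟩ : Icc a T)).continuous.tendsto z.2).comp hlim2
    have h2 : Z r = z.2 ⟨r, hr⟩ := by simp [Z, projIcc_of_mem haT hr]
    rw [h2]
    exact h1
  have hZeq : ∀ r ∈ Icc a T, Z r = x0 z.1 + ∫ s in a..r, H s (Z s) := by
    intro r hr
    refine tendsto_nhds_unique (hZ r hr) ?_
    have h1 : (fun n => X (σ n) r) = fun n =>
        x0 (d (σ n)) + ∫ s in a..r, H s (X (σ n) (s - h (σ n))) := by
      ext n; exact hX _ r hr
    rw [h1]
    refine ((hx0.tendsto _).comp hlim1).add ?_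
    refine intervalIntegral.tendsto_integral_filter_of_dominated_convergence (fun _ => K) ?_ ?_
      intervalIntegrable_const ?_
    · refine Eventually.of_forall fun n => Continuous.aestronglyMeasurable ?_
      exact hH.comp (continuous_id.prodMk ((hXc _).comp (continuous_id.sub continuous_const)))
    · exact Eventually.of_forall fun n => Eventually.of_forall fun s _ => hK _ _
    · refine Eventually.of_forall fun s hs => ?_
      rw [uIoc_of_le hr.1] at hs
      have hs' : s ∈ Icc a T := ⟨hs.1.le, hs.2.trans hr.2⟩
      have h2 : Tendsto (fun n => X (σ n) (s - h (σ n))) atTop (𝓝 (Z s)) := by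
        have h3 : Tendsto (fun n => X (σ n) (s - h (σ n)) - X (σ n) s) atTop (𝓝 0) := by
          refine squeeze_zero_norm (a := fun n => K * |h (σ n)|) (fun n => ?_) ?_
          · simpa using hXL (σ n) (s - h (σ n)) s
          · have := ((hh0.comp hσ.tendsto_atTop).abs).const_mul K
            simpa using this
        have h4 := h3.add (hZ s hs')
        simpa using h4
      exact ((hH.tendsto (s, Z s)).comp (tendsto_const_nhds.prodMk_nhds h2))
  have hHZ : Continuous fun s => H s (Z s) := hH.comp (continuous_id.prodMk hZc)
  let Y : ℝ → E := fun r => x0 z.1 + ∫ s in a..r, H s (Z s)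
  have hYZ : ∀ r ∈ Icc a T, Y r = Z r := fun r hr => (hZeq r hr).symm
  refine ⟨z.1, hz.1, Y, ⟨by simp [Y], fun r hr => ?_⟩, σ, hσ, hlim1, fun r hr => ?_⟩
  · rw [hYZ r hr]
    exact (hHZ.integral_hasStrictDerivAt a r).hasDerivAt.const_add _
  · rw [hYZ r hr]
    exact hZ r hr

/-- Intermediate value property for the solution set of an ODE with continuous bounded right-hand
side, without uniqueness. -/
theorem exists_isSol_eq {H : ℝ → E → E} (hH : Continuous (Function.uncurry H)) {K : ℝ}
    (hK : ∀ r x, ‖H r x‖ ≤ K) {a T T1 : ℝ} (hT1 : T1 ∈ Icc a T) {x0 : ℝ → E} (hx0 : Continuous x0)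
    {α β c : ℝ} (hαβ : α ≤ β) {φ : E → ℝ} (hφ : Continuous φ)
    (hα : ∀ X, IsSol H a T X (x0 α) → c < φ (X T1))
    (hβ : ∀ X, IsSol H a T X (x0 β) → φ (X T1) < c) :
    ∃ d ∈ Icc α β, ∃ X, IsSol H a T X (x0 d) ∧ φ (X T1) = c := by
  have haT : a ≤ T := hT1.1.trans hT1.2
  let h : ℕ → ℝ := fun n => 1 / ((n : ℝ) + 1)
  have hhpos : ∀ n, 0 < h n := fun n => by positivity
  have hh0 : Tendsto h atTop (𝓝 0) := tendsto_one_div_add_atTop_nhds_zero_nat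
  have hM : ∀ n, ∃ m : ℕ, T ≤ a + m * h n := by
    intro n
    obtain ⟨m, hm⟩ := exists_nat_ge ((T - a) / h n)
    refine ⟨m, ?_⟩
    rw [div_le_iff₀ (hhpos n)] at hm
    linarith
  choose M hM using hM
  let X : ℕ → ℝ → ℝ → E := fun n d => delayIter H a (h n) x0 (M n + 1) d
  have key : ∀ {α' β' : ℝ} (d : ℕ → ℝ) (_ : ∀ n, d n ∈ Icc α' β') (τ : ℕ → ℕ)
      (_ : StrictMono τ), ∃ d0 ∈ Icc α' β', ∃ Y, IsSol H a T Y (x0 d0) ∧ ∃ σ : ℕ → ℕ,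
      StrictMono σ ∧ Tendsto (fun n => X (τ (σ n)) (d (σ n)) T1) atTop (𝓝 (Y T1)) := by
    intro α' β' d hd τ hτ
    obtain ⟨d0, hd0, Y, hY, σ, hσ, -, hlim⟩ := exists_isSol_limit hH hK haT hx0 d hd
      (fun n => h (τ n)) (hh0.comp hτ.tendsto_atTop) (fun n => X (τ n) (d n))
      (fun n r r' => norm_delayIter_sub_le hH hK a _ hx0 _ _ r r')
      (fun n r hr => delayIter_eq (hhpos _).le (hM _) hr)
    exact ⟨d0, hd0, Y, hY, σ, hσ, hlim T1 hT1⟩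
  have hevα : ∀ᶠ n in atTop, c < φ (X n α T1) := by
    by_contra hcon
    obtain ⟨τ, hτ, hτ2⟩ := extraction_of_frequently_atTop (not_eventually.1 hcon)
    obtain ⟨d0, hd0, Y, hY, σ, hσ, hlim⟩ := key (α' := α) (β' := α) (fun _ => α)
      (fun _ => left_mem_Icc.2 le_rfl) τ hτ
    have hd0' : d0 = α := le_antisymm hd0.2 hd0.1
    subst hd0'
    have h1 := hα Y hY
    have h2 : φ (Y T1) ≤ c := le_of_tendsto ((hφ.tendsto _).comp hlim)
      (Eventually.of_forall fun n => not_lt.1 (hτ2 (σ n)))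
    linarith
  have hevβ : ∀ᶠ n in atTop, φ (X n β T1) < c := by
    by_contra hcon
    obtain ⟨τ, hτ, hτ2⟩ := extraction_of_frequently_atTop (not_eventually.1 hcon)
    obtain ⟨d0, hd0, Y, hY, σ, hσ, hlim⟩ := key (α' := β) (β' := β) (fun _ => β)
      (fun _ => left_mem_Icc.2 le_rfl) τ hτ
    have hd0' : d0 = β := le_antisymm hd0.2 hd0.1
    subst hd0'
    have h1 := hβ Y hY
    have h2 : c ≤ φ (Y T1) := ge_of_tendsto ((hφ.tendsto _).comp hlim)
      (Eventually.of_forall fun n => not_lt.1 (hτ2 (σ n)))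
    linarith
  obtain ⟨n0, hn0⟩ := (hevα.and hevβ).exists_forall_of_atTop
  have hd : ∀ n, ∃ d ∈ Icc α β, φ (X (n0 + n) d T1) = c := by
    intro n
    obtain ⟨h1, h2⟩ := hn0 (n0 + n) (Nat.le_add_right _ _)
    have hcont : Continuous fun d => φ (X (n0 + n) d T1) :=
      hφ.comp ((continuous_delayIter hH a (h (n0 + n)) hx0 (M (n0 + n) + 1)).comp
        (continuous_id.prodMk (continuous_const (y := T1))))
    exact intermediate_value_Icc' hαβ hcont.continuousOn ⟨h2.le, h1.le⟩
  choose d hd hdc using hd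
  obtain ⟨d0, hd0, Y, hY, σ, hσ, hlim⟩ := key d hd (fun n => n0 + n)
    (fun x y hxy => Nat.add_lt_add_left hxy n0)
  refine ⟨d0, hd0, Y, hY, ?_⟩
  refine tendsto_nhds_unique ((hφ.tendsto _).comp hlim) ?_
  refine tendsto_const_nhds.congr fun n => ?_
  exact (hdc (σ n)).symm

end Delay

/-- Bounded continuous nonlinearities with the sign structure of the problem, extended by zero on
the negative half-line. -/
structure AdmissibleNonlin (p : ℝ) (g : ℝ → ℝ) : Prop where
  cont : Continuous g
  eq_zero : ∀ s ≤ 0, g s = 0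
  one : g 1 = 0
  neg : ∀ s, 0 < s → s < 1 → g s < 0
  pos : ∀ s, 1 < s → 0 < g s
  bdd : ∃ C, 0 < C ∧ ∀ s, |g s| ≤ C
  low : ∃ c, 0 < c ∧ ∀ s, 0 ≤ s → -(c * s ^ (p - 1)) ≤ g s

theorem hasDerivAt_Fint {g : ℝ → ℝ} (hg : Continuous g) (s : ℝ) :
    HasDerivAt (Fint g) (g s) s :=
  (hg.integral_hasStrictDerivAt 1 s).hasDerivAt

theorem continuous_Fint {g : ℝ → ℝ} (hg : Continuous g) : Continuous (Fint g) :=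
  continuous_iff_continuousAt.2 fun s => (hasDerivAt_Fint hg s).continuousAt

@[simp] theorem Fint_one (g : ℝ → ℝ) : Fint g 1 = 0 := by simp [Fint]

namespace AdmissibleNonlin

variable {p : ℝ} {g : ℝ → ℝ}

theorem nonpos (h : AdmissibleNonlin p g) {s : ℝ} (hs : s ≤ 1) : g s ≤ 0 := by
  rcases le_or_gt s 0 with h0 | h0
  · exact (h.eq_zero s h0).le
  · rcases hs.eq_or_lt with rfl | h1
    · exact h.one.le
    · exact (h.neg s h0 h1).le

theorem nonneg (h : AdmissibleNonlin p g) {s : ℝ} (hs : 1 ≤ s) : 0 ≤ g s := by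
  rcases hs.eq_or_lt with rfl | h1
  · exact h.one.ge
  · exact (h.pos s h1).le

theorem Fint_mono (h : AdmissibleNonlin p g) {s t : ℝ} (hs : 1 ≤ s) (hst : s ≤ t) :
    Fint g s ≤ Fint g t :=
  le_of_hasDerivAt_nonneg hst (continuous_Fint h.cont).continuousOn
    (fun x _ => hasDerivAt_Fint h.cont x) (fun _ hx => h.nonneg (hs.trans hx.1.le))

theorem Fint_anti (h : AdmissibleNonlin p g) {s t : ℝ} (ht : t ≤ 1) (hst : s ≤ t) :
    Fint g t ≤ Fint g s :=
  ge_of_hasDerivAt_nonpos hst (continuous_Fint h.cont).continuousOn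
    (fun x _ => hasDerivAt_Fint h.cont x) (fun _ hx => h.nonpos (hx.2.le.trans ht))

theorem Fint_strictMono (h : AdmissibleNonlin p g) {s t : ℝ} (hs : 1 ≤ s) (hst : s < t) :
    Fint g s < Fint g t :=
  lt_of_hasDerivAt_pos hst (continuous_Fint h.cont).continuousOn
    (fun x _ => hasDerivAt_Fint h.cont x) (fun _ hx => h.pos _ (hs.trans_lt hx.1))

theorem Fint_pos_of_lt_one (h : AdmissibleNonlin p g) {s : ℝ} (hs : s < 1) : 0 < Fint g s := by
  have h1 : s ≤ max s 0 := le_max_left _ _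
  have h2 : max s 0 < 1 := max_lt hs one_pos
  refine lt_of_lt_of_le ?_ (h.Fint_anti h2.le h1)
  have := gt_of_hasDerivAt_neg h2 (continuous_Fint h.cont).continuousOn
    (fun x _ => hasDerivAt_Fint h.cont x)
    (fun x hx => h.neg _ ((le_max_right _ _).trans_lt hx.1) hx.2)
  rwa [Fint_one] at this

theorem Fint_pos (h : AdmissibleNonlin p g) {s : ℝ} (hs : s ≠ 1) : 0 < Fint g s := by
  rcases lt_or_gt_of_ne hs with h1 | h1
  · exact h.Fint_pos_of_lt_one h1
  · simpa using h.Fint_strictMono le_rfl h1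

theorem Fint_nonneg (h : AdmissibleNonlin p g) (s : ℝ) : 0 ≤ Fint g s := by
  rcases eq_or_ne s 1 with rfl | hs
  · simp
  · exact (h.Fint_pos hs).le

theorem Fint_le_zero_val (h : AdmissibleNonlin p g) {s : ℝ} (hs : s ≤ 1) :
    Fint g s ≤ Fint g 0 := by
  rcases le_or_gt 0 s with h0 | h0
  · exact h.Fint_anti hs h0
  · refine le_of_hasDerivAt_nonneg h0.le (continuous_Fint h.cont).continuousOn
      (fun x _ => hasDerivAt_Fint h.cont x) (fun x hx => (h.eq_zero x hx.2.le).ge)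

end AdmissibleNonlin

theorem neg_le_flux {N : ℕ} (hN : 1 ≤ N) {R1 r Λ : ℝ} (hR1 : 0 ≤ R1) (hΛ : 0 ≤ Λ) {b v : ℝ → ℝ}
    (hv : v R1 = 0) (hr : R1 ≤ r)
    (dv : ∀ s ∈ Icc R1 r, HasDerivAt v (-(s ^ (N - 1) * b s)) s)
    (hb : ∀ s ∈ Icc R1 r, b s ≤ Λ) : -(Λ * r ^ N) ≤ v r := by
  have hd : ∀ x : ℝ, HasDerivAt (fun x : ℝ => Λ * x ^ N) (Λ * (N * x ^ (N - 1))) x := fun x =>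
    (hasDerivAt_pow N x).const_mul Λ
  have := le_of_hasDerivAt_nonneg (f := fun x => v x + Λ * x ^ N) hr
    (ContinuousOn.add (fun x hx => (dv x hx).continuousAt.continuousWithinAt) (by fun_prop))
    (fun x hx => (dv x ⟨hx.1.le, hx.2.le⟩).add (hd x)) (fun x hx => by
      have h1 := hb x ⟨hx.1.le, hx.2.le⟩
      have h2 : 0 ≤ x ^ (N - 1) := pow_nonneg (hR1.trans hx.1.le) _
      have h3 : (1 : ℝ) ≤ N := by exact_mod_cast hN
      have h4 : x ^ (N - 1) * b x ≤ x ^ (N - 1) * Λ := mul_le_mul_of_nonneg_left h1 h2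
      nlinarith [mul_nonneg hΛ h2])
  simp only [hv] at this
  have : 0 ≤ Λ * R1 ^ N := by positivity
  linarith

theorem abs_flux_le {N : ℕ} (hN : 1 ≤ N) {R1 r C : ℝ} (hR1 : 0 ≤ R1) (hC : 0 ≤ C) {b v : ℝ → ℝ}
    (hv : v R1 = 0) (hr : R1 ≤ r)
    (dv : ∀ s ∈ Icc R1 r, HasDerivAt v (-(s ^ (N - 1) * b s)) s)
    (hb : ∀ s ∈ Icc R1 r, |b s| ≤ C) : |v r| ≤ C * r ^ N := by
  have h1 := neg_le_flux hN hR1 hC hv hr dv fun s hs => (abs_le.1 (hb s hs)).2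
  have h2 := neg_le_flux (b := fun s => -b s) (v := fun s => -v s) hN hR1 hC (by simp [hv]) hr
    (fun s hs => (dv s hs).fun_neg.congr_deriv (by ring)) fun s hs => neg_le.1 (abs_le.1 (hb s hs)).1
  exact abs_le.2 ⟨h1, by linarith⟩

/-- The first order system equivalent to the radial Cauchy problem on `[R1, T]`. -/
structure RadialSystem (q : ℝ) (N : ℕ) (g : ℝ → ℝ) (R1 T d : ℝ) (u v : ℝ → ℝ) : Prop where
  u_init : u R1 = d
  v_init : v R1 = 0
  du : ∀ r ∈ Icc R1 T, HasDerivAt u (phip q (v r / r ^ (N - 1))) r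
  dv : ∀ r ∈ Icc R1 T, HasDerivAt v (-(r ^ (N - 1) * g (u r))) r

namespace RadialSystem

variable {p q : ℝ} {N : ℕ} {g : ℝ → ℝ} {R1 T d : ℝ} {u v : ℝ → ℝ}

theorem mono_right (h : RadialSystem q N g R1 T d u v) {T' : ℝ} (hT : T' ≤ T) :
    RadialSystem q N g R1 T' d u v :=
  ⟨h.u_init, h.v_init, fun r hr => h.du r ⟨hr.1, hr.2.trans hT⟩,
    fun r hr => h.dv r ⟨hr.1, hr.2.trans hT⟩⟩

theorem contU (h : RadialSystem q N g R1 T d u v) : ContinuousOn u (Icc R1 T) :=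
  fun r hr => (h.du r hr).continuousAt.continuousWithinAt

theorem contV (h : RadialSystem q N g R1 T d u v) : ContinuousOn v (Icc R1 T) :=
  fun r hr => (h.dv r hr).continuousAt.continuousWithinAt

theorem neg_le_v (h : RadialSystem q N g R1 T d u v) (hN : 1 ≤ N) (hR1 : 0 ≤ R1) {Λ : ℝ}
    (hΛ : 0 ≤ Λ) {r : ℝ} (hr : r ∈ Icc R1 T) (hg : ∀ s ∈ Icc R1 r, g (u s) ≤ Λ) :
    -(Λ * r ^ N) ≤ v r :=
  neg_le_flux hN hR1 hΛ h.v_init hr.1 (fun s hs => h.dv s ⟨hs.1, hs.2.trans hr.2⟩) hg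

theorem abs_v_le (h : RadialSystem q N g R1 T d u v) (hN : 1 ≤ N) (hR1 : 0 ≤ R1) {C : ℝ}
    (hC : 0 ≤ C) (hg : ∀ s, |g s| ≤ C) {r : ℝ} (hr : r ∈ Icc R1 T) : |v r| ≤ C * r ^ N :=
  abs_flux_le hN hR1 hC h.v_init hr.1 (fun s hs => h.dv s ⟨hs.1, hs.2.trans hr.2⟩)
    fun _ _ => hg _

theorem abs_y_le (h : RadialSystem q N g R1 T d u v) (hN : 1 ≤ N) (hR1 : 0 ≤ R1) {C : ℝ}
    (hC : 0 ≤ C) (hg : ∀ s, |g s| ≤ C) {r : ℝ} (hr : r ∈ Icc R1 T) :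
    |v r / r ^ (N - 1)| ≤ C * r := by
  have h1 := h.abs_v_le hN hR1 hC hg hr
  have hr0 : 0 ≤ r := hR1.trans hr.1
  have hN' : r ^ N = r * r ^ (N - 1) := by rw [← pow_succ']; congr 1; omega
  rw [abs_div, abs_of_nonneg (pow_nonneg hr0 _)]
  refine div_le_of_le_mul₀ (by positivity) (by positivity) ?_
  rw [mul_assoc, ← hN']
  exact h1

theorem contY (h : RadialSystem q N g R1 T d u v) (hN : 1 ≤ N) (hR1 : 0 ≤ R1)
    (hg : ∃ C, 0 < C ∧ ∀ s, |g s| ≤ C) : ContinuousOn (fun r => v r / r ^ (N - 1)) (Icc R1 T) := by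
  obtain ⟨C, hC, hg⟩ := hg
  intro r hr
  rcases (hR1.trans hr.1).eq_or_lt with h0 | h0
  · have hR : R1 = 0 := le_antisymm (hr.1.trans h0.ge) hR1
    have hv : v r = 0 := by rw [← hR.trans h0]; exact h.v_init
    have h1 : Tendsto (fun r => v r / r ^ (N - 1)) (𝓝[Icc R1 T] r) (𝓝 0) := by
      refine squeeze_zero_norm' (a := fun r => C * r) ?_ ?_
      · filter_upwards [self_mem_nhdsWithin] with s hs
        exact h.abs_y_le hN hR1 hC.le hg hs
      · have : Tendsto (fun r => C * r) (𝓝 r) (𝓝 (C * r)) :=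
          (continuous_const.mul continuous_id).tendsto r
        rw [← h0, mul_zero] at this
        rw [← h0]
        exact this.mono_left nhdsWithin_le_nhds
    simpa [ContinuousWithinAt, hv] using h1
  · exact (h.contV r hr).div (by fun_prop) (pow_pos h0 _).ne'

theorem dy (h : RadialSystem q N g R1 T d u v) (hR1 : 0 ≤ R1) {r : ℝ} (hr : r ∈ Ioc R1 T) :
    HasDerivAt (fun r => v r / r ^ (N - 1))
      (-g (u r) - ((N - 1 : ℕ) : ℝ) * (v r / r ^ (N - 1)) / r) r := by
  have hr0 : 0 < r := hR1.trans_lt hr.1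
  have h1 := (h.dv r ⟨hr.1.le, hr.2⟩).div (hasDerivAt_pow (N - 1) r) (pow_pos hr0 _).ne'
  refine h1.congr_deriv ?_
  rcases Nat.eq_zero_or_pos (N - 1) with h2 | h2
  · rw [h2]; simp
  · have : r ^ (N - 1) = r * r ^ (N - 1 - 1) := by rw [← pow_succ']; congr 1; omega
    rw [this]
    have := (pow_pos hr0 (N - 1 - 1)).ne'
    field_simp

/-- The energy along a solution. -/
noncomputable def en (q : ℝ) (N : ℕ) (g u v : ℝ → ℝ) (r : ℝ) : ℝ :=
  |v r / r ^ (N - 1)| ^ q / q + Fint g (u r)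

theorem contEn (h : RadialSystem q N g R1 T d u v) (hg : AdmissibleNonlin p g) (hq : 1 < q)
    (hN : 1 ≤ N) (hR1 : 0 ≤ R1) : ContinuousOn (en q N g u v) (Icc R1 T) := by
  have h1 : ContinuousOn (fun r => |v r / r ^ (N - 1)| ^ q / q) (Icc R1 T) := by
    have : Continuous fun x : ℝ => |x| ^ q / q :=
      continuous_iff_continuousAt.2 fun x => (hasDerivAt_abs_rpow_div hq x).continuousAt
    exact this.comp_continuousOn (h.contY hN hR1 hg.bdd)
  exact h1.add ((continuous_Fint hg.cont).comp_continuousOn h.contU)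

theorem dEn (h : RadialSystem q N g R1 T d u v) (hg : Continuous g) (hq : 1 < q)
    (hR1 : 0 ≤ R1) {r : ℝ} (hr : r ∈ Ioc R1 T) :
    HasDerivAt (en q N g u v) (-(((N - 1 : ℕ) : ℝ) * |v r / r ^ (N - 1)| ^ q / r)) r := by
  have h1 := (hasDerivAt_abs_rpow_div hq (v r / r ^ (N - 1))).comp r (h.dy hR1 hr)
  have h2 := (hasDerivAt_Fint hg (u r)).comp r (h.du r ⟨hr.1.le, hr.2⟩)
  refine (h1.add h2).congr_deriv ?_
  rw [← phip_mul_self hq]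
  ring

theorem en_anti (h : RadialSystem q N g R1 T d u v) (hg : AdmissibleNonlin p g) (hq : 1 < q)
    (hN : 1 ≤ N) (hR1 : 0 ≤ R1) {r s : ℝ} (hr : R1 ≤ r) (hrs : r ≤ s) (hs : s ≤ T) :
    en q N g u v s ≤ en q N g u v r := by
  refine ge_of_hasDerivAt_nonpos hrs
    ((h.contEn hg hq hN hR1).mono (Icc_subset_Icc hr hs))
    (fun x hx => h.dEn hg.cont hq hR1 ⟨hr.trans_lt hx.1, hx.2.le.trans hs⟩) fun x hx => ?_
  have : 0 < x := (hR1.trans hr).trans_lt hx.1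
  rw [neg_nonpos]
  positivity

theorem pow_mul_en_mono (h : RadialSystem q N g R1 T d u v) (hg : AdmissibleNonlin p g)
    (hq : 1 < q) (hN : 1 ≤ N) (hR1 : 0 ≤ R1) {n : ℕ} (hn : ((N - 1 : ℕ) : ℝ) * q ≤ n)
    {r s : ℝ} (hr : R1 ≤ r) (hrs : r ≤ s) (hs : s ≤ T) :
    r ^ n * en q N g u v r ≤ s ^ n * en q N g u v s := by
  refine le_of_hasDerivAt_nonneg (f := fun r => r ^ n * en q N g u v r) hrs
    (((continuous_pow n).continuousOn).mul
      ((h.contEn hg hq hN hR1).mono (Icc_subset_Icc hr hs)))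
    (fun x hx => (hasDerivAt_pow n x).mul
      (h.dEn hg.cont hq hR1 ⟨hr.trans_lt hx.1, hx.2.le.trans hs⟩)) fun x hx => ?_
  have hx0 : 0 < x := (hR1.trans hr).trans_lt hx.1
  have hF := hg.Fint_nonneg (u x)
  have hY : 0 ≤ |v x / x ^ (N - 1)| ^ q := by positivity
  rcases Nat.eq_zero_or_pos n with h0 | h0
  · subst h0
    have : (((N - 1 : ℕ) : ℝ)) = 0 := by
      have h2 : (0 : ℝ) ≤ ((N - 1 : ℕ) : ℝ) := by positivity
      push_cast at hn
      nlinarith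
    rw [this]; simp
  · have hpow : x ^ n = x * x ^ (n - 1) := by rw [← pow_succ']; congr 1; omega
    have hp : 0 < x ^ (n - 1) := by positivity
    rw [hpow, en]
    set Y := |v x / x ^ (N - 1)| ^ q
    have h1 : (n : ℝ) * x ^ (n - 1) * (Y / q + Fint g (u x)) +
        x * x ^ (n - 1) * -(((N - 1 : ℕ) : ℝ) * Y / x) =
        x ^ (n - 1) * (n * Fint g (u x) + (n - ((N - 1 : ℕ) : ℝ) * q) * Y / q) := by
      field_simp
      ring
    rw [h1]
    have : 0 ≤ (n - ((N - 1 : ℕ) : ℝ) * q) * Y / q :=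
      div_nonneg (mul_nonneg (by linarith) hY) (by linarith)
    positivity

theorem en_init (h : RadialSystem q N g R1 T d u v) (hq : 1 < q) : en q N g u v R1 = Fint g d := by
  simp [en, h.u_init, h.v_init, zero_rpow (show q ≠ 0 by linarith)]

theorem Fint_le_en (hq : 1 < q) (r : ℝ) : Fint g (u r) ≤ en q N g u v r := by
  have : 0 ≤ |v r / r ^ (N - 1)| ^ q / q := by positivity
  rw [en]; linarith

theorem Fint_le (h : RadialSystem q N g R1 T d u v) (hg : AdmissibleNonlin p g) (hq : 1 < q)
    (hN : 1 ≤ N) (hR1 : 0 ≤ R1) {r : ℝ} (hr : r ∈ Icc R1 T) : Fint g (u r) ≤ Fint g d := by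
  rw [← h.en_init hq]
  exact (Fint_le_en hq r).trans (h.en_anti hg hq hN hR1 le_rfl hr.1 hr.2)

theorem abs_du_le (h : RadialSystem q N g R1 T d u v) (hg : AdmissibleNonlin p g)
    (hpq : p.HolderConjugate q)
    (hN : 1 ≤ N) (hR1 : 0 ≤ R1) {r : ℝ} (hr : r ∈ Icc R1 T) :
    |phip q (v r / r ^ (N - 1))| ≤ (q * Fint g d) ^ (1 / p) := by
  have hq : 1 < q := hpq.symm.lt
  have h1 : |v r / r ^ (N - 1)| ^ q ≤ q * Fint g d := by
    have h2 := h.en_anti hg hq hN hR1 le_rfl hr.1 hr.2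
    rw [h.en_init hq, en] at h2
    have h3 := hg.Fint_nonneg (u r)
    rw [← div_le_iff₀' (by linarith)]
    linarith
  rw [abs_phip hq]
  have h4 : q - 1 = q * (1 / p) := by
    have h5 := hpq.mul_eq_add
    have h6 := hpq.pos
    field_simp
    linarith
  rw [h4, rpow_mul (abs_nonneg _)]
  exact rpow_le_rpow (by positivity) h1 (by have := hpq.pos; positivity)

theorem abs_u_sub_le (h : RadialSystem q N g R1 T d u v) {K : ℝ}
    (hK : ∀ r ∈ Icc R1 T, |phip q (v r / r ^ (N - 1))| ≤ K) {r s : ℝ} (hr : r ∈ Icc R1 T)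
    (hs : s ∈ Icc R1 T) : |u r - u s| ≤ K * |r - s| := by
  exact Convex.norm_image_sub_le_of_norm_hasDerivWithin_le (𝕜 := ℝ) (f := u)
    (f' := fun r => phip q (v r / r ^ (N - 1))) (s := Icc R1 T) (C := K)
    (fun x hx => (h.du x hx).hasDerivWithinAt) hK (convex_Icc _ _) hs hr

end RadialSystem

theorem exists_first_zero {f : ℝ → ℝ} {a b : ℝ} (hab : a ≤ b) (hf : ContinuousOn f (Icc a b))
    (ha : f a < 0) (hb : 0 ≤ f b) : ∃ t ∈ Ioc a b, f t = 0 ∧ ∀ s ∈ Ico a t, f s < 0 := by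
  have hcl : IsClosed {x ∈ Icc a b | 0 ≤ f x} := by
    have := hf.preimage_isClosed_of_isClosed isClosed_Icc (isClosed_Ici (a := (0 : ℝ)))
    exact this
  have hcomp : IsCompact {x ∈ Icc a b | 0 ≤ f x} :=
    isCompact_Icc.of_isClosed_subset hcl fun x hx => hx.1
  obtain ⟨t, ht, hmin⟩ := hcomp.exists_isLeast ⟨b, ⟨hab, le_rfl⟩, hb⟩
  have hlt : ∀ s ∈ Ico a t, f s < 0 := by
    intro s hs
    by_contra hc
    exact absurd (hmin ⟨⟨hs.1, hs.2.le.trans ht.1.2⟩, not_lt.1 hc⟩) (not_le.2 hs.2)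
  have hat : a < t := by
    rcases ht.1.1.eq_or_lt with h | h
    · rw [← h] at ht; exact absurd ht.2 (not_le.2 ha)
    · exact h
  refine ⟨t, ⟨hat, ht.1.2⟩, le_antisymm ?_ ht.2, hlt⟩
  have h1 : Tendsto f (𝓝[Ico a t] t) (𝓝 (f t)) :=
    (hf t ht.1).mono_left (nhdsWithin_mono _ fun x hx => ⟨hx.1, hx.2.le.trans ht.1.2⟩)
  have : (𝓝[Ico a t] t).NeBot := by
    rw [← mem_closure_iff_nhdsWithin_neBot, closure_Ico hat.ne]; exact ⟨hat.le, le_rfl⟩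
  exact le_of_tendsto h1 (by filter_upwards [self_mem_nhdsWithin] with s hs using (hlt s hs).le)

theorem phip_mul_rpow {p q : ℝ} (h : p.HolderConjugate q) {a M : ℝ} (ha : 0 ≤ a) (hM : 0 ≤ M) :
    phip q (a * M ^ (p - 1)) = a ^ (q - 1) * M := by
  rw [phip_of_nonneg h.symm.lt (by positivity), mul_rpow ha (by positivity), ← rpow_mul hM]
  have : (p - 1) * (q - 1) = 1 := by have := h.mul_eq_add; linarith
  rw [this, rpow_one]

theorem AdmissibleNonlin.neg_le {p : ℝ} (hp : 1 < p) {g : ℝ → ℝ} (h : AdmissibleNonlin p g) :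
    ∃ c, 0 < c ∧ ∀ M, 0 ≤ M → ∀ s ≤ M, -(c * M ^ (p - 1)) ≤ g s := by
  obtain ⟨c, hc, h1⟩ := h.low
  refine ⟨c, hc, fun M hM s hs => ?_⟩
  rcases le_or_gt s 0 with h0 | h0
  · rw [h.eq_zero s h0]
    have : 0 ≤ c * M ^ (p - 1) := by positivity
    linarith
  · have := rpow_le_rpow h0.le hs (show 0 ≤ p - 1 by linarith)
    nlinarith [h1 s h0.le]

namespace RadialSystem

variable {p q : ℝ} {N : ℕ} {g : ℝ → ℝ} {R1 T d : ℝ} {u v : ℝ → ℝ}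

theorem local_nonpos_right (h : RadialSystem q N g R1 T d u v) (hg : AdmissibleNonlin p g)
    (hpq : p.HolderConjugate q) (hR1 : 0 ≤ R1) :
    ∃ ε > 0, ∀ x ∈ Icc R1 T, u x ≤ 0 → v x ≤ 0 → ∀ y ∈ Icc R1 T, x ≤ y → y ≤ x + ε →
      u y ≤ 0 ∧ v y ≤ 0 := by
  obtain ⟨c, hc, hlow⟩ := hg.neg_le hpq.lt
  refine ⟨min 1 (1 / (2 * c)), by positivity, fun x hx hux hvx y hy hxy hyx => ?_⟩
  have hyx1 : y - x ≤ 1 := by linarith [min_le_left 1 (1 / (2 * c))]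
  have hyx2 : c * (y - x) ≤ 1 / 2 := by
    have : y - x ≤ 1 / (2 * c) := by linarith [min_le_right 1 (1 / (2 * c))]
    rw [le_div_iff₀ (by positivity)] at this
    linarith
  have hx0 : 0 ≤ x := hR1.trans hx.1
  have hsub : Icc x y ⊆ Icc R1 T := Icc_subset_Icc hx.1 hy.2
  have key : ∀ s ∈ Icc x y, u s ≤ 0 := by
    obtain ⟨m, hm, hmax⟩ := isCompact_Icc.exists_isMaxOn (nonempty_Icc.2 hxy)
      (h.contU.mono hsub)
    by_contra! hcon
    obtain ⟨s0, hs0, hs0'⟩ := hcon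
    have hM : 0 < u m := hs0'.trans_le (hmax hs0)
    set M := u m
    have hv : ∀ s ∈ Icc x y, v s ≤ s ^ (N - 1) * (c * M ^ (p - 1) * (y - x)) := by
      intro s hs
      have := ge_of_hasDerivAt_nonpos (f := fun r => v r - r * (s ^ (N - 1) * (c * M ^ (p - 1))))
        hs.1 ((h.contV.mono (Icc_subset_Icc hx.1 (hs.2.trans hy.2))).sub (by fun_prop))
        (fun r hr => (h.dv r ⟨hx.1.trans hr.1.le, hr.2.le.trans (hs.2.trans hy.2)⟩).sub
          ((hasDerivAt_id r).mul_const _)) (fun r hr => by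
            have h1 := hlow M hM.le (u r) (hmax ⟨hr.1.le, hr.2.le.trans hs.2⟩)
            have h2 : r ^ (N - 1) ≤ s ^ (N - 1) :=
              pow_le_pow_left₀ (hx0.trans hr.1.le) hr.2.le _
            have h3 : 0 ≤ r ^ (N - 1) := pow_nonneg (hx0.trans hr.1.le) _
            have h4 : 0 ≤ c * M ^ (p - 1) := by positivity
            nlinarith [mul_le_mul_of_nonneg_left h1 h3, mul_le_mul_of_nonneg_right h2 h4])
      have h5 : (s - x) * (s ^ (N - 1) * (c * M ^ (p - 1))) ≤
          (y - x) * (s ^ (N - 1) * (c * M ^ (p - 1))) := by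
        have : 0 ≤ s ^ (N - 1) := pow_nonneg (hx0.trans hs.1) _
        gcongr; exact hs.2
      linarith
    have hu : u m ≤ u x + (m - x) * ((c * (y - x)) ^ (q - 1) * M) := by
      have := ge_of_hasDerivAt_nonpos (f := fun r => u r - r * ((c * (y - x)) ^ (q - 1) * M))
        hm.1 ((h.contU.mono (Icc_subset_Icc hx.1 (hm.2.trans hy.2))).sub (by fun_prop))
        (fun r hr => (h.du r ⟨hx.1.trans hr.1.le, hr.2.le.trans (hm.2.trans hy.2)⟩).sub
          ((hasDerivAt_id r).mul_const _)) (fun r hr => by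
            have hr0 : 0 < r := hx0.trans_lt hr.1
            have h1 := hv r ⟨hr.1.le, hr.2.le.trans hm.2⟩
            rw [← div_le_iff₀' (pow_pos hr0 _)] at h1
            have h2 := phip_mono hpq.symm.lt h1
            rw [show c * M ^ (p - 1) * (y - x) = c * (y - x) * M ^ (p - 1) by ring,
              phip_mul_rpow hpq (mul_nonneg hc.le (sub_nonneg.2 hxy)) hM.le] at h2
            linarith)
      linarith
    have h6 : (c * (y - x)) ^ (q - 1) < 1 :=
      rpow_lt_one (mul_nonneg hc.le (sub_nonneg.2 hxy)) (by linarith)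
        (by linarith [hpq.symm.lt])
    have h7 : (m - x) * ((c * (y - x)) ^ (q - 1) * M) ≤ 1 * ((c * (y - x)) ^ (q - 1) * M) := by
      have : 0 ≤ (c * (y - x)) ^ (q - 1) :=
        rpow_nonneg (mul_nonneg hc.le (sub_nonneg.2 hxy)) _
      gcongr; linarith [hm.2]
    have : u m = M := rfl
    nlinarith
  refine ⟨key y ⟨hxy, le_rfl⟩, ?_⟩
  have := ge_of_hasDerivAt_nonpos (f := v) hxy (h.contV.mono hsub)
    (fun r hr => h.dv r (hsub ⟨hr.1.le, hr.2.le⟩))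
    (fun r hr => by rw [hg.eq_zero _ (key r ⟨hr.1.le, hr.2.le⟩)]; simp)
  exact this.trans hvx

theorem nonpos_of_init (h : RadialSystem q N g R1 T d u v) (hg : AdmissibleNonlin p g)
    (hpq : p.HolderConjugate q) (hR1 : 0 ≤ R1) (hd : d ≤ 0) {r : ℝ} (hr : r ∈ Icc R1 T) :
    u r ≤ 0 := by
  obtain ⟨ε, hε, hloc⟩ := h.local_nonpos_right hg hpq hR1
  have hn : ∀ n : ℕ, ∀ y ∈ Icc R1 T, y ≤ R1 + n * ε → u y ≤ 0 ∧ v y ≤ 0 := by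
    intro n
    induction n with
    | zero =>
      intro y hy hy'
      have : y = R1 := le_antisymm (by simpa using hy') hy.1
      rw [this, h.u_init, h.v_init]
      exact ⟨hd, le_rfl⟩
    | succ n ih =>
      intro y hy hy'
      push_cast at hy'
      have hx : max R1 (y - ε) ∈ Icc R1 T :=
        ⟨le_max_left _ _, max_le (hy.1.trans hy.2) (by linarith [hy.2])⟩
      have h1 := ih _ hx (max_le (by nlinarith [(Nat.cast_nonneg n : (0 : ℝ) ≤ n)]) (by linarith))
      exact hloc _ hx h1.1 h1.2 y hy (max_le hy.1 (by linarith))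
        (by linarith [le_max_right R1 (y - ε)])
  obtain ⟨n, hn'⟩ := exists_nat_ge ((r - R1) / ε)
  rw [div_le_iff₀ hε] at hn'
  exact (hn n r hr (by linarith)).1

theorem exists_left_nonpos (h : RadialSystem q N g R1 T d u v) (hg : AdmissibleNonlin p g)
    (hpq : p.HolderConjugate q) (hR1 : 0 ≤ R1) {x : ℝ} (hx : x ∈ Ioc R1 T)
    (hux : u x ≤ 0) (hvx : 0 ≤ v x) : ∃ y ∈ Ico R1 x, u y ≤ 0 := by
  obtain ⟨c, hc, hlow⟩ := hg.neg_le hpq.lt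
  have hx0 : 0 < x := hR1.trans_lt hx.1
  set c' := c * 2 ^ (N - 1) with hc'
  have hc'0 : 0 < c' := by positivity
  obtain ⟨y, hy1, hy2⟩ : ∃ y, max (max R1 (x / 2)) (max (x - 1) (x - 1 / (2 * c'))) < y ∧ y < x := by
    refine exists_between ?_
    have : 0 < 1 / (2 * c') := by positivity
    simp only [max_lt_iff]
    exact ⟨⟨hx.1, by linarith⟩, by linarith, by linarith⟩
  simp only [max_lt_iff] at hy1
  obtain ⟨⟨hyR, hyx2⟩, hyx1, hyc⟩ := hy1
  have hyc2 : c' * (x - y) ≤ 1 / 2 := by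
    have : x - y ≤ 1 / (2 * c') := by linarith
    rw [le_div_iff₀ (by positivity)] at this
    linarith
  by_contra! hcon
  have hsub : Icc y x ⊆ Icc R1 T := Icc_subset_Icc hyR.le hx.2
  obtain ⟨m, hm, hmax⟩ := isCompact_Icc.exists_isMaxOn (nonempty_Icc.2 hy2.le) (h.contU.mono hsub)
  have hM : 0 < u m := (hcon y ⟨hyR.le, hy2⟩).trans_le (hmax ⟨le_rfl, hy2.le⟩)
  set M := u m with hMdef
  have hy0 : 0 < y := by linarith
  have hv : ∀ s ∈ Icc y x, -(s ^ (N - 1) * (c' * M ^ (p - 1) * (x - y))) ≤ v s := by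
    intro s hs
    have hs0 : 0 < s := hy0.trans_le hs.1
    have := ge_of_hasDerivAt_nonpos (f := fun r => v r - r * (s ^ (N - 1) * (c' * M ^ (p - 1))))
      hs.2 ((h.contV.mono (Icc_subset_Icc (hyR.le.trans hs.1) hx.2)).sub (by fun_prop))
      (fun r hr => (h.dv r ⟨hyR.le.trans (hs.1.trans hr.1.le), hr.2.le.trans hx.2⟩).sub
        ((hasDerivAt_id r).mul_const _)) (fun r hr => by
          have hr0 : 0 < r := hs0.trans hr.1
          have h1 := hlow M hM.le (u r) (hmax ⟨hs.1.trans hr.1.le, hr.2.le⟩)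
          have h2 : r ^ (N - 1) ≤ (2 * s) ^ (N - 1) :=
            pow_le_pow_left₀ hr0.le (by linarith [hs.1, hr.2]) _
          rw [mul_pow] at h2
          have h3 : 0 ≤ r ^ (N - 1) := pow_nonneg hr0.le _
          have h4 : 0 ≤ c * M ^ (p - 1) := by positivity
          have h5 := mul_le_mul_of_nonneg_left h1 h3
          have h6 := mul_le_mul_of_nonneg_right h2 h4
          rw [hc']
          nlinarith)
    have h5 : (x - s) * (s ^ (N - 1) * (c' * M ^ (p - 1))) ≤
        (x - y) * (s ^ (N - 1) * (c' * M ^ (p - 1))) := by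
      gcongr; exact hs.1
    linarith
  have hu : u m ≤ u x + (x - m) * ((c' * (x - y)) ^ (q - 1) * M) := by
    have := le_of_hasDerivAt_nonneg (f := fun r => u r + r * ((c' * (x - y)) ^ (q - 1) * M))
      hm.2 ((h.contU.mono (Icc_subset_Icc (hyR.le.trans hm.1) hx.2)).add (by fun_prop))
      (fun r hr => (h.du r ⟨hyR.le.trans (hm.1.trans hr.1.le), hr.2.le.trans hx.2⟩).add
        ((hasDerivAt_id r).mul_const _)) (fun r hr => by
          have hr0 : 0 < r := hy0.trans (hm.1.trans_lt hr.1)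
          have h1 := hv r ⟨hm.1.trans hr.1.le, hr.2.le⟩
          rw [← mul_neg, ← le_div_iff₀' (pow_pos hr0 _)] at h1
          have h2 := phip_mono hpq.symm.lt h1
          rw [phip_neg, show c' * M ^ (p - 1) * (x - y) = c' * (x - y) * M ^ (p - 1) by ring,
            phip_mul_rpow hpq (mul_nonneg hc'0.le (by linarith)) hM.le] at h2
          linarith)
    linarith
  have h6 : (c' * (x - y)) ^ (q - 1) < 1 :=
    rpow_lt_one (mul_nonneg hc'0.le (by linarith)) (by linarith) (by linarith [hpq.symm.lt])
  have h7 : (x - m) * ((c' * (x - y)) ^ (q - 1) * M) ≤ 1 * ((c' * (x - y)) ^ (q - 1) * M) := by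
    have : 0 ≤ (c' * (x - y)) ^ (q - 1) := rpow_nonneg (mul_nonneg hc'0.le (by linarith)) _
    gcongr; linarith [hm.1]
  nlinarith

theorem pos_of_end (h : RadialSystem q N g R1 T d u v) (hg : AdmissibleNonlin p g)
    (hpq : p.HolderConjugate q) (hR1 : 0 ≤ R1) (hd : 0 < d) (hvT : v T = 0) {r : ℝ}
    (hr : r ∈ Icc R1 T) : 0 < u r := by
  by_contra! hur
  obtain ⟨x, hx, hx0, hxlt⟩ := exists_first_zero (f := fun r => -u r) hr.1
    (h.contU.mono (Icc_subset_Icc_right hr.2)).neg (by simpa [h.u_init] using hd)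
    (by simpa using hur)
  have hxT : x ≤ T := hx.2.trans hr.2
  rcases le_or_gt 0 (v x) with hv | hv
  · obtain ⟨y, hy, hy0⟩ := h.exists_left_nonpos hg hpq hR1 ⟨hx.1, hxT⟩ (by linarith) hv
    linarith [hxlt y hy]
  · obtain ⟨t, ht, ht0, htlt⟩ := exists_first_zero hxT
      (h.contV.mono (Icc_subset_Icc_left hx.1.le)) hv hvT.ge
    have hu : ∀ s ∈ Icc x t, u s ≤ 0 := by
      intro s hs
      have := ge_of_hasDerivAt_nonpos hs.1
        (h.contU.mono (Icc_subset_Icc hx.1.le (hs.2.trans ht.2)))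
        (fun y hy => h.du y ⟨hx.1.le.trans hy.1.le, hy.2.le.trans (hs.2.trans ht.2)⟩)
        (fun y hy => (phip_neg_of_neg (div_neg_of_neg_of_pos
          (htlt y ⟨hy.1.le, hy.2.trans_le hs.2⟩)
          (pow_pos (hR1.trans_lt (hx.1.trans hy.1)) _))).le)
      linarith
    have := ge_of_hasDerivAt_nonpos ht.1.le
      (h.contV.mono (Icc_subset_Icc hx.1.le ht.2))
      (fun y hy => h.dv y ⟨hx.1.le.trans hy.1.le, hy.2.le.trans ht.2⟩)
      (fun y hy => by rw [hg.eq_zero _ (hu y ⟨hy.1.le, hy.2.le⟩)]; simp)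
    linarith

end RadialSystem

/-- The nonlinearity `f` frozen outside `[0, D]`. -/
noncomputable def trunc (f : ℝ → ℝ) (D s : ℝ) : ℝ := f (max 0 (min s D))

theorem trunc_of_mem {f : ℝ → ℝ} {D s : ℝ} (h0 : 0 ≤ s) (hs : s ≤ D) : trunc f D s = f s := by
  rw [trunc, min_eq_left hs, max_eq_right h0]

theorem Feq.nonneg {f : ℝ → ℝ} (h : Feq f) {s : ℝ} (hs : 1 ≤ s) : 0 ≤ f s := by
  rcases hs.eq_or_lt with rfl | h1
  · exact h.2.1.ge
  · exact (h.2.2.2 s h1).le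

theorem continuous_trunc {f : ℝ → ℝ} (hreg : Freg f) (D : ℝ) : Continuous (trunc f D) :=
  hreg.1.comp_continuous (by fun_prop) fun s => mem_Ici.2 (le_max_left _ _)

theorem admissible_trunc {p : ℝ} {f : ℝ → ℝ} (hp : 1 < p) (hreg : Freg f) (heq : Feq f)
    (h0 : Fzero p f) {D : ℝ} (hD : 1 < D) : AdmissibleNonlin p (trunc f D) := by
  have hbdd : ∃ C, 0 < C ∧ ∀ s, |trunc f D s| ≤ C := by
    obtain ⟨C, hC⟩ := isCompact_Icc.exists_bound_of_continuousOn
      (hreg.1.mono (fun x (hx : x ∈ Icc 0 D) => hx.1))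
    refine ⟨max C 1, by positivity, fun s => (hC _ ⟨le_max_left _ _, ?_⟩).trans (le_max_left _ _)⟩
    exact max_le (by linarith) (min_le_right _ _)
  refine ⟨continuous_trunc hreg D, fun s hs => ?_, ?_, fun s hs hs1 => ?_, fun s hs => ?_, hbdd, ?_⟩
  · rw [trunc, max_eq_left ((min_le_left _ _).trans hs), heq.1]
  · rw [trunc_of_mem zero_le_one hD.le, heq.2.1]
  · rw [trunc_of_mem hs.le (by linarith)]; exact heq.2.2.1 s hs hs1
  · exact heq.2.2.2 _ (lt_max_of_lt_right (lt_min hs hD))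
  · obtain ⟨C, hC, hb⟩ := hbdd
    obtain ⟨c, hc⟩ := h0
    rw [eventually_iff, mem_nhdsGT_iff_exists_Ioo_subset] at hc
    obtain ⟨δ, hδ, hc⟩ := hc
    have hδ : 0 < δ := hδ
    set δ' := min δ 1
    have hδ' : 0 < δ' := lt_min hδ one_pos
    refine ⟨|c| + C / δ' ^ (p - 1), by positivity, fun s hs => ?_⟩
    have hsp : 0 ≤ s ^ (p - 1) := rpow_nonneg hs _
    have hq : 0 ≤ C / δ' ^ (p - 1) := by positivity
    rcases hs.eq_or_lt with rfl | hs
    · rw [trunc_of_mem le_rfl (by linarith), heq.1]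
      have : 0 ≤ (|c| + C / δ' ^ (p - 1)) * 0 ^ (p - 1) := by positivity
      linarith
    rcases lt_or_ge s δ' with h1 | h1
    · have h2 := hc ⟨hs, h1.trans_le (min_le_left _ _)⟩
      rw [mem_ofPred_eq, le_div_iff₀ (by positivity)] at h2
      rw [trunc_of_mem hs.le (by linarith [min_le_right δ 1])]
      nlinarith [neg_abs_le c, mul_nonneg hq hsp]
    · have h2 := (abs_le.1 (hb s)).1
      have h3 : δ' ^ (p - 1) ≤ s ^ (p - 1) := rpow_le_rpow hδ'.le h1 (by linarith)
      have h4 : C ≤ C / δ' ^ (p - 1) * s ^ (p - 1) := by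
        rw [div_mul_eq_mul_div, le_div_iff₀ (by positivity)]
        gcongr
      nlinarith [mul_nonneg (abs_nonneg c) hsp]

theorem Fint_trunc {f : ℝ → ℝ} {D s : ℝ} (hD : 1 ≤ D) (h0 : 0 ≤ s) (hs : s ≤ D) :
    Fint (trunc f D) s = Fint f s := by
  refine intervalIntegral.integral_congr fun x hx => ?_
  rw [mem_uIcc] at hx
  exact trunc_of_mem (by rcases hx with hx | hx <;> linarith)
    (by rcases hx with hx | hx <;> linarith)

theorem continuousOn_Fint {f : ℝ → ℝ} (hreg : Freg f) : ContinuousOn (Fint f) (Ici 0) := by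
  intro s hs
  have hs : 0 ≤ s := hs
  have h1 := (continuous_Fint (continuous_trunc hreg (s + 2))).continuousWithinAt
    (s := Ici 0) (x := s)
  refine h1.congr_of_eventuallyEq ?_ (Fint_trunc (by linarith) hs (by linarith)).symm
  filter_upwards [self_mem_nhdsWithin,
    mem_nhdsWithin_of_mem_nhds (Iic_mem_nhds (show s < s + 2 by linarith))] with x hx hx'
  exact (Fint_trunc (by linarith) hx hx').symm

theorem hasDerivAt_Fint_of_pos {f : ℝ → ℝ} (hreg : Freg f) {s : ℝ} (hs : 0 < s) :
    HasDerivAt (Fint f) (f s) s := by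
  have h1 := hasDerivAt_Fint (continuous_trunc hreg (s + 2)) s
  rw [trunc_of_mem hs.le (by linarith)] at h1
  refine h1.congr_of_eventuallyEq ?_
  filter_upwards [Ioo_mem_nhds hs (show s < s + 2 by linarith)] with x hx
  exact (Fint_trunc (by linarith) hx.1.le hx.2.le).symm

theorem Fint_mono_of_one_le {f : ℝ → ℝ} (hreg : Freg f) (heq : Feq f) {s t : ℝ} (hs : 1 ≤ s)
    (hst : s ≤ t) : Fint f s ≤ Fint f t :=
  le_of_hasDerivAt_nonneg hst
    ((continuousOn_Fint hreg).mono fun x hx => zero_le_one.trans (hs.trans hx.1))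
    (fun x hx => hasDerivAt_Fint_of_pos hreg (by linarith [hx.1]))
    (fun x hx => heq.nonneg (by linarith [hx.1]))

theorem Fint_nonneg_of_one_le {f : ℝ → ℝ} (hreg : Freg f) (heq : Feq f) {s : ℝ} (hs : 1 ≤ s) :
    0 ≤ Fint f s := by
  simpa using Fint_mono_of_one_le hreg heq le_rfl hs

theorem le_fstar {f : ℝ → ℝ} (hreg : Freg f) {s x : ℝ} (hx : x ∈ Icc 1 s) : f x ≤ fstar f s :=
  le_csSup (isCompact_Icc.image_of_continuousOn
    (hreg.1.mono fun _ hy => zero_le_one.trans hy.1)).bddAbove (mem_image_of_mem f hx)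

namespace RadialSystem

variable {p q : ℝ} {N : ℕ} {g : ℝ → ℝ} {R1 T d : ℝ} {u v : ℝ → ℝ}

theorem antitoneOn_of_v_nonpos (h : RadialSystem q N g R1 T d u v) (hR1 : 0 ≤ R1) {t : ℝ}
    (ht : t ≤ T) (hv : ∀ s ∈ Ioo R1 t, v s ≤ 0) : AntitoneOn u (Icc R1 t) := by
  intro x hx y hy hxy
  refine ge_of_hasDerivAt_nonpos hxy (h.contU.mono (Icc_subset_Icc hx.1 (hy.2.trans ht)))
    (fun r hr => h.du r ⟨hx.1.trans hr.1.le, hr.2.le.trans (hy.2.trans ht)⟩) fun r hr => ?_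
  have h1 : r ∈ Ioo R1 t := ⟨hx.1.trans_lt hr.1, hr.2.trans_le hy.2⟩
  have h2 : v r / r ^ (N - 1) ≤ 0 :=
    div_nonpos_of_nonpos_of_nonneg (hv r h1) (pow_nonneg (hR1.trans h1.1.le) _)
  rcases h2.eq_or_lt with h3 | h3
  · rw [h3, phip_zero]
  · exact (phip_neg_of_neg h3).le

/-- If `v` does not stay negative, then the solution crosses the level `1` and turns. -/
theorem exists_turn (h : RadialSystem q N g R1 T d u v) (hg : AdmissibleNonlin p g)
    (hR1 : 0 ≤ R1) (hd : 1 < d) {r : ℝ} (hr : r ∈ Ioc R1 T) (hv : 0 ≤ v r) :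
    ∃ t ∈ Ioc R1 T, v t = 0 ∧ u t < 1 ∧ (∀ s ∈ Icc R1 t, v s ≤ 0) := by
  have hRT : R1 < T := hr.1.trans_le hr.2
  have h1 : ∀ᶠ x in 𝓝[>] R1, 1 < u x := by
    have := (h.du R1 ⟨le_rfl, hRT.le⟩).continuousAt.eventually (lt_mem_nhds (h.u_init ▸ hd))
    exact nhdsWithin_le_nhds this
  rw [eventually_iff, mem_nhdsGT_iff_exists_Ioo_subset] at h1
  obtain ⟨δ, hδ, h1⟩ := h1
  have hδ : R1 < δ := hδ
  have hdec : ∀ x ∈ Icc R1 T, (∀ s ∈ Ioo R1 x, 1 < u s) → R1 < x → v x < 0 := by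
    intro x hx hxu hRx
    have := gt_of_hasDerivAt_neg hRx (h.contV.mono (Icc_subset_Icc_right hx.2))
      (fun s hs => h.dv s ⟨hs.1.le, hs.2.le.trans hx.2⟩) (fun s hs => by
        have h2 : 0 < s ^ (N - 1) := pow_pos (hR1.trans_lt hs.1) _
        have := mul_pos h2 (hg.pos _ (hxu s hs))
        linarith)
    rwa [h.v_init] at this
  obtain ⟨e, he1, he2⟩ := exists_between (lt_min hδ hr.1)
  have he2' : e < δ := he2.trans_le (min_le_left _ _)
  have her : e < r := he2.trans_le (min_le_right _ _)
  have hneg : ∀ x ∈ Ioc R1 e, v x < 0 := fun x hx =>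
    hdec x ⟨hx.1.le, by linarith [hx.2, hr.2]⟩ (fun s hs => h1 ⟨hs.1, by linarith [hs.2, hx.2]⟩) hx.1
  obtain ⟨t, ht, ht0, htlt⟩ := exists_first_zero her.le
    (h.contV.mono (Icc_subset_Icc he1.le hr.2)) (hneg e ⟨he1, le_rfl⟩) hv
  have hRt : R1 < t := he1.trans ht.1
  have htT : t ≤ T := ht.2.trans hr.2
  have hvs : ∀ s ∈ Icc R1 t, v s ≤ 0 := by
    intro s hs
    rcases hs.1.eq_or_lt with h2 | h2
    · rw [← h2, h.v_init]
    rcases le_or_gt s e with h3 | h3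
    · exact (hneg s ⟨h2, h3⟩).le
    rcases hs.2.eq_or_lt with h4 | h4
    · rw [h4, ht0]
    · exact (htlt s ⟨h3.le, h4⟩).le
  refine ⟨t, ⟨hRt, htT⟩, ht0, ?_, hvs⟩
  by_contra! hcon
  have hanti := h.antitoneOn_of_v_nonpos hR1 htT fun s hs => hvs s ⟨hs.1.le, hs.2.le⟩
  have := ge_of_hasDerivAt_nonpos ht.1.le (h.contV.mono (Icc_subset_Icc he1.le htT))
    (fun s hs => h.dv s ⟨he1.le.trans hs.1.le, hs.2.le.trans htT⟩) (fun s hs => by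
      have h2 : 0 ≤ s ^ (N - 1) := pow_nonneg (hR1.trans (he1.trans hs.1).le) _
      have h3 : u t ≤ u s := hanti ⟨(he1.trans hs.1).le, hs.2.le⟩ ⟨hRt.le, le_rfl⟩ hs.2.le
      have := mul_nonneg h2 (hg.nonneg (hcon.trans h3))
      linarith)
  linarith [hneg e ⟨he1, le_rfl⟩]

theorem en_of_v_eq_zero (hq : 1 < q) {t : ℝ} (ht : v t = 0) : en q N g u v t = Fint g (u t) := by
  simp [en, ht, zero_rpow (show q ≠ 0 by linarith)]

theorem fall_le (h : RadialSystem q N g 0 T d u v) (hpq : p.HolderConjugate q) (hN : 1 ≤ N)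
    {Λ : ℝ} (hΛ : 0 ≤ Λ) {r : ℝ} (hr : r ∈ Icc 0 T) (hg : ∀ s ∈ Icc 0 r, g (u s) ≤ Λ) :
    d - u r ≤ Λ ^ (q - 1) * r ^ q := by
  have hq := hpq.symm.lt
  have hpow : Λ ^ (q - 1) * r ^ q = (Λ * r) ^ (q - 1) * r := by
    rw [mul_rpow hΛ hr.1, mul_assoc]
    rcases hr.1.eq_or_lt with h0 | h0
    · rw [← h0, zero_rpow (by linarith)]; simp
    · rw [← rpow_add_one h0.ne']; simp
  have := le_of_hasDerivAt_nonneg (f := fun x => u x + x * (Λ * r) ^ (q - 1)) hr.1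
    ((h.contU.mono (Icc_subset_Icc_right hr.2)).add (by fun_prop))
    (fun x hx => (h.du x ⟨hx.1.le, hx.2.le.trans hr.2⟩).add ((hasDerivAt_id x).mul_const _))
    (fun x hx => by
      have h1 := h.neg_le_v hN le_rfl hΛ ⟨hx.1.le, hx.2.le.trans hr.2⟩
        (fun s hs => hg s ⟨hs.1, hs.2.trans hx.2.le⟩)
      have hN' : x ^ N = x ^ (N - 1) * x := by rw [← pow_succ]; congr 1; omega
      rw [hN', ← mul_assoc, mul_right_comm, ← neg_mul, mul_comm, ← le_div_iff₀' (pow_pos hx.1 _)] at h1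
      have h2 := phip_mono hq h1
      have h3 : -(Λ * r) ≤ -(Λ * x) := neg_le_neg (mul_le_mul_of_nonneg_left hx.2.le hΛ)
      have h4 := (phip_mono hq h3).trans h2
      rw [phip_neg, phip_of_nonneg hq (mul_nonneg hΛ hr.1)] at h4
      linarith)
  rw [h.u_init] at this
  rw [hpow]
  linarith

theorem dPohozaev (h : RadialSystem q N g R1 T d u v) (hg : Continuous g)
    (hpq : p.HolderConjugate q) (hN : 1 ≤ N) (hR1 : 0 ≤ R1) {r : ℝ} (hr : r ∈ Ioc R1 T) :
    HasDerivAt (fun r => r ^ N * en q N g u v r + (N - p) / p * (v r * u r))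
      (r ^ (N - 1) * (N * Fint g (u r) - (N - p) / p * (g (u r) * u r))) r := by
  have hr0 : 0 < r := hR1.trans_lt hr.1
  have hr' : r ∈ Icc R1 T := ⟨hr.1.le, hr.2⟩
  have h1 := ((hasDerivAt_pow N r).mul (h.dEn hg hpq.symm.lt hR1 hr)).add
    (((h.dv r hr').mul (h.du r hr')).const_mul ((N - p) / p))
  refine h1.congr_deriv ?_
  have hN' : r ^ N = r ^ (N - 1) * r := by rw [← pow_succ]; congr 1; omega
  have hvy : v r * phip q (v r / r ^ (N - 1)) = r ^ (N - 1) * |v r / r ^ (N - 1)| ^ q := by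
    rw [← phip_mul_self hpq.symm.lt]
    have := (pow_pos hr0 (N - 1)).ne'
    field_simp
  rw [hvy, en, hN']
  set Y := |v r / r ^ (N - 1)| ^ q
  have hp0 := hpq.ne_zero
  have hq0 := hpq.symm.ne_zero
  have hinv : 1 / q = 1 - 1 / p := by
    have := hpq.inv_add_inv_eq_one
    rw [one_div, one_div]; linarith
  have hc : ((N - 1 : ℕ) : ℝ) = N - 1 := by push_cast [hN]; ring
  rw [hc, div_eq_mul_one_div Y q, hinv]
  field_simp
  ring

end RadialSystem

/-- For large initial data the flux of solutions of the truncated problems stays negative. -/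
def LargeDataDecay (q : ℝ) (N : ℕ) (R1 R2 : ℝ) (f : ℝ → ℝ) : Prop :=
  ∀ᶠ d in atTop, ∀ D ≥ d, ∀ u v : ℝ → ℝ, RadialSystem q N (trunc f D) R1 R2 d u v →
    ∀ r ∈ Ioc R1 R2, v r < 0

section

variable {p q : ℝ} {N : ℕ} {R1 R2 : ℝ} {f : ℝ → ℝ}

theorem largeDataDecay_of_turn
    (hp : 1 < p) (hreg : Freg f) (heq : Feq f) (h0 : Fzero p f) (hR1 : 0 ≤ R1)
    (H : ∀ᶠ d in atTop, ∀ D ≥ d, ∀ u v : ℝ → ℝ, RadialSystem q N (trunc f D) R1 R2 d u v →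
      ∀ t ∈ Ioc R1 R2, v t = 0 → u t < 1 → (∀ s ∈ Icc R1 t, v s ≤ 0) → False) :
    LargeDataDecay q N R1 R2 f := by
  filter_upwards [H, eventually_gt_atTop 1] with d hd hd1 D hD u v h r hr
  by_contra! hcon
  obtain ⟨t, ht, h1, h2, h3⟩ := h.exists_turn
    (admissible_trunc hp hreg heq h0 (hd1.trans_le hD)) hR1 hd1 hr hcon
  exact hd D hD u v h t ht h1 h2 h3

theorem RadialSystem.pow_mul_en_le {g u v : ℝ → ℝ} {d : ℝ}
    (h : RadialSystem q N g R1 R2 d u v) (hg : AdmissibleNonlin p g)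
    (hq : 1 < q) (hN : 1 ≤ N) (hR1 : 0 ≤ R1) {n : ℕ} (hn : ((N - 1 : ℕ) : ℝ) * q ≤ n)
    {t : ℝ} (ht : t ∈ Ioc R1 R2) (hvt : v t = 0) (hut : u t < 1) {r : ℝ} (hr : r ∈ Icc R1 t) :
    r ^ n * Fint g (u r) ≤ R2 ^ n * Fint g 0 := by
  have ht0 : 0 ≤ t := hR1.trans ht.1.le
  calc r ^ n * Fint g (u r) ≤ r ^ n * RadialSystem.en q N g u v r := by
        have := RadialSystem.Fint_le_en (g := g) (N := N) (u := u) (v := v) hq r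
        have := pow_nonneg (hR1.trans hr.1) n
        gcongr
    _ ≤ t ^ n * RadialSystem.en q N g u v t := h.pow_mul_en_mono hg hq hN hR1 hn hr.1 hr.2 ht.2
    _ ≤ R2 ^ n * Fint g 0 := by
        rw [RadialSystem.en_of_v_eq_zero hq hvt]
        have := hg.Fint_le_zero_val hut.le
        have := hg.Fint_nonneg (u t)
        have := pow_nonneg (ht0.trans ht.2) n
        have := ht.2
        gcongr

theorem largeDataDecay_of_bdd (hpq : p.HolderConjugate q) (hN : 1 ≤ N) (hR1 : 0 ≤ R1)
    (hreg : Freg f) (heq : Feq f) (h0 : Fzero p f)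
    {B : ℝ} (hB : ∀ s, 1 ≤ s → Fint f s ≤ B) : LargeDataDecay q N R1 R2 f := by
  refine largeDataDecay_of_turn hpq.lt hreg heq h0 hR1 ?_
  filter_upwards [eventually_gt_atTop 1, eventually_gt_atTop (1 + (q * B) ^ (1 / p) * (R2 - R1))]
    with d hd1 hd D hD u v h t ht hvt hut _
  have hg := admissible_trunc hpq.lt hreg heq h0 (hd1.trans_le hD)
  have hq := hpq.symm.lt
  have h1 : ∀ r ∈ Icc R1 R2, |phip q (v r / r ^ (N - 1))| ≤ (q * B) ^ (1 / p) := by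
    intro r hr
    refine (h.abs_du_le hg hpq hN hR1 hr).trans (rpow_le_rpow ?_ ?_ ?_)
    · exact mul_nonneg (by linarith) (hg.Fint_nonneg d)
    · rw [Fint_trunc (by linarith) (by linarith) hD]
      have := hB d hd1.le
      gcongr
    · have := hpq.pos; positivity
  have h2 := h.abs_u_sub_le h1 (r := R1) (s := t) ⟨le_rfl, ht.1.le.trans ht.2⟩ ⟨ht.1.le, ht.2⟩
  have h3 : 0 ≤ (q * B) ^ (1 / p) := (abs_nonneg _).trans (h1 t ⟨ht.1.le, ht.2⟩)
  rw [h.u_init, abs_sub_comm R1 t, abs_of_pos (sub_pos.2 ht.1)] at h2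
  have h4 : (q * B) ^ (1 / p) * (t - R1) ≤ (q * B) ^ (1 / p) * (R2 - R1) := by
    have := ht.2
    gcongr
  linarith [le_abs_self (d - u t)]

theorem tendsto_Fint (hreg : Freg f) (heq : Feq f) (hB : ¬ ∃ B, ∀ s, 1 ≤ s → Fint f s ≤ B) :
    Tendsto (Fint f) atTop atTop := by
  rw [tendsto_atTop]
  intro b
  push Not at hB
  obtain ⟨s, hs, hb⟩ := hB b
  filter_upwards [eventually_ge_atTop s] with x hx
  exact hb.le.trans (Fint_mono_of_one_le hreg heq hs hx)

theorem largeDataDecay_of_pos (hpq : p.HolderConjugate q) (hN : 1 ≤ N) (hR1 : 0 < R1)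
    (hreg : Freg f) (heq : Feq f) (h0 : Fzero p f) (hF : Tendsto (Fint f) atTop atTop) :
    LargeDataDecay q N R1 R2 f := by
  refine largeDataDecay_of_turn hpq.lt hreg heq h0 hR1.le ?_
  obtain ⟨n, hn⟩ := exists_nat_ge (((N - 1 : ℕ) : ℝ) * q)
  filter_upwards [eventually_gt_atTop 1, hF.eventually_gt_atTop (R2 ^ n * Fint f 0 / R1 ^ n)]
    with d hd1 hd D hD u v h t ht hvt hut _
  have hg := admissible_trunc hpq.lt hreg heq h0 (hd1.trans_le hD)
  have h1 := h.pow_mul_en_le hg hpq.symm.lt hN hR1.le hn ht hvt hut ⟨le_rfl, ht.1.le⟩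
  rw [h.u_init, Fint_trunc (by linarith) (by linarith) hD,
    Fint_trunc (by linarith) le_rfl (by linarith)] at h1
  rw [div_lt_iff₀' (by positivity)] at hd
  linarith

theorem Fsubl.exists_le (hreg : Freg f) (hp : 1 < p) (h : Fsubl p f) :
    ∃ M, 0 < M ∧ ∀ s, 1 ≤ s → f s ≤ M * s ^ (p - 1) := by
  obtain ⟨M, hM, h⟩ := h
  obtain ⟨S, hS⟩ := eventually_atTop.1 (h 1 one_pos)
  obtain ⟨C, hC⟩ := isCompact_Icc.exists_bound_of_continuousOn
    (hreg.1.mono (fun x (hx : x ∈ Icc 1 S) => zero_le_one.trans hx.1))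
  refine ⟨max (M + 1) C, by positivity, fun s hs => ?_⟩
  rcases le_total S s with h1 | h1
  · have := hS s h1
    rw [div_le_iff₀ (by positivity)] at this
    refine this.trans ?_
    gcongr
    exact le_max_left _ _
  · have h2 := (le_abs_self _).trans (hC s ⟨hs, h1⟩)
    have h3 : 1 ≤ s ^ (p - 1) := one_le_rpow hs (by linarith)
    have h4 : 0 < max (M + 1) C := by positivity
    nlinarith [le_max_right (M + 1) C]

theorem RadialSystem.exists_level {g u v : ℝ → ℝ} {d : ℝ}
    (h : RadialSystem q N g R1 R2 d u v) {t : ℝ} (ht : t ∈ Ioc R1 R2) {c : ℝ} (hc : c ≤ d)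
    (hut : u t ≤ c) : ∃ r ∈ Icc R1 t, u r = c := by
  have := intermediate_value_Icc' ht.1.le (h.contU.mono (Icc_subset_Icc_right ht.2))
  exact this ⟨hut, by rwa [h.u_init]⟩

theorem largeDataDecay_of_subl (hpq : p.HolderConjugate q) (hN : 1 ≤ N)
    (hreg : Freg f) (heq : Feq f) (h0 : Fzero p f) (hF : Tendsto (Fint f) atTop atTop)
    (hs : Fsubl p f) : LargeDataDecay q N 0 R2 f := by
  refine largeDataDecay_of_turn hpq.lt hreg heq h0 le_rfl ?_
  obtain ⟨n, hn⟩ := exists_nat_ge (((N - 1 : ℕ) : ℝ) * q)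
  obtain ⟨M, hM, hfM⟩ := hs.exists_le hreg hpq.lt
  have hq := hpq.symm.lt
  set δ := (1 / (2 * M ^ (q - 1))) ^ (1 / q) with hδ
  have hδ0 : 0 < δ := by positivity
  have hF' : Tendsto (fun d : ℝ => Fint f (d / 2)) atTop atTop :=
    hF.comp (tendsto_id.atTop_div_const two_pos)
  filter_upwards [eventually_gt_atTop 2, hF'.eventually_gt_atTop (R2 ^ n * Fint f 0 / δ ^ n)]
    with d hd1 hd D hD u v h t ht hvt hut hvs
  have hg := admissible_trunc hpq.lt hreg heq h0 (show 1 < D by linarith)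
  obtain ⟨r, hr, hur⟩ := h.exists_level ht (show d / 2 ≤ d by linarith) (by linarith)
  have hanti := h.antitoneOn_of_v_nonpos le_rfl ht.2 fun s hs => hvs s ⟨hs.1.le, hs.2.le⟩
  have h0t : (0 : ℝ) ∈ Icc 0 t := ⟨le_rfl, ht.1.le⟩
  have hM' : 0 ≤ M * d ^ (p - 1) := by positivity
  have h1 := h.fall_le hpq hN hM' ⟨hr.1, hr.2.trans ht.2⟩ (fun s hs => by
    have hst : s ∈ Icc 0 t := ⟨hs.1, hs.2.trans hr.2⟩
    have h2 : u s ≤ d := h.u_init ▸ hanti h0t hst hs.1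
    have h3 : d / 2 ≤ u s := hur ▸ hanti hst hr hs.2
    rw [trunc_of_mem (by linarith) (by linarith)]
    refine (hfM _ (by linarith)).trans ?_
    have := hpq.lt
    have : 0 ≤ u s := by linarith
    gcongr)
  have hpow : (M * d ^ (p - 1)) ^ (q - 1) = M ^ (q - 1) * d := by
    rw [← phip_mul_rpow hpq hM.le (by linarith), phip_of_nonneg hq hM']
  rw [hpow, hur] at h1
  have h2 : 1 / (2 * M ^ (q - 1)) ≤ r ^ q := by
    rw [div_le_iff₀ (by positivity)]
    have : 0 < d := by linarith
    nlinarith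
  have h3 : δ ≤ r := by
    have := rpow_le_rpow (by positivity) h2 (show 0 ≤ 1 / q by positivity)
    rwa [← rpow_mul hr.1, mul_one_div_cancel (by linarith), rpow_one] at this
  have h4 := h.pow_mul_en_le hg hq hN le_rfl hn ht hvt hut hr
  rw [hur, Fint_trunc (by linarith) (by linarith) (by linarith),
    Fint_trunc (by linarith) le_rfl (by linarith)] at h4
  have h5 : 0 ≤ Fint f (d / 2) := Fint_nonneg_of_one_le hreg heq (by linarith)
  have h6 : δ ^ n * Fint f (d / 2) ≤ r ^ n * Fint f (d / 2) := by gcongr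
  rw [div_lt_iff₀' (by positivity)] at hd
  linarith

end

section

variable {p q : ℝ} {N : ℕ} {R2 : ℝ} {f : ℝ → ℝ}

/-- The pointwise consequences of the subcritical growth condition. -/
theorem FsubcWith.exists_bounds (hp : 1 < p) (hN : 1 ≤ N) (hreg : Freg f) (heq : Feq f) {η : ℝ}
    (h : FsubcWith p N f η) : ∃ L S : ℝ, 0 < L ∧ 1 ≤ S ∧ (N - p) / p * L < N ∧
      ∀ s, S ≤ s → 1 ≤ η * s ∧ 0 < Fint f (η * s) ∧ 0 < fstar f s ∧
        fstar f s * s ≤ L * Fint f (η * s) := by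
  obtain ⟨-, hη, hη1, L, hL, hev⟩ := h
  obtain ⟨S, hS⟩ := eventually_atTop.1 hev
  have key : ∀ s, max S (max 1 (2 / η)) ≤ s → 1 ≤ η * s ∧ 0 < Fint f (η * s) ∧ 0 < fstar f s ∧
        fstar f s * s ≤ L * Fint f (η * s) := by
    intro s hs
    simp only [max_le_iff] at hs
    obtain ⟨hs1, hs2, hs3⟩ := hs
    rw [div_le_iff₀' hη] at hs3
    have hF : 0 < Fint f (η * s) := by
      have := lt_of_hasDerivAt_pos (show 1 < η * s by linarith)
        ((continuousOn_Fint hreg).mono fun x hx => zero_le_one.trans hx.1)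
        (fun x hx => hasDerivAt_Fint_of_pos hreg (by linarith [hx.1]))
        (fun x hx => heq.2.2.2 x hx.1)
      rwa [Fint_one] at this
    have h2s : 2 ≤ s := by nlinarith
    refine ⟨by linarith, hF, (heq.2.2.2 2 one_lt_two).trans_le
      (le_fstar hreg ⟨one_le_two, h2s⟩), ?_⟩
    have := hS s hs1
    rwa [div_le_iff₀ hF] at this
  refine ⟨L, max S (max 1 (2 / η)), ?_, ?_, ?_, key⟩
  · obtain ⟨_, h2, h3, h4⟩ := key _ le_rfl
    have h5 : 0 < max S (max 1 (2 / η)) := lt_max_of_lt_right (lt_max_of_lt_left one_pos)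
    have := (mul_pos h3 h5).trans_le h4
    exact pos_of_mul_pos_left this h2.le
  · exact (le_max_left _ _).trans (le_max_right _ _)
  · obtain ⟨_, h2, h3, h4⟩ := key _ le_rfl
    have h5 : 0 < max S (max 1 (2 / η)) := lt_max_of_lt_right (lt_max_of_lt_left one_pos)
    have hL0 : 0 < L := pos_of_mul_pos_left ((mul_pos h3 h5).trans_le h4) h2.le
    have hN' : (0 : ℝ) < N := by exact_mod_cast hN
    rcases lt_or_ge p N with hpN | hpN
    · rw [pstar, if_pos hpN, EReal.coe_lt_coe_iff, lt_div_iff₀ (by linarith)] at hL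
      rw [div_mul_eq_mul_div, div_lt_iff₀ (by linarith)]
      linarith
    · have : (N - p) / p * L ≤ 0 :=
        mul_nonpos_of_nonpos_of_nonneg
          (div_nonpos_of_nonpos_of_nonneg (by linarith) (by linarith)) hL0.le
      linarith

theorem exists_pohozaev_bound (hreg : Freg f) (heq : Feq f) {η L S ν n : ℝ} (hη : η < 1)
    (hS : 1 ≤ S) (hn : 0 ≤ n) (hνL : ν * L ≤ n) (hL : 0 ≤ L)
    (hb : ∀ s, S ≤ s → 1 ≤ η * s ∧ 0 < Fint f (η * s) ∧ 0 < fstar f s ∧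
        fstar f s * s ≤ L * Fint f (η * s)) :
    ∃ B, 0 ≤ B ∧ ∀ s, 0 ≤ s → -B ≤ n * Fint f s - ν * (f s * s) := by
  have hc : ContinuousOn (fun s => n * Fint f s - ν * (f s * s)) (Icc 0 S) := by
    have h1 := (continuousOn_Fint hreg).mono (fun x (hx : x ∈ Icc 0 S) => hx.1)
    have h2 := hreg.1.mono (fun x (hx : x ∈ Icc 0 S) => hx.1)
    fun_prop
  obtain ⟨C, hC⟩ := isCompact_Icc.exists_bound_of_continuousOn hc
  refine ⟨max C 0, le_max_right _ _, fun s hs => ?_⟩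
  rcases le_total s S with h1 | h1
  · have := (abs_le.1 (hC s ⟨hs, h1⟩)).1
    linarith [le_max_left C 0]
  · obtain ⟨h2, h3, h4, h5⟩ := hb s h1
    have h6 : 0 ≤ f s := heq.nonneg (hS.trans h1)
    have h7 : Fint f (η * s) ≤ Fint f s := Fint_mono_of_one_le hreg heq h2 (by nlinarith)
    have h8 : f s * s ≤ L * Fint f s := by
      have := le_fstar hreg (⟨hS.trans h1, le_rfl⟩ : s ∈ Icc 1 s)
      nlinarith
    have h9 : 0 ≤ max C 0 := le_max_right _ _
    rcases le_total ν 0 with hν | hν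
    · have := mul_nonneg hn (h3.le.trans h7)
      have := mul_nonneg (neg_nonneg.2 hν) (mul_nonneg h6 hs)
      linarith
    · have := mul_le_mul_of_nonneg_left h8 hν
      have := mul_le_mul_of_nonneg_right hνL (h3.le.trans h7)
      linarith

theorem Fint_growth (hreg : Freg f) (heq : Feq f) {η L S : ℝ} (hη : η < 1)
    (hS : 1 ≤ S) (hL : 0 ≤ L)
    (hb : ∀ s, S ≤ s → 1 ≤ η * s ∧ 0 < Fint f (η * s) ∧ 0 < fstar f s ∧
        fstar f s * s ≤ L * Fint f (η * s)) {s : ℝ} (hs : S ≤ s) :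
    Fint f s ≤ Fint f S * S ^ (-L) * s ^ L := by
  have hS0 : 0 < S := by linarith
  have hs0 : 0 < s := by linarith
  have := ge_of_hasDerivAt_nonpos (f := fun x => Fint f x * x ^ (-L)) hs
    (((continuousOn_Fint hreg).mono fun x hx => hS0.le.trans hx.1).mul
      (ContinuousOn.rpow_const continuousOn_id fun x hx => Or.inl (hS0.trans_le hx.1).ne'))
    (fun x hx => (hasDerivAt_Fint_of_pos hreg (hS0.trans hx.1)).mul
      (hasDerivAt_rpow_const (Or.inl (hS0.trans hx.1).ne'))) (fun x hx => by
      have hx0 : 0 < x := hS0.trans hx.1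
      obtain ⟨h2, h3, h4, h5⟩ := hb x hx.1.le
      have h6 : 0 ≤ f x := heq.nonneg (hS.trans hx.1.le)
      have h7 : Fint f (η * x) ≤ Fint f x := Fint_mono_of_one_le hreg heq h2 (by nlinarith)
      have h8 : f x * x ≤ L * Fint f x := by
        have := le_fstar hreg (⟨hS.trans hx.1.le, le_rfl⟩ : x ∈ Icc 1 x)
        nlinarith
      have h9 : x ^ (-L) = x ^ (-L - 1) * x := by
        rw [← rpow_add_one hx0.ne']; ring_nf
      rw [h9]
      have : 0 < x ^ (-L - 1) := by positivity
      nlinarith)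
  rw [rpow_neg hs0.le, ← div_eq_mul_inv, div_le_iff₀ (by positivity)] at this
  exact this

theorem tendsto_fall_quantity (hpq : p.HolderConjugate q) (hN : 1 ≤ N) (hreg : Freg f)
    (heq : Feq f) {η L S : ℝ} (hη0 : 0 < η) (hη : η < 1)
    (hS : 1 ≤ S) (hL : 0 < L) (hLN : (N - p) / p * L < N)
    (hb : ∀ s, S ≤ s → 1 ≤ η * s ∧ 0 < Fint f (η * s) ∧ 0 < fstar f s ∧
        fstar f s * s ≤ L * Fint f (η * s)) :
    Tendsto (fun d => d * fstar f d * (d ^ (1 / q) * fstar f d ^ (-(1 / p))) ^ N) atTop atTop := by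
  have hp0 := hpq.pos
  have hq0 := hpq.symm.pos
  have hN0 : (0 : ℝ) < N := by exact_mod_cast hN
  have hinv : 1 / q = 1 - 1 / p := by
    have := hpq.inv_add_inv_eq_one
    rw [one_div, one_div]; linarith
  have hrw : ∀ d, S ≤ d → d * fstar f d * (d ^ (1 / q) * fstar f d ^ (-(1 / p))) ^ N =
      d ^ (1 + N / q) * fstar f d ^ (1 - N / p) := by
    intro d hd
    obtain ⟨-, -, hf, -⟩ := hb d hd
    have hd0 : 0 < d := by linarith
    rw [mul_pow, ← rpow_mul_natCast hd0.le, ← rpow_mul_natCast hf.le, rpow_add hd0, rpow_one,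
      sub_eq_add_neg, rpow_add hf, rpow_one]
    rw [show 1 / q * N = N / q by ring, show -(1 / p) * (N : ℝ) = -(N / p) by ring]
    ring
  rcases le_or_gt (N : ℝ) p with hNp | hNp
  · have h1 : Tendsto (fun d : ℝ => d ^ (1 + N / q) * fstar f S ^ (1 - N / p)) atTop atTop :=
      (tendsto_rpow_atTop (by positivity)).atTop_mul_const (rpow_pos_of_pos (hb S le_rfl).2.2.1 _)
    refine tendsto_atTop_mono' _ ?_ h1
    filter_upwards [eventually_ge_atTop S] with d hd
    rw [hrw d hd]
    have h2 : fstar f S ≤ fstar f d := by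
      refine csSup_le_csSup ?_ ((nonempty_Icc.2 hS).image f)
        (image_mono (Icc_subset_Icc_right hd))
      exact (isCompact_Icc.image_of_continuousOn
        (hreg.1.mono fun y hy => zero_le_one.trans hy.1)).bddAbove
    have h3 : 0 ≤ 1 - N / p := by rw [sub_nonneg, div_le_one hp0]; exact hNp
    have h4 := rpow_le_rpow (hb S le_rfl).2.2.1.le h2 h3
    have : 0 ≤ d := by linarith
    gcongr
  · set C := L * (Fint f S * S ^ (-L)) with hC
    have hFS : 0 < Fint f S := (hb S le_rfl).2.1.trans_le
      (Fint_mono_of_one_le hreg heq (hb S le_rfl).1 (by nlinarith))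
    have hC0 : 0 < C := by have : 0 < S := by linarith
                           positivity
    have he : 0 < N - (N - p) / p * L := by linarith
    have h1 : Tendsto (fun d : ℝ => d ^ (N - (N - p) / p * L) * C ^ (1 - N / p)) atTop atTop :=
      (tendsto_rpow_atTop he).atTop_mul_const (by positivity)
    refine tendsto_atTop_mono' _ ?_ h1
    filter_upwards [eventually_ge_atTop S] with d hd
    rw [hrw d hd]
    have hd0 : 0 < d := by linarith
    obtain ⟨h2, h3, h4, h5⟩ := hb d hd
    have h6 : fstar f d ≤ C * d ^ (L - 1) := by
      have h7 : Fint f (η * d) ≤ Fint f d := Fint_mono_of_one_le hreg heq h2 (by nlinarith)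
      have h8 := Fint_growth hreg heq hη hS hL.le hb hd
      have h9 : d ^ L = d ^ (L - 1) * d := by rw [← rpow_add_one hd0.ne']; ring_nf
      rw [h9] at h8
      have : fstar f d * d ≤ (C * d ^ (L - 1)) * d := by
        calc _ ≤ L * Fint f (η * d) := h5
          _ ≤ L * Fint f d := by gcongr
          _ ≤ L * (Fint f S * S ^ (-L) * (d ^ (L - 1) * d)) := by gcongr
          _ = _ := by rw [hC]; ring
      exact le_of_mul_le_mul_right this hd0
    have h10 : 1 - N / p ≤ 0 := by rw [sub_nonpos, one_le_div hp0]; exact hNp.le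
    have h11 := rpow_le_rpow_of_nonpos h4 h6 h10
    calc d ^ (N - (N - p) / p * L) * C ^ (1 - N / p)
        = d ^ (1 + N / q) * (C * d ^ (L - 1)) ^ (1 - N / p) := by
          rw [mul_rpow hC0.le (by positivity), ← rpow_mul hd0.le, mul_left_comm, ← rpow_add hd0,
            mul_comm]
          congr 2
          rw [div_eq_mul_one_div (N : ℝ) q, hinv]
          field_simp
          ring
      _ ≤ _ := by gcongr

theorem largeDataDecay_of_subc (hpq : p.HolderConjugate q) (hN : 1 ≤ N) (hR2 : 0 ≤ R2)
    (hreg : Freg f) (heq : Feq f) (h0 : Fzero p f)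
    (hs : Fsubc p N f) : LargeDataDecay q N 0 R2 f := by
  refine largeDataDecay_of_turn hpq.lt hreg heq h0 le_rfl ?_
  obtain ⟨η, hs⟩ := hs
  have hp := hpq.lt
  have hp0 := hpq.pos
  have hq := hpq.symm.lt
  have hq0 := hpq.symm.pos
  have hη0 := hs.2.1
  have hη1 := hs.2.2.1
  have hN0 : (0 : ℝ) < N := by exact_mod_cast hN
  obtain ⟨L, S, hL, hS, hLN, hb⟩ := hs.exists_bounds hp hN hreg heq
  obtain ⟨B, hB0, hB⟩ := exists_pohozaev_bound hreg heq hη1 hS hN0.le hLN.le hL.le hb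
  set ν := ((N : ℝ) - p) / p with hν
  set c0 := (N : ℝ) - max ν 0 * L with hc0
  have hc0pos : 0 < c0 := by
    rcases le_total ν 0 with h | h
    · rw [hc0, max_eq_right h]; simpa using hN0
    · rw [hc0, max_eq_left h]; linarith
  have hlim := (tendsto_fall_quantity hpq hN hreg heq hη0 hη1 hS hL hLN hb).const_mul_atTop
    (show 0 < c0 / L * ((1 - η) ^ (1 / q)) ^ N by
      have : 0 < 1 - η := by linarith
      positivity)
  filter_upwards [hlim.eventually_gt_atTop (N * (R2 ^ N * Fint f 0) + B * R2 ^ N),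
    eventually_ge_atTop S, eventually_gt_atTop 1] with d hd hdS hd1 D hD u v h t ht hvt hut hvs
  have hd0 : 0 < d := by linarith
  have hg := admissible_trunc hp hreg heq h0 (hd1.trans_le hD)
  obtain ⟨hηd, hFη, hΛ, hΛF⟩ := hb d hdS
  set Λ := fstar f d with hΛdef
  obtain ⟨r, hr, hur⟩ := h.exists_level ht (show η * d ≤ d by nlinarith) (by linarith)
  have hanti := h.antitoneOn_of_v_nonpos le_rfl ht.2 fun s hs => hvs s ⟨hs.1.le, hs.2.le⟩
  have h0t : (0 : ℝ) ∈ Icc 0 t := ⟨le_rfl, ht.1.le⟩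
  have hud : ∀ s ∈ Icc 0 t, u s ≤ d := fun s hs => h.u_init ▸ hanti h0t hs hs.1
  have huη : ∀ s ∈ Icc 0 r, η * d ≤ u s := fun s hs =>
    hur ▸ hanti ⟨hs.1, hs.2.trans hr.2⟩ hr hs.2
  have hr2 : r ≤ R2 := hr.2.trans ht.2
  -- the radius at which the level `η * d` is reached is not too small
  have hrlow : ((1 - η) * d) ^ (1 / q) * Λ ^ (-(1 / p)) ≤ r := by
    have h1 := h.fall_le hpq hN hΛ.le ⟨hr.1, hr2⟩ (fun s hs => by
      have h2 := hud s ⟨hs.1, hs.2.trans hr.2⟩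
      have h3 := huη s hs
      rw [trunc_of_mem (by linarith) (by linarith)]
      exact le_fstar hreg ⟨by linarith, h2⟩)
    rw [hur] at h1
    have h2 : (1 - η) * d ≤ Λ ^ (q - 1) * r ^ q := by linarith
    have h3 := rpow_le_rpow (mul_nonneg (by linarith) hd0.le) h2 (show 0 ≤ 1 / q by positivity)
    have h4 : (Λ ^ (q - 1) * r ^ q) ^ (1 / q) = Λ ^ (1 / p) * r := by
      rw [mul_rpow (by positivity) (rpow_nonneg hr.1 _), ← rpow_mul hΛ.le, ← rpow_mul hr.1,
        mul_one_div_cancel hq0.ne', rpow_one]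
      congr 2
      have := hpq.mul_eq_add
      field_simp
      linarith
    rw [h4] at h3
    rw [rpow_neg hΛ.le, ← div_eq_mul_inv, div_le_iff₀' (by positivity)]
    exact h3
  have hr0 : 0 < r := lt_of_lt_of_le (by
    have : 0 < 1 - η := by linarith
    positivity) hrlow
  have hvc := h.contV.mul h.contU
  have hPc : ContinuousOn
      (fun r => r ^ N * RadialSystem.en q N (trunc f D) u v r + ν * (v r * u r)) (Icc 0 R2) :=
    ((continuous_pow N).continuousOn.mul (h.contEn hg hq hN le_rfl)).add
      (continuousOn_const.mul hvc)
  -- lower bound for the Pohozaev functional at `r`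
  have hP1 := le_of_hasDerivAt_nonneg (f := fun r =>
      (r ^ N * RadialSystem.en q N (trunc f D) u v r + ν * (v r * u r)) -
        r ^ N * (c0 * Fint f (η * d) / N)) hr.1
    ((hPc.mono (Icc_subset_Icc_right hr2)).sub (by fun_prop))
    (fun x hx => (h.dPohozaev hg.cont hpq hN le_rfl ⟨hx.1, hx.2.le.trans hr2⟩).sub
      ((hasDerivAt_pow N x).mul_const _)) (fun x hx => by
      have hx' : x ∈ Icc 0 r := ⟨hx.1.le, hx.2.le⟩
      have h2 := hud x ⟨hx.1.le, hx.2.le.trans hr.2⟩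
      have h3 := huη x hx'
      rw [trunc_of_mem (by linarith) (by linarith),
        Fint_trunc (by linarith) (by linarith) (by linarith)]
      have h4 : Fint f (η * d) ≤ Fint f (u x) := Fint_mono_of_one_le hreg heq hηd h3
      have h5 : 0 ≤ f (u x) := heq.nonneg (by linarith)
      have h6 : f (u x) ≤ Λ := le_fstar hreg ⟨by linarith, h2⟩
      have h7 : f (u x) * u x ≤ L * Fint f (η * d) := by
        refine le_trans ?_ hΛF
        have : 0 ≤ u x := by linarith
        gcongr
      have h8 : c0 * Fint f (η * d) ≤ N * Fint f (u x) - ν * (f (u x) * u x) := by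
        have h9 : ν * (f (u x) * u x) ≤ max ν 0 * (L * Fint f (η * d)) := by
          refine (mul_le_mul_of_nonneg_right (le_max_left ν 0) ?_).trans ?_
          · exact mul_nonneg h5 (by linarith)
          · gcongr
        have := mul_le_mul_of_nonneg_left h4 hN0.le
        rw [hc0]
        linarith
      have h10 : (N : ℝ) * x ^ (N - 1) * (c0 * Fint f (η * d) / N) =
          x ^ (N - 1) * (c0 * Fint f (η * d)) := by field_simp
      rw [h10, ← mul_sub]
      exact mul_nonneg (pow_nonneg hx.1.le _) (by linarith))
  -- the functional does not decrease too much after `r`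
  have hP2 := le_of_hasDerivAt_nonneg (f := fun r =>
      (r ^ N * RadialSystem.en q N (trunc f D) u v r + ν * (v r * u r)) + r ^ N * (B / N)) hr.2
    ((hPc.mono (Icc_subset_Icc hr.1 ht.2)).add (by fun_prop))
    (fun x hx => (h.dPohozaev hg.cont hpq hN le_rfl
      ⟨hr0.trans hx.1, hx.2.le.trans ht.2⟩).add ((hasDerivAt_pow N x).mul_const _)) (fun x hx => by
      have h2 := hud x ⟨hr.1.trans hx.1.le, hx.2.le⟩
      have h10 : (N : ℝ) * x ^ (N - 1) * (B / N) = x ^ (N - 1) * B := by field_simp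
      rw [h10, ← mul_add]
      refine mul_nonneg (pow_nonneg (hr.1.trans hx.1.le) _) ?_
      rcases le_total (u x) 0 with h3 | h3
      · rw [hg.eq_zero _ h3]
        have := mul_nonneg hN0.le (hg.Fint_nonneg (u x))
        linarith
      · rw [trunc_of_mem (by linarith) (by linarith),
          Fint_trunc (by linarith) (by linarith) (by linarith)]
        linarith [hB _ h3])
  simp only [RadialSystem.en_of_v_eq_zero hq hvt, hvt, h.v_init, zero_pow (by omega : N ≠ 0)] at hP1 hP2
  have hend : t ^ N * Fint (trunc f D) (u t) ≤ R2 ^ N * Fint f 0 := by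
    have h1 := hg.Fint_le_zero_val hut.le
    have h2 := hg.Fint_nonneg (u t)
    rw [Fint_trunc (by linarith) le_rfl (by linarith)] at h1
    have := ht.2
    have := ht.1
    gcongr
  have htB : t ^ N * (B / N) ≤ R2 ^ N * (B / N) := by
    have := ht.2
    have := ht.1
    gcongr
  have hrB : 0 ≤ r ^ N * (B / N) := by positivity
  have hsum : r ^ N * (c0 * Fint f (η * d) / N) ≤ R2 ^ N * Fint f 0 + R2 ^ N * (B / N) := by
    linarith
  have hsum' : r ^ N * (c0 * Fint f (η * d)) ≤ N * (R2 ^ N * Fint f 0) + B * R2 ^ N := by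
    have := mul_le_mul_of_nonneg_left hsum hN0.le
    field_simp at this
    linarith
  refine absurd (hd.trans_le ?_) (not_lt.2 hsum')
  have hF2 : Λ * d / L ≤ Fint f (η * d) := by rw [div_le_iff₀' hL]; exact hΛF
  have h1η : 0 < 1 - η := by linarith
  calc c0 / L * ((1 - η) ^ (1 / q)) ^ N * (d * Λ * (d ^ (1 / q) * Λ ^ (-(1 / p))) ^ N)
      = (((1 - η) * d) ^ (1 / q) * Λ ^ (-(1 / p))) ^ N * (c0 * (Λ * d / L)) := by
        rw [mul_rpow h1η.le hd0.le, mul_pow, mul_pow, mul_pow]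
        ring
    _ ≤ r ^ N * (c0 * Fint f (η * d)) := by gcongr

theorem largeDataDecay (hpq : p.HolderConjugate q) (hN : 1 ≤ N) {R1 : ℝ} (hR1 : 0 ≤ R1)
    (hR12 : R1 < R2) (hreg : Freg f) (heq : Feq f) (h0 : Fzero p f)
    (hball : R1 = 0 → Fsubl p f ∨ Fsubc p N f) : LargeDataDecay q N R1 R2 f := by
  by_cases hB : ∃ B, ∀ s, 1 ≤ s → Fint f s ≤ B
  · obtain ⟨B, hB⟩ := hB
    exact largeDataDecay_of_bdd hpq hN hR1 hreg heq h0 hB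
  · have hF := tendsto_Fint hreg heq hB
    rcases hR1.eq_or_lt with h | h
    · subst h
      rcases hball rfl with hs | hs
      · exact largeDataDecay_of_subl hpq hN hreg heq h0 hF hs
      · exact largeDataDecay_of_subc hpq hN hR12.le hreg heq h0 hs
    · exact largeDataDecay_of_pos hpq hN h hreg heq h0 hF

end

theorem RadialSystem.exists_bounds {p q : ℝ} {N : ℕ} {g : ℝ → ℝ} {R1 R3 : ℝ}
    (hg : AdmissibleNonlin p g) (hpq : p.HolderConjugate q) (hN : 1 ≤ N) (hR1 : 0 ≤ R1)
    (hR3 : R1 < R3) {α β : ℝ} (hα : 0 < α) (hαβ : α ≤ β) :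
    ∃ ρ0 ρ1 : ℝ, 0 < ρ0 ∧ ρ0 < α ∧ β < ρ1 ∧ ∀ T ∈ Icc R1 R3, ∀ (d : ℝ) (u v : ℝ → ℝ),
      RadialSystem q N g R1 T d u v → α ≤ |d - 1| → |d - 1| ≤ β →
      ρ0 ^ 2 < (u T - 1) ^ 2 + v T ^ 2 ∧ (u T - 1) ^ 2 + v T ^ 2 < ρ1 ^ 2 := by
  obtain ⟨C, hC, hgC⟩ := hg.bdd
  have hq := hpq.symm.lt
  have hR3' : 0 < R3 := hR1.trans_lt hR3
  set K := (C * R3) ^ (q - 1) with hK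
  have hK0 : 0 < K := by positivity
  have hspeed : ∀ T ∈ Icc R1 R3, ∀ (d : ℝ) (u v : ℝ → ℝ), RadialSystem q N g R1 T d u v →
      |u T - d| ≤ K * (T - R1) := by
    intro T hT d u v h
    have h1 := h.abs_u_sub_le (K := K) (fun r hr => by
      rw [abs_phip hq]
      refine rpow_le_rpow (abs_nonneg _) ((h.abs_y_le hN hR1 hC.le hgC hr).trans ?_) (by linarith)
      have := hr.2.trans hT.2
      gcongr) (r := T) (s := R1) ⟨hT.1, le_rfl⟩ ⟨le_rfl, hT.1⟩
    rwa [h.u_init, abs_of_nonneg (sub_nonneg.2 hT.1)] at h1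
  obtain ⟨n, hn⟩ := exists_nat_ge (((N - 1 : ℕ) : ℝ) * q)
  set δ := α / (2 * K) with hδ
  have hδ0 : 0 < δ := by positivity
  set e0 := min (Fint g (1 + α / 2)) (Fint g (1 - α / 2))
  have he0 : 0 < e0 := lt_min (hg.Fint_pos (by linarith)) (hg.Fint_pos (by linarith))
  have hfar : ∀ x, α / 2 ≤ |x - 1| → e0 ≤ Fint g x := by
    intro x hx
    rcases le_total 1 x with h1 | h1
    · rw [abs_of_nonneg (by linarith)] at hx
      exact (min_le_left _ _).trans (hg.Fint_mono (by linarith) (by linarith))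
    · rw [abs_of_nonpos (by linarith)] at hx
      exact (min_le_right _ _).trans (hg.Fint_anti (by linarith) (by linarith))
  set s := R1 + δ with hs
  have hs0 : 0 < s := by linarith
  set e1 := s ^ n * e0 / R3 ^ n with he1
  have he1pos : 0 < e1 := by positivity
  -- the energy is small near the equilibrium
  obtain ⟨ε, hε, hεball⟩ : ∃ ε > 0, ∀ a b : ℝ, |a - 1| < ε → |b| < ε →
      |b / s ^ (N - 1)| ^ q / q + Fint g a < e1 := by
    have hc : Continuous fun z : ℝ × ℝ => |z.2 / s ^ (N - 1)| ^ q / q + Fint g z.1 := by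
      have h1 : Continuous fun x : ℝ => |x| ^ q / q :=
        continuous_iff_continuousAt.2 fun x => (hasDerivAt_abs_rpow_div hq x).continuousAt
      have h2 : Continuous fun z : ℝ × ℝ => z.2 / s ^ (N - 1) := by fun_prop
      exact (h1.comp h2).add ((continuous_Fint hg.cont).comp continuous_fst)
    have h3 := (hc.continuousAt (x := ((1 : ℝ), (0 : ℝ)))).eventually_lt
      (continuousAt_const (y := e1)) (by
        simpa [zero_rpow (show q ≠ 0 by linarith)] using he1pos)
    obtain ⟨ε, hε, hb⟩ := Metric.eventually_nhds_iff.1 h3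
    refine ⟨ε, hε, fun a b ha hb' => hb (y := (a, b)) ?_⟩
    rw [Prod.dist_eq, Real.dist_eq, Real.dist_eq]
    simpa using ⟨ha, hb'⟩
  set ρ0 := min (ε / 2) (α / 4) with hρ0
  have hρ0pos : 0 < ρ0 := by positivity
  set ρ1 := β + K * (R3 - R1) + C * R3 ^ N + ε + α with hρ1
  have hKR : 0 ≤ K * (R3 - R1) := mul_nonneg hK0.le (by linarith)
  have hCR : 0 < C * R3 ^ N := by positivity
  refine ⟨ρ0, ρ1, hρ0pos, ?_, by linarith, ?_⟩
  · have := min_le_right (ε / 2) (α / 4)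
    linarith
  intro T hT d u v h hdα hdβ
  have hsp := hspeed T hT d u v h
  have hT0 : 0 ≤ T := hR1.trans hT.1
  constructor
  · by_contra! hcon
    have hu : |u T - 1| ≤ ρ0 := abs_le_of_sq_le_sq (by nlinarith [sq_nonneg (v T)]) hρ0pos.le
    have hv : |v T| ≤ ρ0 := abs_le_of_sq_le_sq (by nlinarith [sq_nonneg (u T - 1)]) hρ0pos.le
    have h1 := min_le_left (ε / 2) (α / 4)
    have h2 := min_le_right (ε / 2) (α / 4)
    rcases le_total T s with h3 | h3
    · have h4 : K * (T - R1) ≤ α / 2 := by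
        have : K * (T - R1) ≤ K * δ := by
          have : T - R1 ≤ δ := by linarith
          gcongr
        have h5 : K * δ = α / 2 := by rw [hδ]; field_simp
        linarith
      have h6 := abs_sub_le d (u T) 1
      rw [abs_sub_comm d (u T)] at h6
      linarith
    · have h4 := h.pow_mul_en_mono hg hq hN hR1 hn (show R1 ≤ s by linarith) h3 le_rfl
      have h5 : e0 ≤ RadialSystem.en q N g u v s := by
        refine le_trans (hfar _ ?_) (RadialSystem.Fint_le_en hq s)
        have h6 := hspeed s ⟨by linarith, h3.trans hT.2⟩ d u v (h.mono_right h3)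
        have h5 : K * (s - R1) = α / 2 := by rw [hs, hδ]; field_simp; ring
        have h7 := abs_sub_le d (u s) 1
        rw [abs_sub_comm d (u s)] at h7
        linarith
      have h6 : RadialSystem.en q N g u v T < e1 := by
        refine lt_of_le_of_lt ?_ (hεball (u T) (v T) (by linarith) (by linarith))
        rw [RadialSystem.en]
        have h7 : |v T / T ^ (N - 1)| ≤ |v T / s ^ (N - 1)| := by
          rw [abs_div, abs_div, abs_of_pos (pow_pos hs0 (N - 1)),
            abs_of_nonneg (pow_nonneg hT0 (N - 1))]
          gcongr
        gcongr
      have h7 : T ^ n * RadialSystem.en q N g u v T < R3 ^ n * e1 := by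
        have : 0 < T := hs0.trans_le h3
        have h8 : T ^ n ≤ R3 ^ n := by have := hT.2; gcongr
        calc _ < T ^ n * e1 := by gcongr
          _ ≤ _ := by gcongr
      have h8 : R3 ^ n * e1 = s ^ n * e0 := by rw [he1]; field_simp
      have h9 : s ^ n * e0 ≤ s ^ n * RadialSystem.en q N g u v s := by gcongr
      linarith
  · have hu : |u T - 1| ≤ β + K * (R3 - R1) := by
      have h1 := abs_sub_le (u T) d 1
      have h2 : K * (T - R1) ≤ K * (R3 - R1) := by have := hT.2; gcongr
      linarith
    have hv : |v T| ≤ C * R3 ^ N := by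
      refine (h.abs_v_le hN hR1 hC.le hgC ⟨hT.1, le_rfl⟩).trans ?_
      have := hT.2
      gcongr
    have h1 : (u T - 1) ^ 2 ≤ (β + K * (R3 - R1)) ^ 2 := by rw [← sq_abs]; gcongr
    have h2 : v T ^ 2 ≤ (C * R3 ^ N) ^ 2 := by rw [← sq_abs]; gcongr
    have h3 : (β + K * (R3 - R1)) ^ 2 + (C * R3 ^ N) ^ 2 ≤
        (β + K * (R3 - R1) + C * R3 ^ N) ^ 2 := by
      nlinarith [mul_nonneg (show 0 ≤ β + K * (R3 - R1) by linarith) hCR.le]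
    have h4 : (β + K * (R3 - R1) + C * R3 ^ N) ^ 2 < ρ1 ^ 2 :=
      pow_lt_pow_left₀ (by linarith) (by linarith) two_ne_zero
    linarith

/-- `v / r ^ (N - 1)` clamped to `[-C r, C r]`. -/
noncomputable def clampedQuotient (N : ℕ) (C r v : ℝ) : ℝ :=
  max (-(C * r)) (min (v / r ^ (N - 1)) (C * r))

theorem abs_clampedQuotient_le {N : ℕ} {C r : ℝ} (hC : 0 ≤ C) (hr : 0 ≤ r) (v : ℝ) :
    |clampedQuotient N C r v| ≤ C * r := by
  have : 0 ≤ C * r := by positivity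
  exact abs_le.2 ⟨le_max_left _ _, max_le (by linarith) (min_le_right _ _)⟩

theorem clampedQuotient_eq {N : ℕ} {C r v : ℝ} (hN : 1 ≤ N) (hC : 0 ≤ C) (hr : 0 ≤ r)
    (hv : |v| ≤ C * r ^ N) : clampedQuotient N C r v = v / r ^ (N - 1) := by
  have h1 : |v / r ^ (N - 1)| ≤ C * r := by
    rw [abs_div, abs_of_nonneg (pow_nonneg hr _)]
    refine div_le_of_le_mul₀ (by positivity) (by positivity) ?_
    rwa [mul_assoc, ← pow_succ', show N - 1 + 1 = N by omega]
  rw [abs_le] at h1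
  rw [clampedQuotient, min_eq_left h1.2, max_eq_right h1.1]

theorem continuousOn_clampedQuotient (N : ℕ) {C : ℝ} (hC : 0 ≤ C) :
    ContinuousOn (Function.uncurry (clampedQuotient N C)) (Ici 0 ×ˢ univ) := by
  rintro ⟨r, v⟩ ⟨hr, -⟩
  have hr : 0 ≤ r := hr
  rcases hr.eq_or_lt with h0 | h0
  · have hval : Function.uncurry (clampedQuotient N C) (r, v) = 0 := by
      have := abs_clampedQuotient_le (N := N) hC hr v
      rw [← h0, mul_zero, abs_nonpos_iff] at this
      rw [← h0]; exact this
    rw [ContinuousWithinAt, hval]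
    refine squeeze_zero_norm' (a := fun z : ℝ × ℝ => C * z.1) ?_ ?_
    · filter_upwards [self_mem_nhdsWithin] with z hz
      exact abs_clampedQuotient_le hC hz.1 _
    · have : Continuous fun z : ℝ × ℝ => C * z.1 := by fun_prop
      have h1 := this.tendsto (r, v)
      simp only [← h0, mul_zero] at h1
      rw [← h0]
      exact h1.mono_left nhdsWithin_le_nhds
  · have h1 : ContinuousAt (fun z : ℝ × ℝ => z.2 / z.1 ^ (N - 1)) (r, v) :=
      continuousAt_snd.div (continuousAt_fst.pow _) (pow_pos h0 _).ne'
    have h2 : ContinuousAt (fun z : ℝ × ℝ => C * z.1) (r, v) := by fun_prop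
    have h3 : ContinuousAt (fun z : ℝ × ℝ => max (-(C * z.1)) (min (z.2 / z.1 ^ (N - 1)) (C * z.1)))
        (r, v) := h2.neg.max (h1.min h2)
    exact h3.continuousWithinAt

/-- Polar coordinates for the first order system around the equilibrium `(1, 0)`: the point is
`(1 + σ e^ℓ cos θ, -σ e^ℓ sin θ)`. -/
structure PolarSystem (σ q : ℝ) (N : ℕ) (g : ℝ → ℝ) (R1 T m : ℝ) (ℓ θ : ℝ → ℝ) : Prop where
  init : θ R1 = 0
  system : RadialSystem q N g R1 T (1 + σ * m) (fun r => 1 + σ * (exp (ℓ r) * cos (θ r)))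
    (fun r => -(σ * (exp (ℓ r) * sin (θ r))))
  deriv_angle : ∀ r ∈ Icc R1 T, HasDerivAt θ (σ * exp (-ℓ r) *
    (r ^ (N - 1) * g (1 + σ * (exp (ℓ r) * cos (θ r))) * cos (θ r) -
      phip q (-(σ * (exp (ℓ r) * sin (θ r))) / r ^ (N - 1)) * sin (θ r))) r

/-- The right-hand side of the polar system, modified outside the relevant region. -/
noncomputable def polarField (σ q : ℝ) (N : ℕ) (g : ℝ → ℝ) (C R1 R3 ℓ0 ℓ1 r : ℝ) (X : ℝ × ℝ) :
    ℝ × ℝ :=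
  let r' := max R1 (min r R3)
  let ℓ := max ℓ0 (min X.1 ℓ1)
  let W := r' ^ (N - 1) * g (1 + σ * (exp ℓ * cos X.2))
  let G := phip q (clampedQuotient N C r' (-(σ * (exp ℓ * sin X.2))))
  (σ * exp (-ℓ) * (G * cos X.2 + W * sin X.2), σ * exp (-ℓ) * (W * cos X.2 - G * sin X.2))

section

variable {p q : ℝ} {N : ℕ} {g : ℝ → ℝ} {R1 R3 : ℝ}

theorem continuous_polarField (σ : ℝ) (hg : Continuous g) (hq : 1 < q) {C : ℝ} (hC : 0 ≤ C)
    (hR1 : 0 ≤ R1) (ℓ0 ℓ1 : ℝ) :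
    Continuous (Function.uncurry (polarField σ q N g C R1 R3 ℓ0 ℓ1)) := by
  have hG : Continuous fun z : ℝ × ℝ × ℝ => phip q (clampedQuotient N C (max R1 (min z.1 R3))
      (-(σ * (exp (max ℓ0 (min z.2.1 ℓ1)) * sin z.2.2)))) := by
    refine (continuous_phip hq).comp ?_
    have := (continuousOn_clampedQuotient N hC).comp_continuous
      (f := fun z : ℝ × ℝ × ℝ => (max R1 (min z.1 R3),
        (-(σ * (exp (max ℓ0 (min z.2.1 ℓ1)) * sin z.2.2))))) (by fun_prop)
      (fun z => ⟨hR1.trans (le_max_left _ _), mem_univ _⟩)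
    exact this
  have hW : Continuous fun z : ℝ × ℝ × ℝ => (max R1 (min z.1 R3)) ^ (N - 1) *
      g (1 + σ * (exp (max ℓ0 (min z.2.1 ℓ1)) * cos z.2.2)) := by fun_prop
  have hE : Continuous fun z : ℝ × ℝ × ℝ => σ * exp (-max ℓ0 (min z.2.1 ℓ1)) := by fun_prop
  have hc : Continuous fun z : ℝ × ℝ × ℝ => cos z.2.2 := by fun_prop
  have hs : Continuous fun z : ℝ × ℝ × ℝ => sin z.2.2 := by fun_prop
  exact (hE.mul ((hG.mul hc).add (hW.mul hs))).prodMk (hE.mul ((hW.mul hc).sub (hG.mul hs)))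

theorem norm_polarField_le {σ : ℝ} (hσ : |σ| = 1) (hq : 1 < q) {C : ℝ} (hC : 0 ≤ C)
    (hg : ∀ s, |g s| ≤ C) (hR1 : 0 ≤ R1) (hR : R1 ≤ R3) (ℓ0 ℓ1 r : ℝ) (X : ℝ × ℝ) :
    ‖polarField σ q N g C R1 R3 ℓ0 ℓ1 r X‖ ≤
      exp (-ℓ0) * ((C * R3) ^ (q - 1) + R3 ^ (N - 1) * C) := by
  have hr0 : 0 ≤ max R1 (min r R3) := hR1.trans (le_max_left _ _)
  have hrR : max R1 (min r R3) ≤ R3 := max_le hR (min_le_right _ _)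
  have hE : |σ * exp (-max ℓ0 (min X.1 ℓ1))| ≤ exp (-ℓ0) := by
    rw [abs_mul, hσ, one_mul, abs_of_pos (exp_pos _)]
    exact exp_le_exp.2 (neg_le_neg (le_max_left _ _))
  have hW : ∀ s, |max R1 (min r R3) ^ (N - 1) * g s| ≤ R3 ^ (N - 1) * C := fun s => by
    rw [abs_mul, abs_of_nonneg (pow_nonneg hr0 _)]
    have := hg s
    have := pow_le_pow_left₀ hr0 hrR (N - 1)
    have := pow_nonneg (hR1.trans hR) (N - 1)
    gcongr
  have hG : ∀ v, |phip q (clampedQuotient N C (max R1 (min r R3)) v)| ≤ (C * R3) ^ (q - 1) :=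
    fun v => by
      rw [abs_phip hq]
      refine rpow_le_rpow (abs_nonneg _) ((abs_clampedQuotient_le hC hr0 v).trans ?_) (by linarith)
      gcongr
  have hmul : ∀ a b c d A B : ℝ, |a| ≤ A → |b| ≤ B → |c| ≤ 1 → |d| ≤ 1 →
      |a * c + b * d| ≤ A + B := by
    intro a b c d A B ha hb hc hd
    refine (abs_add_le _ _).trans (add_le_add ?_ ?_) <;> rw [abs_mul]
    · exact (mul_le_of_le_one_right (abs_nonneg _) hc).trans ha
    · exact (mul_le_of_le_one_right (abs_nonneg _) hd).trans hb
  rw [Prod.norm_def, max_le_iff]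
  constructor
  · rw [Real.norm_eq_abs, polarField, abs_mul]
    refine mul_le_mul hE ?_ (abs_nonneg _) (exp_pos _).le
    exact hmul _ _ _ _ _ _ (hG _) (hW _) (abs_cos_le_one _) (abs_sin_le_one _)
  · rw [Real.norm_eq_abs, polarField, abs_mul]
    refine mul_le_mul hE ?_ (abs_nonneg _) (exp_pos _).le
    have := hmul _ _ _ (-sin X.2) _ _ (hW (1 + σ * (exp (max ℓ0 (min X.1 ℓ1)) * cos X.2)))
      (hG (-(σ * (exp (max ℓ0 (min X.1 ℓ1)) * sin X.2)))) (abs_cos_le_one X.2)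
      (by rw [abs_neg]; exact abs_sin_le_one _)
    rw [mul_neg, ← sub_eq_add_neg] at this
    linarith

theorem PolarSystem.of_isSol {σ : ℝ} (hσ : σ * σ = 1) (hN : 1 ≤ N) {C : ℝ} (hC : 0 ≤ C)
    (hg : ∀ s, |g s| ≤ C) (hR1 : 0 ≤ R1) {ℓ0 ℓ1 T m : ℝ} (hTR : T ≤ R3) (hm : 0 < m)
    {X : ℝ → ℝ × ℝ}
    (hX : IsSol (polarField σ q N g C R1 R3 ℓ0 ℓ1) R1 T X (log m, 0))
    (hℓ : ∀ r ∈ Icc R1 T, (X r).1 ∈ Icc ℓ0 ℓ1) :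
    PolarSystem σ q N g R1 T m (fun r => (X r).1) (fun r => (X r).2) := by
  set ℓ := fun r => (X r).1 with hℓdef
  set θ := fun r => (X r).2 with hθdef
  set u := fun r => 1 + σ * (exp (ℓ r) * cos (θ r)) with hu
  set v := fun r => -(σ * (exp (ℓ r) * sin (θ r))) with hv
  have hfield : ∀ r ∈ Icc R1 T, polarField σ q N g C R1 R3 ℓ0 ℓ1 r (X r) =
      (σ * exp (-ℓ r) * (phip q (clampedQuotient N C r (v r)) * cos (θ r) +
        r ^ (N - 1) * g (u r) * sin (θ r)),
      σ * exp (-ℓ r) * (r ^ (N - 1) * g (u r) * cos (θ r) -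
        phip q (clampedQuotient N C r (v r)) * sin (θ r))) := by
    intro r hr
    have h1 := hℓ r hr
    rw [polarField]
    simp only [min_eq_left (hr.2.trans hTR), max_eq_right hr.1, min_eq_left h1.2,
      max_eq_right h1.1, hu, hv, hℓdef, hθdef]
  have dℓ : ∀ r ∈ Icc R1 T, HasDerivAt ℓ (σ * exp (-ℓ r) *
      (phip q (clampedQuotient N C r (v r)) * cos (θ r) +
        r ^ (N - 1) * g (u r) * sin (θ r))) r := by
    intro r hr
    have := hX.2 r hr
    rw [hfield r hr] at this
    exact hasFDerivAt_fst.comp_hasDerivAt r this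
  have dθ : ∀ r ∈ Icc R1 T, HasDerivAt θ (σ * exp (-ℓ r) *
      (r ^ (N - 1) * g (u r) * cos (θ r) -
        phip q (clampedQuotient N C r (v r)) * sin (θ r))) r := by
    intro r hr
    have := hX.2 r hr
    rw [hfield r hr] at this
    exact hasFDerivAt_snd.comp_hasDerivAt r this
  have hθ0 : θ R1 = 0 := by simp [hθdef, hX.1]
  have hℓ0 : exp (ℓ R1) = m := by simp [hℓdef, hX.1, exp_log hm]
  have hexp : ∀ r, exp (ℓ r) * exp (-ℓ r) = 1 := fun r => by rw [← exp_add]; simp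
  have du' : ∀ r ∈ Icc R1 T, HasDerivAt u (phip q (clampedQuotient N C r (v r))) r := by
    intro r hr
    refine ((((dℓ r hr).exp.mul (dθ r hr).cos).const_mul σ).const_add 1).congr_deriv ?_
    linear_combination (phip q (clampedQuotient N C r (v r)) * σ * σ *
        (cos (θ r) ^ 2 + sin (θ r) ^ 2)) * hexp r + (phip q (clampedQuotient N C r (v r)) *
        (cos (θ r) ^ 2 + sin (θ r) ^ 2)) * hσ +
        phip q (clampedQuotient N C r (v r)) * cos_sq_add_sin_sq (θ r)
  have dv : ∀ r ∈ Icc R1 T, HasDerivAt v (-(r ^ (N - 1) * g (u r))) r := by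
    intro r hr
    refine (((dℓ r hr).exp.mul (dθ r hr).sin).const_mul σ).fun_neg.congr_deriv ?_
    linear_combination -(r ^ (N - 1) * g (u r) * σ * σ *
        (cos (θ r) ^ 2 + sin (θ r) ^ 2)) * hexp r - (r ^ (N - 1) * g (u r) *
        (cos (θ r) ^ 2 + sin (θ r) ^ 2)) * hσ -
        r ^ (N - 1) * g (u r) * cos_sq_add_sin_sq (θ r)
  have hv0 : v R1 = 0 := by simp [hv, hθ0]
  have hq' : ∀ r ∈ Icc R1 T, clampedQuotient N C r (v r) = v r / r ^ (N - 1) := fun r hr =>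
    clampedQuotient_eq hN hC (hR1.trans hr.1) (abs_flux_le hN hR1 hC hv0 hr.1
      (fun s hs => dv s ⟨hs.1, hs.2.trans hr.2⟩) fun _ _ => hg _)
  refine ⟨hθ0, ⟨?_, hv0, fun r hr => ?_, dv⟩, fun r hr => ?_⟩
  · simp only [hθ0, hℓ0, cos_zero, mul_one]
  · have := du' r hr
    rwa [hq' r hr] at this
  · have := dθ r hr
    rwa [hq' r hr] at this

theorem PolarSystem.sq_add_sq {σ : ℝ} (hσ : σ * σ = 1) (x y : ℝ) :
    (1 + σ * (exp x * cos y) - 1) ^ 2 + (-(σ * (exp x * sin y))) ^ 2 = exp x ^ 2 := by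
  linear_combination (exp x ^ 2 * (cos y ^ 2 + sin y ^ 2)) * hσ +
    exp x ^ 2 * cos_sq_add_sin_sq y

theorem PolarSystem.exists_angle_eq {σ : ℝ} (hσ : σ * σ = 1) (hg : AdmissibleNonlin p g)
    (hpq : p.HolderConjugate q) (hN : 1 ≤ N) (hR1 : 0 ≤ R1) {T1 : ℝ} (hT1 : T1 ∈ Icc R1 R3)
    (hR : R1 < R3) {α β c : ℝ} (hα : 0 < α) (hαβ : α ≤ β)
    (hcα : ∀ ℓ θ, PolarSystem σ q N g R1 R3 α ℓ θ → c < θ T1)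
    (hcβ : ∀ ℓ θ, PolarSystem σ q N g R1 R3 β ℓ θ → θ T1 < c) :
    ∃ m ∈ Icc α β, ∃ ℓ θ, PolarSystem σ q N g R1 R3 m ℓ θ ∧ θ T1 = c := by
  have hσ1 : |σ| = 1 := by
    have h1 : |σ| * |σ| = 1 := by rw [← abs_mul, hσ, abs_one]
    nlinarith [abs_nonneg σ]
  obtain ⟨ρ0, ρ1, hρ0, hρα, hβρ, hρ⟩ := RadialSystem.exists_bounds hg hpq hN hR1 hR hα hαβ
  obtain ⟨C, hC, hgC⟩ := hg.bdd
  have hρ1 : 0 < ρ1 := (hα.trans_le hαβ).trans hβρ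
  set H := polarField σ q N g C R1 R3 (log ρ0) (log ρ1)
  have key : ∀ m ∈ Icc α β, ∀ X, IsSol H R1 R3 X (log m, 0) →
      PolarSystem σ q N g R1 R3 m (fun r => (X r).1) (fun r => (X r).2) := by
    intro m hm X hX
    have hm0 : 0 < m := hα.trans_le hm.1
    have hdm : |1 + σ * m - 1| = m := by
      rw [add_sub_cancel_left, abs_mul, hσ1, one_mul, abs_of_pos hm0]
    have hbound : ∀ t ∈ Icc R1 R3, (∀ r ∈ Icc R1 t, (X r).1 ∈ Icc (log ρ0) (log ρ1)) →
        log ρ0 < (X t).1 ∧ (X t).1 < log ρ1 := by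
      intro t ht hℓ
      have hP := PolarSystem.of_isSol (T := t) hσ hN hC.le hgC hR1 ht.2 hm0
        ⟨hX.1, fun r hr => hX.2 r ⟨hr.1, hr.2.trans ht.2⟩⟩ hℓ
      have h1 := hρ t ht _ _ _ hP.system (by rw [hdm]; exact hm.1) (by rw [hdm]; exact hm.2)
      simp only [PolarSystem.sq_add_sq hσ] at h1
      rw [sq_lt_sq₀ hρ0.le (exp_pos _).le, sq_lt_sq₀ (exp_pos _).le hρ1.le] at h1
      exact ⟨(log_lt_iff_lt_exp hρ0).2 h1.1, (lt_log_iff_exp_lt hρ1).2 h1.2⟩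
    have hcont : ContinuousOn (fun r => (X r).1) (Icc R1 R3) := fun r hr =>
      (continuous_fst.continuousAt.comp (hX.2 r hr).continuousAt).continuousWithinAt
    have hinit : log ρ0 < (X R1).1 ∧ (X R1).1 < log ρ1 := by
      rw [hX.1]
      exact ⟨log_lt_log hρ0 (hρα.trans_le hm.1), log_lt_log hm0 (hm.2.trans_lt hβρ)⟩
    refine PolarSystem.of_isSol hσ hN hC.le hgC hR1 le_rfl hm0 hX fun b hb => ?_
    by_contra hcon
    obtain ⟨t, ht, ht0, htlt⟩ := exists_first_zero
      (f := fun r => max (log ρ0 - (X r).1) ((X r).1 - log ρ1)) hb.1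
      (by
        have := hcont.mono (Icc_subset_Icc_right hb.2)
        fun_prop)
      (max_lt (by linarith) (by linarith)) (by
        by_contra! h
        rw [max_lt_iff] at h
        exact hcon ⟨by linarith, by linarith⟩)
    have h1 := hbound t ⟨ht.1.le, ht.2.trans hb.2⟩ fun r hr => by
      have h2 : max (log ρ0 - (X r).1) ((X r).1 - log ρ1) ≤ 0 := by
        rcases hr.2.eq_or_lt with h | h
        · rw [h]; exact ht0.le
        · exact (htlt r ⟨hr.1, h⟩).le
      rw [max_le_iff] at h2
      exact ⟨by linarith, by linarith⟩
    have h2 : max (log ρ0 - (X t).1) ((X t).1 - log ρ1) < 0 :=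
      max_lt (by linarith) (by linarith)
    linarith
  have hbd := norm_polarField_le (N := N) (R3 := R3) hσ1 hpq.symm.lt hC.le hgC hR1 hR.le
    (log ρ0) (log ρ1)
  -- the initial datum is extended continuously below `α`
  obtain ⟨m, hm, X, hX, hXc⟩ := exists_isSol_eq
    (continuous_polarField σ hg.cont hpq.symm.lt hC.le hR1 (log ρ0) (log ρ1)) hbd hT1
    (x0 := fun m => (log (max m α), 0)) (by
      refine Continuous.prodMk (Continuous.log (by fun_prop) fun m => ?_) continuous_const
      exact (lt_max_of_lt_right hα).ne') hαβ (φ := Prod.snd) continuous_snd (c := c)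
    (fun X hX => hcα _ _ (key α ⟨le_rfl, hαβ⟩ X (by rwa [max_self] at hX)))
    (fun X hX => hcβ _ _ (key β ⟨hαβ, le_rfl⟩ X (by rwa [max_eq_left hαβ] at hX)))
  rw [max_eq_left hm.1] at hX
  exact ⟨m, hm, _, _, key m hm X hX, hXc⟩

end

/-- A continuous function which can only cross the level `c` upwards stays above it. -/
theorem lt_of_le_of_upcrossing {θ : ℝ → ℝ} {a b c : ℝ} (hθ : ContinuousOn θ (Icc a b))
    (hup : ∀ x ∈ Icc a b, θ x = c → ∃ d > 0, HasDerivAt θ d x) (ha : c ≤ θ a) (hab : a < b) :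
    c < θ b := by
  obtain ⟨x', hx', hcx'⟩ : ∃ x ∈ Ico a b, c < θ x := by
    rcases ha.lt_or_eq with h | h
    · exact ⟨a, ⟨le_rfl, hab⟩, h⟩
    · obtain ⟨d, hd, hder⟩ := hup a ⟨le_rfl, hab.le⟩ h.symm
      have h1 := (hasDerivAt_iff_tendsto_slope.1 hder).eventually (eventually_gt_nhds hd)
      have h2 : ∀ᶠ y in 𝓝[>] a, 0 < slope θ a y :=
        h1.filter_mono (nhdsWithin_mono _ fun y hy => ne_of_gt hy)
      obtain ⟨y, hy, hya⟩ := (h2.and (Ioo_mem_nhdsGT hab)).exists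
      refine ⟨y, ⟨hya.1.le, hya.2⟩, ?_⟩
      rw [slope_def_field, div_pos_iff_of_pos_right (by linarith [hya.1])] at hy
      linarith
  by_contra! hb
  obtain ⟨t, ht, ht0, htlt⟩ := exists_first_zero (f := fun r => c - θ r) hx'.2.le
    (continuousOn_const.sub (hθ.mono (Icc_subset_Icc_left hx'.1))) (by linarith) (by linarith)
  obtain ⟨d, hd, hder⟩ := hup t ⟨hx'.1.trans ht.1.le, ht.2⟩ (by linarith)
  have h1 := (hasDerivAt_iff_tendsto_slope.1 hder).eventually (eventually_gt_nhds hd)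
  have h2 : ∀ᶠ y in 𝓝[<] t, 0 < slope θ t y :=
    h1.filter_mono (nhdsWithin_mono _ fun y hy => ne_of_lt hy)
  obtain ⟨y, hy, hya⟩ := (h2.and (Ioo_mem_nhdsLT ht.1)).exists
  have h3 := htlt y ⟨hya.1.le, hya.2⟩
  rw [slope_def_field, div_pos_iff] at hy
  rcases hy with hy | hy <;> linarith [hya.2]

theorem cos_pi_div_two_add_int_mul_pi (n : ℤ) : cos (π / 2 + n * π) = 0 :=
  cos_eq_zero_iff.2 ⟨n, by ring⟩

theorem cos_eq_zero_iff_pi_div_two_add {x : ℝ} : cos x = 0 ↔ ∃ n : ℤ, x = π / 2 + n * π := by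
  rw [cos_eq_zero_iff]
  exact exists_congr fun n => by rw [show (2 * (n : ℝ) + 1) * π / 2 = π / 2 + n * π by ring]

namespace PolarSystem

variable {σ q : ℝ} {N : ℕ} {g : ℝ → ℝ} {R1 T m : ℝ} {ℓ θ : ℝ → ℝ}

theorem cont_angle (h : PolarSystem σ q N g R1 T m ℓ θ) : ContinuousOn θ (Icc R1 T) := fun r hr =>
  (h.deriv_angle r hr).continuousAt.continuousWithinAt

theorem deriv_angle_pos (h : PolarSystem σ q N g R1 T m ℓ θ) (hσ : σ * σ = 1) (hq : 1 < q)
    (hR1 : 0 ≤ R1) {x : ℝ} (hx : x ∈ Icc R1 T) (hc : cos (θ x) = 0) :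
    ∃ d > 0, HasDerivAt θ d x := by
  have hxR : R1 < x := by
    refine lt_of_le_of_ne hx.1 fun h1 => ?_
    rw [← h1, h.init, cos_zero] at hc
    exact one_ne_zero hc
  have hr : 0 < x ^ (N - 1) := pow_pos (hR1.trans_lt hxR) _
  have hs : sin (θ x) ≠ 0 := fun h1 => by
    have := sin_sq_add_cos_sq (θ x)
    rw [hc, h1] at this
    norm_num at this
  have hσ0 : σ ≠ 0 := fun h1 => by simp [h1] at hσ
  refine ⟨_, ?_, h.deriv_angle x hx⟩
  set v := -(σ * (exp (ℓ x) * sin (θ x))) with hv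
  have hv0 : v ≠ 0 := neg_ne_zero.2 (mul_ne_zero hσ0 (mul_ne_zero (exp_pos _).ne' hs))
  have h1 : σ * exp (-ℓ x) * (x ^ (N - 1) * g (1 + σ * (exp (ℓ x) * cos (θ x))) * cos (θ x) -
      phip q (v / x ^ (N - 1)) * sin (θ x)) = exp (-ℓ x) ^ 2 * (x ^ (N - 1) *
        (phip q (v / x ^ (N - 1)) * (v / x ^ (N - 1)))) := by
    have h2 : x ^ (N - 1) * (phip q (v / x ^ (N - 1)) * (v / x ^ (N - 1))) =
        phip q (v / x ^ (N - 1)) * v := by field_simp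
    have h3 : exp (-ℓ x) * exp (ℓ x) = 1 := by rw [← exp_add]; simp
    rw [h2, hc]
    linear_combination (exp (-ℓ x) * phip q (v / x ^ (N - 1)) * (σ * sin (θ x))) * h3
      - exp (-ℓ x) ^ 2 * phip q (v / x ^ (N - 1)) * hv
  rw [h1, phip_mul_self hq]
  have : 0 < |v / x ^ (N - 1)| := abs_pos.2 (div_ne_zero hv0 hr.ne')
  positivity

theorem lt_angle_of_le (h : PolarSystem σ q N g R1 T m ℓ θ) (hσ : σ * σ = 1) (hq : 1 < q)
    (hR1 : 0 ≤ R1) (n : ℤ) {x y : ℝ} (hx : R1 ≤ x) (hxy : x < y) (hy : y ≤ T)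
    (hn : π / 2 + n * π ≤ θ x) : π / 2 + n * π < θ y := by
  refine lt_of_le_of_upcrossing (h.cont_angle.mono (Icc_subset_Icc hx hy)) (fun t ht htc => ?_)
    hn hxy
  exact h.deriv_angle_pos hσ hq hR1 ⟨hx.trans ht.1, ht.2.trans hy⟩
    (htc ▸ cos_pi_div_two_add_int_mul_pi n)

theorem neg_pi_div_two_lt_angle (h : PolarSystem σ q N g R1 T m ℓ θ) (hσ : σ * σ = 1) (hq : 1 < q)
    (hR1 : 0 ≤ R1) {x : ℝ} (hx : x ∈ Icc R1 T) : -(π / 2) < θ x := by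
  rcases hx.1.eq_or_lt with h1 | h1
  · rw [← h1, h.init]; linarith [pi_pos]
  · have := h.lt_angle_of_le hσ hq hR1 (-1) le_rfl h1 hx.2 (by
      rw [h.init]; push_cast; linarith [pi_pos])
    push_cast at this
    linarith

theorem encard_cos_eq_zero (h : PolarSystem σ q N g R1 T m ℓ θ) (hσ : σ * σ = 1) (hq : 1 < q)
    (hR1 : 0 ≤ R1) {R2 : ℝ} (hR12 : R1 < R2) (hR2 : R2 ≤ T) {j : ℕ} (hj : θ R2 = j * π) :
    {x ∈ Ioo R1 R2 | cos (θ x) = 0}.encard = j := by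
  have hpi := pi_pos
  have hex : ∀ i : Fin j, ∃ x ∈ Ioo R1 R2, θ x = π / 2 + ((i : ℕ) : ℤ) * π := by
    intro i
    have hij : ((i : ℕ) : ℝ) + 1 ≤ j := by exact_mod_cast i.2
    refine intermediate_value_Ioo hR12.le (h.cont_angle.mono (Icc_subset_Icc_right hR2)) ⟨?_, ?_⟩
    · rw [h.init]; positivity
    · rw [hj]; push_cast; nlinarith
  choose x hx hxθ using hex
  have hinj : Function.Injective x := by
    intro a b hab
    have h1 := hxθ a
    rw [hab, hxθ b] at h1
    have h2 : (((b : ℕ) : ℤ) : ℝ) = ((a : ℕ) : ℤ) := by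
      have := add_left_cancel h1
      exact mul_right_cancel₀ hpi.ne' this
    exact Fin.ext (by exact_mod_cast h2.symm)
  have hS : {x ∈ Ioo R1 R2 | cos (θ x) = 0} = range x := by
    ext y
    constructor
    · rintro ⟨hy, hc⟩
      obtain ⟨n, hn⟩ := cos_eq_zero_iff_pi_div_two_add.1 hc
      have h1 := h.neg_pi_div_two_lt_angle hσ hq hR1 (x := y) ⟨hy.1.le, hy.2.le.trans hR2⟩
      have h2 := h.lt_angle_of_le hσ hq hR1 n hy.1.le hy.2 hR2 hn.ge
      have h3 : (-1 : ℝ) < n := by rw [hn] at h1; nlinarith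
      have h4 : (n : ℝ) < j := by rw [hj] at h2; nlinarith
      have h3' : -1 < n := by exact_mod_cast h3
      have h4' : n < j := by exact_mod_cast h4
      obtain ⟨i, rfl⟩ := Int.eq_ofNat_of_zero_le (show 0 ≤ n by omega)
      have hi : i < j := by exact_mod_cast h4'
      refine ⟨⟨i, hi⟩, ?_⟩
      have h5 := hxθ ⟨i, hi⟩
      rcases lt_trichotomy (x ⟨i, hi⟩) y with h6 | h6 | h6
      · have := h.lt_angle_of_le hσ hq hR1 i (hx ⟨i, hi⟩).1.le h6 (hy.2.le.trans hR2) h5.ge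
        exact absurd hn this.ne'
      · exact h6
      · have := h.lt_angle_of_le hσ hq hR1 i hy.1.le h6 ((hx ⟨i, hi⟩).2.le.trans hR2) hn.ge
        exact absurd h5 this.ne'
    · rintro ⟨i, rfl⟩
      exact ⟨hx i, hxθ i ▸ cos_pi_div_two_add_int_mul_pi _⟩
  rw [hS, ← image_univ, hinj.encard_image, encard_univ]
  simp

end PolarSystem

theorem phip_mul (p a b : ℝ) : phip p (a * b) = phip p a * phip p b := by
  rw [phip, phip, phip, abs_mul, mul_rpow (abs_nonneg _) (abs_nonneg _)]
  ring

theorem mul_phip_le {p : ℝ} (hp : 1 < p) (a b : ℝ) :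
    p * (a * phip p b) ≤ |a| ^ p + (p - 1) * |b| ^ p := by
  have hpq := Real.HolderConjugate.conjExponent hp
  have h1 := Real.young_inequality a (phip p b) hpq
  have h2 : |phip p b| ^ p.conjExponent = |b| ^ p := by
    rw [abs_phip hp, ← rpow_mul (abs_nonneg _), hpq.sub_one_mul_conj]
  have h3 : p / p.conjExponent = p - 1 := by
    rw [Real.conjExponent]
    have : p - 1 ≠ 0 := by linarith
    field_simp
  rw [h2] at h1
  have h4 := mul_le_mul_of_nonneg_left h1 (show 0 ≤ p by linarith)
  have h5 : p * (|a| ^ p / p + |b| ^ p / p.conjExponent) =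
      |a| ^ p + p / p.conjExponent * |b| ^ p := by
    field_simp
  rwa [h5, h3] at h4

/-- Picone identity: `w W - |w / z|^p z v` increases as long as `z` does not vanish. -/
theorem exists_hasDerivAt_picone {p : ℝ} (hp : 1 < p) {lam A G r z' w' : ℝ} {z v w W : ℝ → ℝ}
    (hA : 0 < A) (hz : HasDerivAt z z' r) (hv : HasDerivAt v (-(A * G)) r)
    (hw : HasDerivAt w w' r) (hW : HasDerivAt W (-(lam * A * phip p (w r))) r)
    (hvz : v r = A * phip p z') (hWw : W r = A * phip p w') (hz0 : z r ≠ 0) (hw0 : w r ≠ 0)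
    (hG : lam * |z r| ^ p < G * z r) :
    ∃ d > 0, HasDerivAt (fun s => w s * W s - |w s / z s| ^ p * (z s * v s)) d r := by
  have h1 := ((hasDerivAt_abs_rpow_div hp (w r / z r)).comp r (hw.div hz hz0)).const_mul p
  have h2 : HasDerivAt (fun s => |w s / z s| ^ p)
      (p * (phip p (w r / z r) * ((w' * z r - w r * z') / z r ^ 2))) r := by
    refine h1.congr_of_eventuallyEq (Eventually.of_forall fun s => ?_)
    simp only [Function.comp, Pi.div_apply]
    field_simp
  refine ⟨_, ?_, (hw.mul hW).sub (h2.mul (hz.mul hv))⟩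
  set ζ := w r / z r with hζ
  have hwζ : w r = ζ * z r := by rw [hζ]; field_simp
  have hζ0 : ζ ≠ 0 := div_ne_zero hw0 hz0
  have e1 := phip_mul_self hp ζ
  have e2 := phip_mul_self hp w'
  have e3 := phip_mul_self hp z'
  have e4 := phip_mul_self hp (w r)
  have e5 : |w r| ^ p = |ζ| ^ p * |z r| ^ p := by
    rw [hwζ, abs_mul, mul_rpow (abs_nonneg _) (abs_nonneg _)]
  have e6 : |ζ * z'| ^ p = |ζ| ^ p * |z'| ^ p := by
    rw [abs_mul, mul_rpow (abs_nonneg _) (abs_nonneg _)]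
  have hy := mul_phip_le hp w' (ζ * z')
  rw [phip_mul, e6] at hy
  have hpos : 0 < |ζ| ^ p := rpow_pos_of_pos (abs_pos.2 hζ0) p
  have h3 : 0 < A * (|w'| ^ p + (p - 1) * (|ζ| ^ p * |z'| ^ p) -
      p * (w' * (phip p ζ * phip p z')) + |ζ| ^ p * (G * z r - lam * |z r| ^ p)) := by
    have := mul_pos hpos (sub_pos.2 hG)
    exact mul_pos hA (by linarith)
  refine h3.trans_eq ?_
  have h4 : (w' * z r - w r * z') / z r ^ 2 = (w' - ζ * z') / z r := by
    rw [hwζ]; field_simp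
  have h5 : w r * (lam * A * phip p (w r)) = lam * A * (|ζ| ^ p * |z r| ^ p) := by
    rw [← e5, ← e4]; ring
  have h6 : p * (phip p ζ * ((w' - ζ * z') / z r)) * (z r * v r) =
      p * (phip p ζ * (w' - ζ * z')) * v r := by field_simp
  rw [h4, h6, mul_neg, h5, hvz, hWw, ← e1, ← e2, ← e3]
  ring

theorem picone_eventually_ge {p : ℝ} (hp : 1 < p) {lam a b : ℝ} {A G z z' v w w' W : ℝ → ℝ}
    (hab : a < b) (hA : ∀ r ∈ Ioo a b, 0 < A r)
    (hzc : ContinuousOn z (Ico a b)) (hvc : ContinuousOn v (Ico a b))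
    (hwc : ContinuousOn w (Ico a b)) (hWc : ContinuousOn W (Ico a b))
    (hz : ∀ r ∈ Ioo a b, HasDerivAt z (z' r) r)
    (hv : ∀ r ∈ Ioo a b, HasDerivAt v (-(A r * G r)) r)
    (hw : ∀ r ∈ Ioo a b, HasDerivAt w (w' r) r)
    (hW : ∀ r ∈ Ioo a b, HasDerivAt W (-(lam * A r * phip p (w r))) r)
    (hvz : ∀ r ∈ Ioo a b, v r = A r * phip p (z' r))
    (hWw : ∀ r ∈ Ioo a b, W r = A r * phip p (w' r))
    (hz0 : ∀ r ∈ Ico a b, z r ≠ 0) (hw0 : ∀ r ∈ Ioo a b, w r ≠ 0)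
    (hG : ∀ r ∈ Ioo a b, lam * |z r| ^ p < G r * z r)
    (ha : w a = 0 ∨ W a = 0 ∧ v a = 0) :
    ∃ c > 0, ∀ᶠ r in 𝓝[<] b, c ≤ w r * W r - |w r / z r| ^ p * (z r * v r) := by
  set B := fun r => w r * W r - |w r / z r| ^ p * (z r * v r) with hB
  have hBc : ContinuousOn B (Ico a b) := (hwc.mul hWc).sub
    (((hwc.div hzc hz0).abs.rpow_const fun _ _ => Or.inr (by linarith)).mul (hzc.mul hvc))
  have hmono : StrictMonoOn B (Ico a b) := by
    refine strictMonoOn_of_deriv_pos (convex_Ico a b) hBc fun r hr => ?_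
    rw [interior_Ico] at hr
    obtain ⟨d, hd, hder⟩ := exists_hasDerivAt_picone hp (hA r hr) (hz r hr) (hv r hr) (hw r hr)
      (hW r hr) (hvz r hr) (hWw r hr) (hz0 r ⟨hr.1.le, hr.2⟩) (hw0 r hr) (hG r hr)
    rw [hder.deriv]
    exact hd
  have hBa : B a = 0 := by
    rcases ha with h | ⟨h, h'⟩
    · simp [hB, h, zero_rpow (show p ≠ 0 by linarith)]
    · simp [hB, h, h']
  have hm : (a + b) / 2 ∈ Ico a b := ⟨by linarith, by linarith⟩
  refine ⟨B ((a + b) / 2), ?_, ?_⟩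
  · rw [gt_iff_lt, ← hBa]
    exact hmono ⟨le_rfl, hab⟩ hm (by linarith)
  · filter_upwards [Ioo_mem_nhdsLT hm.2] with r hr
    exact (hmono hm ⟨hm.1.trans hr.1.le, hr.2⟩ hr.1).le

/-- A radial Neumann eigenfunction of the `p`-Laplacian. -/
structure NeumannEigen (p : ℝ) (N : ℕ) (R1 R2 lam : ℝ) (w : ℝ → ℝ) : Prop where
  diff : ∀ x ∈ Icc R1 R2, DifferentiableAt ℝ w x
  left : deriv w R1 = 0
  right : deriv w R2 = 0
  flux : ContinuousOn (fun x => x ^ (N - 1) * phip p (deriv w x)) (Icc R1 R2)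
  ode : ∀ x ∈ Ioc R1 R2, HasDerivAt (fun t => t ^ (N - 1) * phip p (deriv w t))
    (-(lam * x ^ (N - 1) * phip p (w x))) x

namespace PolarSystem

variable {p σ q : ℝ} {N : ℕ} {g : ℝ → ℝ} {R1 T m : ℝ} {ℓ θ : ℝ → ℝ}

theorem cos_ne_zero_of_mem {x : ℝ} {n : ℤ} (h1 : π / 2 + (n - 1 : ℤ) * π < x)
    (h2 : x < π / 2 + n * π) : cos x ≠ 0 := by
  intro hc
  obtain ⟨k, rfl⟩ := cos_eq_zero_iff_pi_div_two_add.1 hc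
  have h3 : ((n - 1 : ℤ) : ℝ) < k := by nlinarith [pi_pos]
  have h4 : (k : ℝ) < n := by nlinarith [pi_pos]
  have h3' : n - 1 < k := by exact_mod_cast h3
  have h4' : k < n := by exact_mod_cast h4
  omega

theorem lt_angle_of_eigen_interval (h : PolarSystem σ q N g R1 T m ℓ θ) (hσ : σ * σ = 1)
    (hpq : p.HolderConjugate q) (hR1 : 0 ≤ R1) {R2 lam : ℝ} {w : ℝ → ℝ} (hR2 : R2 ≤ T)
    (hw : NeumannEigen p N R1 R2 lam w)
    (hG : ∀ r ∈ Icc R1 R2, cos (θ r) ≠ 0 → lam * |σ * (exp (ℓ r) * cos (θ r))| ^ p <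
      g (1 + σ * (exp (ℓ r) * cos (θ r))) * (σ * (exp (ℓ r) * cos (θ r))))
    {a b : ℝ} {n : ℤ} (ha : R1 ≤ a) (hab : a < b) (hb : b ≤ R2) (hwa : w a = 0 ∨ a = R1)
    (hθ : π / 2 + (n - 1 : ℤ) * π < θ a) (hw0 : ∀ r ∈ Ioo a b, w r ≠ 0) :
    (w b = 0 → π / 2 + n * π < θ b) ∧ (b = R2 → n * π < θ b) := by
  have hp := hpq.lt
  have hq := hpq.symm.lt
  have hσ0 : σ ≠ 0 := fun h1 => by simp [h1] at hσ
  set z := fun r => σ * (exp (ℓ r) * cos (θ r)) with hz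
  set v := fun r => -(σ * (exp (ℓ r) * sin (θ r))) with hv
  set W := fun x => x ^ (N - 1) * phip p (deriv w x) with hW
  have hz0 : ∀ r, z r = 0 ↔ cos (θ r) = 0 := fun r => by simp [hz, hσ0, (exp_pos _).ne']
  have hsub : ∀ r ∈ Icc a b, r ∈ Icc R1 R2 := fun r hr => ⟨ha.trans hr.1, hr.2.trans hb⟩
  have hsubT : ∀ r ∈ Icc a b, r ∈ Icc R1 T := fun r hr => ⟨ha.trans hr.1, (hr.2.trans hb).trans hR2⟩
  have dz : ∀ r ∈ Icc a b, HasDerivAt z (phip q (v r / r ^ (N - 1))) r := fun r hr => by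
    have := (h.system.du r (hsubT r hr)).sub_const 1
    simpa only [add_sub_cancel_left] using this
  have dv : ∀ r ∈ Icc a b, HasDerivAt v (-(r ^ (N - 1) * g (1 + z r))) r := fun r hr =>
    h.system.dv r (hsubT r hr)
  have hWc : ContinuousOn W (Icc a b) := hw.flux.mono hsub
  have hB : θ b ≤ π / 2 + n * π →
      ∃ c > 0, ∀ᶠ r in 𝓝[<] b, c ≤ w r * W r - |w r / z r| ^ p * (z r * v r) := by
    intro hθb
    have hcos : ∀ r ∈ Ico a b, cos (θ r) ≠ 0 := by
      intro r hr
      refine cos_ne_zero_of_mem (n := n) ?_ ?_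
      · rcases hr.1.eq_or_lt with h1 | h1
        · rwa [← h1]
        · exact h.lt_angle_of_le hσ hq hR1 (n - 1) ha h1 (hsubT r ⟨hr.1, hr.2.le⟩).2 hθ.le
      · by_contra! hcon
        have := h.lt_angle_of_le hσ hq hR1 n (ha.trans hr.1) hr.2 (hb.trans hR2) hcon
        linarith
    have hcont : ∀ {φ φ' : ℝ → ℝ}, (∀ r ∈ Icc a b, HasDerivAt φ (φ' r) r) →
        ContinuousOn φ (Ico a b) := fun hd r hr =>
      (hd r ⟨hr.1, hr.2.le⟩).continuousAt.continuousWithinAt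
    have hpos : ∀ r ∈ Ioo a b, 0 < r ^ (N - 1) := fun r hr =>
      pow_pos ((hR1.trans ha).trans_lt hr.1) _
    have dw : ∀ r ∈ Icc a b, HasDerivAt w (deriv w r) r := fun r hr =>
      (hw.diff r (hsub r hr)).hasDerivAt
    refine picone_eventually_ge hp (A := fun r => r ^ (N - 1)) (G := fun r => g (1 + z r))
      (w' := deriv w) hab hpos
      (hcont dz) (hcont dv) (hcont dw) (hWc.mono Ico_subset_Icc_self)
      (fun r hr => dz r ⟨hr.1.le, hr.2.le⟩) (fun r hr => dv r ⟨hr.1.le, hr.2.le⟩)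
      (fun r hr => dw r ⟨hr.1.le, hr.2.le⟩)
      (fun r hr => hw.ode r ⟨ha.trans_lt hr.1, hr.2.le.trans hb⟩) (fun r hr => ?_)
      (fun _ _ => rfl) (fun r hr => mt (hz0 r).1 (hcos r hr)) hw0
      (fun r hr => hG r (hsub r ⟨hr.1.le, hr.2.le⟩) (hcos r ⟨hr.1.le, hr.2⟩)) ?_
    · rw [phip_phip hpq]
      exact (mul_div_cancel₀ _ (hpos r hr).ne').symm
    · refine hwa.imp_right fun h1 => ?_
      rw [h1]
      exact ⟨by simp [hW, hw.left, phip_zero], h.system.v_init⟩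
  have hbm : b ∈ Icc a b := ⟨hab.le, le_rfl⟩
  have hb0 : 0 < b := (hR1.trans ha).trans_lt hab
  have hwb := (hw.diff b (hsub b hbm)).hasDerivAt
  have tw : Tendsto w (𝓝[<] b) (𝓝 (w b)) := hwb.continuousAt.tendsto.mono_left nhdsWithin_le_nhds
  have tz : Tendsto z (𝓝[<] b) (𝓝 (z b)) :=
    (dz b hbm).continuousAt.tendsto.mono_left nhdsWithin_le_nhds
  have tv : Tendsto v (𝓝[<] b) (𝓝 (v b)) :=
    (dv b hbm).continuousAt.tendsto.mono_left nhdsWithin_le_nhds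
  have tW : Tendsto W (𝓝[<] b) (𝓝 (W b)) :=
    (hw.ode b ⟨ha.trans_lt hab, hb⟩).continuousAt.tendsto.mono_left nhdsWithin_le_nhds
  have tB : ∀ L, Tendsto (fun r => w r / z r) (𝓝[<] b) (𝓝 L) →
      Tendsto (fun r => w r * W r - |w r / z r| ^ p * (z r * v r)) (𝓝[<] b)
        (𝓝 (w b * W b - |L| ^ p * (z b * v b))) := fun L hL =>
    (tw.mul tW).sub ((hL.abs.rpow_const (Or.inr (by linarith))).mul (tz.mul tv))
  constructor
  · intro hwb0
    by_contra! hcon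
    obtain ⟨c, hc, hev⟩ := hB hcon
    obtain ⟨L, hL, hL0⟩ : ∃ L, Tendsto (fun r => w r / z r) (𝓝[<] b) (𝓝 L) ∧
        (L = 0 ∨ z b = 0) := by
      by_cases hzb : z b = 0
      · have hvb : v b ≠ 0 := by
          intro h1
          have h2 : sin (θ b) = 0 := by simpa [hv, hσ0, (exp_pos _).ne'] using h1
          have h3 := sin_sq_add_cos_sq (θ b)
          rw [h2, (hz0 b).1 hzb] at h3
          norm_num at h3
        have hz' : phip q (v b / b ^ (N - 1)) ≠ 0 := by
          intro h1
          have h2 := phip_phip hpq (v b / b ^ (N - 1))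
          rw [h1, phip_zero] at h2
          exact div_ne_zero hvb (pow_pos hb0 _).ne' h2.symm
        have hne : 𝓝[<] b ≤ 𝓝[≠] b := nhdsWithin_mono _ fun y hy => ne_of_lt hy
        have s1 := (hasDerivAt_iff_tendsto_slope.1 hwb).mono_left hne
        have s2 := (hasDerivAt_iff_tendsto_slope.1 (dz b hbm)).mono_left hne
        refine ⟨_, (s1.div s2 hz').congr' ?_, Or.inr hzb⟩
        filter_upwards [self_mem_nhdsWithin] with y hy
        have hyb : y - b ≠ 0 := (sub_neg.2 hy).ne
        rw [Pi.div_apply, slope_def_field, slope_def_field, hwb0, hzb, sub_zero, sub_zero,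
          div_div_div_cancel_right₀ hyb]
      · refine ⟨0, ?_, Or.inl rfl⟩
        have := tw.div tz hzb
        rwa [hwb0, zero_div] at this
    have h1 := ge_of_tendsto (tB L hL) hev
    have h2 : w b * W b - |L| ^ p * (z b * v b) = 0 := by
      rcases hL0 with h3 | h3
      · simp [h3, hwb0, zero_rpow (show p ≠ 0 by linarith)]
      · simp [h3, hwb0]
    linarith
  · intro hbR
    by_contra! hcon
    have hpi := pi_pos
    obtain ⟨c, hc, hev⟩ := hB (by linarith)
    have h1 := h.lt_angle_of_le hσ hq hR1 (n - 1) ha hab (hb.trans hR2) hθ.le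
    have hcos := cos_ne_zero_of_mem h1 (by linarith)
    have hzb : z b ≠ 0 := mt (hz0 b).1 hcos
    have h2 := ge_of_tendsto (tB _ (tw.div tz hzb)) hev
    have h3 : W b = 0 := by simp [hW, hbR, hw.right, phip_zero]
    have h4 : 0 ≤ z b * v b := by
      have h5 : z b * v b = exp (ℓ b) ^ 2 * -(sin (2 * θ b) / 2) := by
        rw [sin_two_mul]
        linear_combination -(exp (ℓ b) ^ 2 * sin (θ b) * cos (θ b)) * hσ
      have h6 : sin (2 * θ b) = sin (2 * θ b - (n : ℤ) * (2 * π)) :=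
        (sin_sub_int_mul_two_pi _ n).symm
      have h7 : sin (2 * θ b - (n : ℤ) * (2 * π)) ≤ 0 := by
        refine sin_nonpos_of_nonpos_of_neg_pi_le (by linarith) ?_
        push_cast at h1
        linarith
      rw [h5, h6]
      have := sq_nonneg (exp (ℓ b))
      exact mul_nonneg this (by linarith)
    rw [h3, mul_zero, zero_sub] at h2
    have : 0 ≤ |w b / z b| ^ p * (z b * v b) := mul_nonneg (by positivity) h4
    linarith

theorem nat_mul_pi_lt_angle (h : PolarSystem σ q N g R1 T m ℓ θ) (hσ : σ * σ = 1)
    (hpq : p.HolderConjugate q) (hR1 : 0 ≤ R1) {R2 lam : ℝ} {w : ℝ → ℝ}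
    (hR2 : R2 ≤ T) (hw : NeumannEigen p N R1 R2 lam w)
    (hG : ∀ r ∈ Icc R1 R2, cos (θ r) ≠ 0 → lam * |σ * (exp (ℓ r) * cos (θ r))| ^ p <
      g (1 + σ * (exp (ℓ r) * cos (θ r))) * (σ * (exp (ℓ r) * cos (θ r))))
    {k : ℕ} (hk : 1 ≤ k) (hcard : {x ∈ Ioo R1 R2 | w x = 0}.encard = k) :
    k * π < θ R2 := by
  obtain ⟨s, hs⟩ := (finite_of_encard_eq_coe hcard).exists_finset_coe
  have hsk : s.card = k := by
    rw [← hs, encard_coe_eq_coe_finsetCard] at hcard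
    exact_mod_cast hcard
  set e := s.orderEmbOfFin hsk
  have hmem : ∀ i, e i ∈ Ioo R1 R2 ∧ w (e i) = 0 := fun i => by
    have h1 : e i ∈ (s : Set ℝ) := s.orderEmbOfFin_mem hsk i
    rwa [hs] at h1
  have hsurj : ∀ x ∈ Ioo R1 R2, w x = 0 → ∃ i, e i = x := fun x hx hx0 => by
    have h1 : x ∈ (s : Set ℝ) := by rw [hs]; exact ⟨hx, hx0⟩
    rwa [← s.range_orderEmbOfFin hsk] at h1
  have hangle : ∀ i (hi : i < k), π / 2 + (i : ℤ) * π < θ (e ⟨i, hi⟩) := by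
    intro i
    induction i with
    | zero =>
      intro hi
      refine (h.lt_angle_of_eigen_interval hσ hpq hR1 hR2 hw hG le_rfl (hmem ⟨0, hi⟩).1.1
        (hmem ⟨0, hi⟩).1.2.le (Or.inr rfl) ?_ ?_).1 (hmem ⟨0, hi⟩).2
      · rw [h.init]; push_cast; linarith [pi_pos]
      · intro r hr hr0
        obtain ⟨j, hj⟩ := hsurj r ⟨hr.1, hr.2.trans (hmem ⟨0, hi⟩).1.2⟩ hr0
        rw [← hj] at hr
        exact absurd (e.lt_iff_lt.1 hr.2) (Fin.not_lt.2 (Nat.zero_le _))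
    | succ i ih =>
      intro hi
      have hi' : i < k := by omega
      refine (h.lt_angle_of_eigen_interval hσ hpq hR1 hR2 hw hG (hmem ⟨i, hi'⟩).1.1.le
        (e.lt_iff_lt.2 (Fin.mk_lt_mk.2 (Nat.lt_succ_self i)))
        (hmem ⟨i + 1, hi⟩).1.2.le (Or.inl (hmem ⟨i, hi'⟩).2) ?_ ?_).1 (hmem ⟨i + 1, hi⟩).2
      · simpa using ih hi'
      · intro r hr hr0
        obtain ⟨j, hj⟩ := hsurj r ⟨(hmem ⟨i, hi'⟩).1.1.trans hr.1,
          hr.2.trans (hmem ⟨i + 1, hi⟩).1.2⟩ hr0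
        rw [← hj] at hr
        have h1 : i < j := e.lt_iff_lt.1 hr.1
        have h2 : (j : ℕ) < i + 1 := e.lt_iff_lt.1 hr.2
        omega
  obtain ⟨i, rfl⟩ : ∃ i, k = i + 1 := ⟨k - 1, by omega⟩
  have hi : i < i + 1 := Nat.lt_succ_self i
  have h1 := (h.lt_angle_of_eigen_interval (n := (i + 1 : ℕ)) hσ hpq hR1 hR2 hw hG
    (hmem ⟨i, hi⟩).1.1.le (hmem ⟨i, hi⟩).1.2 le_rfl (Or.inl (hmem ⟨i, hi⟩).2) ?_ ?_).2 rfl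
  · exact_mod_cast h1
  · simpa using hangle i hi
  · intro r hr hr0
    obtain ⟨j, hj⟩ := hsurj r ⟨(hmem ⟨i, hi⟩).1.1.trans hr.1, hr.2⟩ hr0
    rw [← hj] at hr
    have h1 : i < j := e.lt_iff_lt.1 hr.1
    have := j.2
    omega

end PolarSystem

section

variable {p q : ℝ} {N : ℕ} {R1 : ℝ}

theorem RadialSystem.neumannSol {f u v : ℝ → ℝ} {D T d R2 : ℝ}
    (h : RadialSystem q N (trunc f D) R1 T d u v) (hg : AdmissibleNonlin p (trunc f D))
    (hpq : p.HolderConjugate q) (hN : 1 ≤ N) (hR1 : 0 ≤ R1) (hR12 : R1 < R2) (hT : R2 < T)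
    (hd : 0 < d) (hv : v R2 = 0) (hD : ∀ r ∈ Icc R1 R2, u r ≤ D) : NeumannSol p N R1 R2 f u := by
  have h2 := h.mono_right hT.le
  have hpos : ∀ r ∈ Icc R1 R2, 0 < u r := fun r hr => h2.pos_of_end hg hpq hR1 hd hv hr
  have hder : ∀ x ∈ Icc R1 T, deriv u x = phip q (v x / x ^ (N - 1)) := fun x hx =>
    (h.du x hx).deriv
  have hflux : ∀ x ∈ Icc R1 T, x ^ (N - 1) * phip p (deriv u x) = v x := by
    intro x hx
    rw [hder x hx, phip_phip hpq]
    rcases hx.1.eq_or_lt with h1 | h1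
    · rw [← h1, h.v_init]; simp
    · exact mul_div_cancel₀ _ (pow_pos (hR1.trans_lt h1) _).ne'
  have hsub : Icc R1 R2 ⊆ Icc R1 T := Icc_subset_Icc_right hT.le
  refine ⟨fun x hx => (h2.du x hx).differentiableAt, ?_, hpos, ?_, ?_, ?_, fun x hx => ?_⟩
  · exact ((continuous_phip hpq.symm.lt).comp_continuousOn (h2.contY hN hR1 hg.bdd)).congr
      fun x hx => hder x (hsub hx)
  · rw [hder R1 ⟨le_rfl, (hR12.trans hT).le⟩, h.v_init, zero_div, phip_zero]
  · rw [hder R2 ⟨hR12.le, hT.le⟩, hv, zero_div, phip_zero]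
  · exact h2.contV.congr fun x hx => hflux x (hsub hx)
  · have hx' : x ∈ Icc R1 R2 := ⟨hx.1.le, hx.2⟩
    have h3 := h.dv x (hsub hx')
    rw [trunc_of_mem (hpos x hx').le (hD x hx'), ← neg_mul] at h3
    refine h3.congr_of_eventuallyEq ?_
    filter_upwards [Icc_mem_nhds hx.1 (hx.2.trans_lt hT)] with y hy using hflux y hy

/-- Solutions with initial value in `[0, d]` stay below a suitable truncation level. -/
theorem exists_trunc_level (hpq : p.HolderConjugate q) (hN : 1 ≤ N) (hR1 : 0 ≤ R1) {R2 : ℝ}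
    (hR12 : R1 ≤ R2) {f : ℝ → ℝ} (hreg : Freg f) (heq : Feq f) (h0 : Fzero p f) {d1 : ℝ}
    (hd1 : 1 < d1) :
    ∃ D ≥ d1, ∀ d ∈ Icc 0 d1, ∀ u v, RadialSystem q N (trunc f D) R1 R2 d u v →
      ∀ r ∈ Icc R1 R2, u r ≤ D := by
  set K := (q * max (Fint f 0) (Fint f d1)) ^ (1 / p) with hK
  have hE : 0 ≤ max (Fint f 0) (Fint f d1) := by
    have hg := admissible_trunc hpq.lt hreg heq h0 hd1
    have := hg.Fint_pos hd1.ne'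
    rw [Fint_trunc hd1.le (by linarith) le_rfl] at this
    exact le_max_of_le_right this.le
  have hq := hpq.symm.pos
  have hK0 : 0 ≤ K := by positivity
  have hKR : 0 ≤ K * (R2 - R1) := mul_nonneg hK0 (by linarith)
  refine ⟨d1 + K * (R2 - R1), by linarith, fun d hd u v h r hr => ?_⟩
  set D := d1 + K * (R2 - R1)
  have hD : d1 ≤ D := by linarith
  have hg := admissible_trunc hpq.lt hreg heq h0 (hd1.trans_le hD)
  have hFd : Fint (trunc f D) d ≤ max (Fint f 0) (Fint f d1) := by
    rcases le_total 1 d with h1 | h1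
    · refine le_max_of_le_right ?_
      rw [← Fint_trunc (by linarith) (by linarith) hD]
      exact hg.Fint_mono h1 hd.2
    · refine le_max_of_le_left ?_
      rw [← Fint_trunc (D := D) (by linarith) le_rfl (by linarith)]
      exact hg.Fint_anti h1 hd.1
  have hFd0 := hg.Fint_nonneg d
  have h1 := h.abs_u_sub_le (K := K) (fun s hs => (h.abs_du_le hg hpq hN hR1 hs).trans (by
    have := hpq.pos
    rw [hK]; gcongr)) hr (s := R1) ⟨le_rfl, hR12⟩
  rw [h.u_init, abs_of_nonneg (sub_nonneg.2 hr.1)] at h1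
  have h2 := (abs_le.1 h1).2
  have h3 : K * (r - R1) ≤ K * (R2 - R1) := by have := hr.2; gcongr
  linarith [hd.2]

variable {g : ℝ → ℝ} {R3 : ℝ}

theorem exists_radius_angle (hg : AdmissibleNonlin p g) (hpq : p.HolderConjugate q) (hN : 1 ≤ N)
    (hR1 : 0 ≤ R1) {R2 lam : ℝ} (hR23 : R2 ≤ R3)
    (hlam : ∀ᶠ s in 𝓝[≠] (1 : ℝ), lam * |s - 1| ^ p < g s * (s - 1)) {w : ℝ → ℝ}
    (hw : NeumannEigen p N R1 R2 lam w) {k : ℕ} (hk : 1 ≤ k)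
    (hcard : {x ∈ Ioo R1 R2 | w x = 0}.encard = k) :
    ∃ m0 > 0, ∀ m, 0 < m → m ≤ m0 → ∀ σ : ℝ, σ * σ = 1 → ∀ ℓ θ,
      PolarSystem σ q N g R1 R3 m ℓ θ → k * π < θ R2 := by
  obtain ⟨ε, hε, hball⟩ := Metric.eventually_nhds_iff.1 (eventually_nhdsWithin_iff.1 hlam)
  set e0 := min (Fint g (1 + ε)) (Fint g (1 - ε))
  have he0 : 0 < e0 := lt_min (hg.Fint_pos (by linarith)) (hg.Fint_pos (by linarith))
  have hsmall := ((continuous_Fint hg.cont).continuousAt (x := 1)).eventually_lt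
    (continuousAt_const (y := e0)) (by rwa [Fint_one])
  obtain ⟨δ, hδ, hδb⟩ := Metric.eventually_nhds_iff.1 hsmall
  refine ⟨δ / 2, by positivity, fun m hm hmδ σ hσ ℓ θ h => ?_⟩
  refine h.nat_mul_pi_lt_angle hσ hpq hR1 hR23 hw (fun r hr hcos => ?_) hk hcard
  have hσ1 : |σ| = 1 := by
    have h1 : |σ| * |σ| = 1 := by rw [← abs_mul, hσ, abs_one]
    nlinarith [abs_nonneg σ]
  have hσ0 : σ ≠ 0 := fun h1 => by simp [h1] at hσ
  have h1 := h.system.Fint_le hg hpq.symm.lt hN hR1 (r := r) ⟨hr.1, hr.2.trans hR23⟩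
  have h2 : Fint g (1 + σ * m) < e0 := hδb (by
    rw [Real.dist_eq, add_sub_cancel_left, abs_mul, hσ1, one_mul, abs_of_pos hm]
    linarith)
  set z := σ * (exp (ℓ r) * cos (θ r)) with hz
  have hz0 : z ≠ 0 := mul_ne_zero hσ0 (mul_ne_zero (exp_pos _).ne' hcos)
  have h3 : |z| < ε := by
    by_contra! hcon
    rcases le_total 0 z with h4 | h4
    · rw [abs_of_nonneg h4] at hcon
      have := hg.Fint_mono (s := 1 + ε) (t := 1 + z) (by linarith) (by linarith)
      have := min_le_left (Fint g (1 + ε)) (Fint g (1 - ε))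
      linarith
    · rw [abs_of_nonpos h4] at hcon
      have := hg.Fint_anti (s := 1 + z) (t := 1 - ε) (by linarith) (by linarith)
      have := min_le_right (Fint g (1 + ε)) (Fint g (1 - ε))
      linarith
  have h4 := hball (y := 1 + z) (by rwa [Real.dist_eq, add_sub_cancel_left])
    (by simpa using hz0)
  rwa [add_sub_cancel_left] at h4

end

theorem eventually_lt_mul_of_tendsto {p lam : ℝ} (hp : 1 < p) {f : ℝ → ℝ} {C1 : EReal}
    (hC1 : Tendsto (fun s : ℝ => ((f s / (|s - 1| ^ (p - 2) * (s - 1)) : ℝ) : EReal))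
      (𝓝[≠] (1 : ℝ)) (𝓝 C1)) (hlam : (lam : EReal) < C1) {D : ℝ} (hD : 1 < D) :
    ∀ᶠ s in 𝓝[≠] (1 : ℝ), lam * |s - 1| ^ p < trunc f D s * (s - 1) := by
  filter_upwards [hC1.eventually (eventually_gt_nhds hlam), self_mem_nhdsWithin,
    nhdsWithin_le_nhds (Ioo_mem_nhds one_pos hD)] with s hs hs1 hsD
  have h1 : lam < f s / phip p (s - 1) := by exact_mod_cast hs
  have h2 : s - 1 ≠ 0 := sub_ne_zero.2 hs1
  have h3 : 0 < |s - 1| ^ p := rpow_pos_of_pos (abs_pos.2 h2) p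
  have h4 := phip_mul_self hp (s - 1)
  have h5 : phip p (s - 1) ≠ 0 := fun h => by rw [h, zero_mul] at h4; exact h3.ne h4
  rw [trunc_of_mem hsD.1.le hsD.2.le]
  calc lam * |s - 1| ^ p < f s / phip p (s - 1) * |s - 1| ^ p := mul_lt_mul_of_pos_right h1 h3
    _ = f s * (s - 1) := by rw [← h4]; field_simp

theorem exists_neumannSol_of_angle {p q : ℝ} {N : ℕ} {R1 R2 R3 : ℝ} {f : ℝ → ℝ} {D : ℝ}
    (hg : AdmissibleNonlin p (trunc f D)) (hpq : p.HolderConjugate q) (hN : 1 ≤ N) (hR1 : 0 ≤ R1)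
    (hR12 : R1 < R2) (hR23 : R2 < R3) {σ β : ℝ} (hσ : σ * σ = 1)
    (hβ : ∀ ℓ θ, PolarSystem σ q N (trunc f D) R1 R3 β ℓ θ → θ R2 < π)
    (hpos : ∀ m, 0 < m → m < β → 0 < 1 + σ * m)
    (hD : ∀ m, 0 < m → m < β → ∀ u v, RadialSystem q N (trunc f D) R1 R2 (1 + σ * m) u v →
      ∀ r ∈ Icc R1 R2, u r ≤ D) {k : ℕ} {m0 : ℝ} (hm0 : 0 < m0) (hm0β : m0 ≤ β)
    (hk : ∀ ℓ θ, PolarSystem σ q N (trunc f D) R1 R3 m0 ℓ θ → k * π < θ R2) {j : ℕ}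
    (hj : 1 ≤ j) (hjk : j ≤ k) :
    ∃ u, NeumannSol p N R1 R2 f u ∧ (∃ m > 0, u R1 = 1 + σ * m) ∧
      {x ∈ Ioo R1 R2 | u x = 1}.encard = j := by
  have hpi := pi_pos
  have hj' : (1 : ℝ) ≤ j := by exact_mod_cast hj
  have hjk' : (j : ℝ) ≤ k := by exact_mod_cast hjk
  obtain ⟨m, hm, ℓ, θ, h, hθ⟩ := PolarSystem.exists_angle_eq hσ hg hpq hN hR1
    (T1 := R2) (c := j * π) ⟨hR12.le, hR23.le⟩ (hR12.trans hR23) hm0 hm0β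
    (fun ℓ θ h => (mul_le_mul_of_nonneg_right hjk' hpi.le).trans_lt (hk ℓ θ h))
    (fun ℓ θ h => (hβ ℓ θ h).trans_le (by nlinarith))
  have hm1 : 0 < m := hm0.trans_le hm.1
  have hmβ : m < β := by
    refine lt_of_le_of_ne hm.2 ?_
    rintro rfl
    have := hβ ℓ θ h
    rw [hθ] at this
    nlinarith
  have hσ0 : σ ≠ 0 := fun h1 => by simp [h1] at hσ
  refine ⟨_, h.system.neumannSol hg hpq hN hR1 hR12 hR23 (hpos m hm1 hmβ) ?_
    (hD m hm1 hmβ _ _ (h.system.mono_right hR23.le)), ⟨m, hm1, h.system.u_init⟩, ?_⟩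
  · simp only [hθ, sin_nat_mul_pi, mul_zero, neg_zero]
  · rw [← h.encard_cos_eq_zero hσ hpq.symm.lt hR1 hR12 hR23.le hθ]
    congr 1
    ext x
    simp [hσ0, (exp_pos _).ne']

theorem PolarSystem.angle_lt_pi_of_neg {q : ℝ} {N : ℕ} {g : ℝ → ℝ} {R1 R2 T m : ℝ} {ℓ θ : ℝ → ℝ}
    (h : PolarSystem 1 q N g R1 T m ℓ θ) (hR12 : R1 ≤ R2) (hT : R2 ≤ T)
    (hv : ∀ r ∈ Ioc R1 R2, -(1 * (exp (ℓ r) * sin (θ r))) < 0) : θ R2 < π := by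
  by_contra! hcon
  have hsub : Icc R1 R2 ⊆ Icc R1 T := Icc_subset_Icc_right hT
  obtain ⟨x, hx, hxθ⟩ := intermediate_value_Icc hR12 (h.cont_angle.mono hsub)
    (show π ∈ Icc (θ R1) (θ R2) from ⟨by rw [h.init]; exact pi_pos.le, hcon⟩)
  have hxR : R1 < x := by
    refine lt_of_le_of_ne hx.1 ?_
    rintro rfl
    rw [h.init] at hxθ
    exact pi_pos.ne hxθ
  have := hv x ⟨hxR, hx.2⟩
  rw [hxθ, sin_pi] at this
  simp at this

theorem PolarSystem.angle_lt_pi_of_nonpos {q : ℝ} {N : ℕ} {g : ℝ → ℝ} {R1 R2 T m : ℝ}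
    {ℓ θ : ℝ → ℝ} (h : PolarSystem (-1) q N g R1 T m ℓ θ) (hR12 : R1 ≤ R2) (hT : R2 ≤ T)
    (hu : ∀ r ∈ Icc R1 R2, 1 + (-1) * (exp (ℓ r) * cos (θ r)) ≤ 0) : θ R2 < π := by
  by_contra! hcon
  have hsub : Icc R1 R2 ⊆ Icc R1 T := Icc_subset_Icc_right hT
  obtain ⟨x, hx, hxθ⟩ := intermediate_value_Icc hR12 (h.cont_angle.mono hsub)
    (show π ∈ Icc (θ R1) (θ R2) from ⟨by rw [h.init]; exact pi_pos.le, hcon⟩)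
  have := hu x hx
  rw [hxθ, cos_pi] at this
  have := exp_pos (ℓ x)
  linarith

theorem exists_neumannSol_branches {p : ℝ} (hp : 1 < p) {N : ℕ} (hN : 1 ≤ N) {R1 R2 : ℝ}
    (hR1 : 0 ≤ R1) (hR12 : R1 < R2) {f : ℝ → ℝ} (hreg : Freg f) (heq : Feq f) (h0 : Fzero p f)
    (hball : R1 = 0 → Fsubl p f ∨ Fsubc p N f) {C1 : EReal}
    (hC1 : Tendsto (fun s : ℝ => ((f s / (|s - 1| ^ (p - 2) * (s - 1)) : ℝ) : EReal))
      (𝓝[≠] (1 : ℝ)) (𝓝 C1)) {lam : ℝ} (hlam : (lam : EReal) < C1) {w : ℝ → ℝ}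
    (hw : NeumannEigen p N R1 R2 lam w) {k : ℕ} (hk : 1 ≤ k)
    (hcard : {x ∈ Ioo R1 R2 | w x = 0}.encard = k) {σ : ℝ} (hσ : σ = 1 ∨ σ = -1) {j : ℕ}
    (hj : 1 ≤ j) (hjk : j ≤ k) :
    ∃ u, NeumannSol p N R1 R2 f u ∧ (∃ m > 0, u R1 = 1 + σ * m) ∧
      {x ∈ Ioo R1 R2 | u x = 1}.encard = j := by
  have hpq := Real.HolderConjugate.conjExponent hp
  obtain ⟨d1, hdecay, hd1⟩ := ((largeDataDecay hpq hN hR1 hR12 hreg heq h0 hball).and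
    (eventually_gt_atTop 1)).exists
  obtain ⟨D, hD, hbound⟩ := exists_trunc_level hpq hN hR1 hR12.le hreg heq h0 hd1
  have hg := admissible_trunc hp hreg heq h0 (hd1.trans_le hD)
  have hR23 : R2 < R2 + 1 := by linarith
  obtain ⟨m0, hm0, hm0θ⟩ := exists_radius_angle hg hpq hN hR1 hR23.le
    (eventually_lt_mul_of_tendsto hp hC1 hlam (hd1.trans_le hD)) hw hk hcard
  have hσσ : σ * σ = 1 := by rcases hσ with rfl | rfl <;> norm_num
  set β := if σ = 1 then d1 - 1 else 1 with hβ
  have hβ0 : 0 < β := by rw [hβ]; split_ifs <;> linarith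
  have hrange : ∀ m, 0 < m → m < β → 0 < 1 + σ * m ∧ 1 + σ * m ≤ d1 := by
    intro m hm hmβ
    rcases hσ with rfl | rfl
    · rw [hβ, if_pos rfl] at hmβ
      constructor <;> linarith
    · rw [hβ, if_neg (by norm_num)] at hmβ
      constructor <;> linarith
  refine exists_neumannSol_of_angle hg hpq hN hR1 hR12 hR23 (β := β) hσσ (fun ℓ θ h => ?_)
    (fun m hm hmβ => (hrange m hm hmβ).1)
    (fun m hm hmβ u v h => hbound _ ⟨(hrange m hm hmβ).1.le, (hrange m hm hmβ).2⟩ u v h)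
    (m0 := min m0 β) (lt_min hm0 hβ0) (min_le_right _ _)
    (fun ℓ θ h => hm0θ _ (lt_min hm0 hβ0) (min_le_left _ _) σ hσσ ℓ θ h) hj hjk
  rcases hσ with rfl | rfl
  · have h1 := h.system.mono_right hR23.le
    rw [hβ, if_pos rfl, one_mul, add_sub_cancel] at h1
    exact h.angle_lt_pi_of_neg hR12.le hR23.le (hdecay D hD _ _ h1)
  · refine h.angle_lt_pi_of_nonpos hR12.le hR23.le fun r hr => ?_
    refine (h.system.mono_right hR23.le).nonpos_of_init hg hpq hR1 ?_ hr
    rw [hβ, if_neg (by norm_num)]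
    norm_num

theorem stmt1 (p : ℝ) (hp : 1 < p) (N : ℕ) (hN : 1 ≤ N)
    (R1 R2 : ℝ) (hR1 : 0 ≤ R1) (hR12 : R1 < R2)
    (f : ℝ → ℝ) (hreg : Freg f) (heq : Feq f) (h0 : Fzero p f)
    (hball : R1 = 0 → Fsubl p f ∨ Fsubc p N f)
    (C1 : EReal) (hC1pos : 0 ≤ C1)
    (hC1 : Tendsto (fun s : ℝ => ((f s / (|s - 1| ^ (p - 2) * (s - 1)) : ℝ) : EReal))
      (𝓝[≠] (1:ℝ)) (𝓝 C1))
    (k : ℕ) (hk : 1 ≤ k)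
    (lam : ℝ) (hlam0 : 0 ≤ lam) (hlamC1 : (lam : EReal) < C1)
    (w : ℝ → ℝ)
    (hw_nonzero : ∃ x ∈ Icc R1 R2, w x ≠ 0)
    (hw_diff : ∀ x ∈ Icc R1 R2, DifferentiableAt ℝ w x)
    (hw_cont : ContinuousOn (deriv w) (Icc R1 R2))
    (hw_bc1 : deriv w R1 = 0) (hw_bc2 : deriv w R2 = 0)
    (hw_vcont : ContinuousOn (fun x => x ^ (N - 1) * phip p (deriv w x)) (Icc R1 R2))
    (hw_ode : ∀ x ∈ Ioc R1 R2,
      HasDerivAt (fun t => t ^ (N - 1) * phip p (deriv w t))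
        (-(lam * x ^ (N - 1) * phip p (w x))) x)
    (hw_zeros : {x ∈ Ioo R1 R2 | w x = 0}.encard = (k : ℕ∞)) :
    ∃ u : Fin (2 * k) → ℝ → ℝ,
      (∀ j, NeumannSol p N R1 R2 f (u j)) ∧
      (∀ j, NonConstOn R1 R2 (u j)) ∧
      (∀ i j, i ≠ j → DistinctOn R1 R2 (u i) (u j)) ∧
      (∀ j : Fin (2 * k), (j : ℕ) < k → 1 < u j R1) ∧
      (∀ j : Fin (2 * k), k ≤ (j : ℕ) → u j R1 < 1) ∧
      (∀ j : Fin (2 * k),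
        {x ∈ Ioo R1 R2 | u j x = 1}.encard = (((j : ℕ) % k + 1 : ℕ) : ℕ∞)) := by
  have hE : NeumannEigen p N R1 R2 lam w := ⟨hw_diff, hw_bc1, hw_bc2, hw_vcont, hw_ode⟩
  have hex : ∀ j : Fin (2 * k), ∃ u, NeumannSol p N R1 R2 f u ∧
      (∃ m > 0, u R1 = 1 + (if (j : ℕ) < k then 1 else -1) * m) ∧
      {x ∈ Ioo R1 R2 | u x = 1}.encard = (((j : ℕ) % k + 1 : ℕ) : ℕ∞) := fun j =>
    exists_neumannSol_branches hp hN hR1 hR12 hreg heq h0 hball hC1 hlamC1 hE hk hw_zeros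
      (by split_ifs <;> simp) (Nat.le_add_left 1 _) (Nat.mod_lt _ hk)
  choose u hu hinit hcard using hex
  have hgt : ∀ j : Fin (2 * k), (j : ℕ) < k → 1 < u j R1 := fun j hj => by
    obtain ⟨m, hm, h⟩ := hinit j
    rw [if_pos hj] at h
    linarith
  have hlt : ∀ j : Fin (2 * k), k ≤ (j : ℕ) → u j R1 < 1 := fun j hj => by
    obtain ⟨m, hm, h⟩ := hinit j
    rw [if_neg (not_lt.2 hj)] at h
    linarith
  have hR1m : R1 ∈ Icc R1 R2 := ⟨le_rfl, hR12.le⟩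
  refine ⟨u, hu, fun j => ?_, fun i j hij => ?_, hgt, hlt, hcard⟩
  · have hne : {x ∈ Ioo R1 R2 | u j x = 1}.Nonempty := by
      rw [← encard_ne_zero, hcard j]
      simp
    obtain ⟨x, hx, hx1⟩ := hne
    refine ⟨R1, hR1m, x, Ioo_subset_Icc_self hx, ?_⟩
    rw [hx1]
    rcases lt_or_ge (j : ℕ) k with h | h
    · exact (hgt j h).ne'
    · exact (hlt j h).ne
  · by_contra hcon
    have heqOn : ∀ x ∈ Icc R1 R2, u i x = u j x := by
      intro x hx
      by_contra h
      exact hcon ⟨x, hx, h⟩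
    have hmod : (i : ℕ) % k = (j : ℕ) % k := by
      have h1 : {x ∈ Ioo R1 R2 | u i x = 1} = {x ∈ Ioo R1 R2 | u j x = 1} := by
        ext x
        exact and_congr_right fun hx => by rw [heqOn x (Ioo_subset_Icc_self hx)]
      have h2 := hcard i
      rw [h1, hcard j] at h2
      have h3 : (j : ℕ) % k + 1 = (i : ℕ) % k + 1 := by exact_mod_cast h2
      omega
    have h0 := heqOn R1 hR1m
    have hi := i.2
    have hj := j.2
    have hne : (i : ℕ) ≠ j := fun h => hij (Fin.ext h)
    rcases lt_or_ge (i : ℕ) k with h1 | h1 <;> rcases lt_or_ge (j : ℕ) k with h2 | h2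
    · rw [Nat.mod_eq_of_lt h1, Nat.mod_eq_of_lt h2] at hmod
      exact hne hmod
    · linarith [hgt i h1, hlt j h2]
    · linarith [hlt i h1, hgt j h2]
    · rw [Nat.mod_eq_sub_mod h1, Nat.mod_eq_sub_mod h2, Nat.mod_eq_of_lt (by omega),
        Nat.mod_eq_of_lt (by omega)] at hmod
      omega
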